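/- arXiv:1012.1838 — 2 statements merged into one kernel-verified Lean document; each statement's English description precedes it below -/
import Mathlib

section
/- Let K be a local field (i.e. R, C, or a finite extension of Q_p for some prime p) and let S be a smooth cubic surface in P^3 over K. Then: (i) the group H^0_S(K) is finite; (ii) the natural map S(K) → H_S(K) given by P ↦ [P] is locally constant, where S(K) carries the topology induced by K. -/
/- Common framework: points, lines, intersection divisors, the secant-tangent span,
the groups `H_S(K)`, geometric notions over the algebraic closure, and topologies. -/

open MvPolynomial

noncomputable section

namespace CubicSurf

variable {K L : Type*} [Field K] [Field L] {n : ℕ}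

/-- The set of `K`-rational points of the projective hypersurface `F = 0`. -/
def zeroSet (F : MvPolynomial (Fin n) K) : Set (Projectivization K (Fin n → K)) :=
  {P | eval P.rep F = 0}

/-- The binary form obtained by restricting `F` to the line spanned by `u` and `v`,
via the parametrization `(s : t) ↦ s • u + t • v`. -/
def lineRestrict (F : MvPolynomial (Fin n) K) (u v : Fin n → K) : MvPolynomial (Fin 2) K :=
  aeval (fun i => C (u i) * X 0 + C (v i) * X 1) F

/-- A projective line: a 2-dimensional linear subspace of `K^n`. -/
def IsLine (W : Submodule K (Fin n → K)) : Prop := Module.finrank K W = 2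

/-- The line `W` lies (geometrically) on the hypersurface `F = 0`. -/
def LineOnSurf (F : MvPolynomial (Fin n) K) (W : Submodule K (Fin n → K)) : Prop :=
  ∀ u v : Fin n → K, u ∈ W → v ∈ W → lineRestrict F u v = 0

/-- The projective point `P` lies on the line `W`. -/
def OnLine (W : Submodule K (Fin n → K)) (P : Projectivization K (Fin n → K)) : Prop :=
  P.rep ∈ W

/-- The set of `K`-points of the line `W`. -/
def linePts (W : Submodule K (Fin n → K)) : Set (Projectivization K (Fin n → K)) :=
  {P | OnLine W P}

/-- `ℓ · S = P + Q + R`: the intersection divisor (with multiplicities) of the line `W`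
with the hypersurface `F = 0` is `P + Q + R`. -/
def MeetsIn (F : MvPolynomial (Fin n) K) (W : Submodule K (Fin n → K))
    (P Q R : Projectivization K (Fin n → K)) : Prop :=
  ∃ (u v : Fin n → K) (_ : u ∈ W) (_ : v ∈ W) (_ : LinearIndependent K ![u, v])
    (c : K) (l m : Fin 3 → K) (h : ∀ k, l k • u + m k • v ≠ 0),
      c ≠ 0 ∧
      lineRestrict F u v = C c * ∏ k : Fin 3, (C (m k) * X 0 - C (l k) * X 1) ∧
      Projectivization.mk K _ (h 0) = P ∧
      Projectivization.mk K _ (h 1) = Q ∧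
      Projectivization.mk K _ (h 2) = R

/-- Membership in the span of a set of points under the secant/tangent process:
the smallest subset of `S(K)` containing `B` such that whenever `P`, `Q` are in it and a
`K`-line `ℓ ⊄ S` satisfies `ℓ·S = P+Q+R` with `R ∈ S(K)`, then `R` is in it. -/
inductive SpanMem (F : MvPolynomial (Fin n) K) (B : Set (Projectivization K (Fin n → K))) :
    Projectivization K (Fin n → K) → Prop
  | base (P : Projectivization K (Fin n → K)) (hP : P ∈ B) : SpanMem F B P
  | secant (P Q R : Projectivization K (Fin n → K)) (W : Submodule K (Fin n → K))
      (hW : IsLine W) (hWS : ¬ LineOnSurf F W) (hP : SpanMem F B P) (hQ : SpanMem F B Q)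
      (hR : R ∈ zeroSet F) (hm : MeetsIn F W P Q R) : SpanMem F B R

/-- The span of a set of points under the secant/tangent process. -/
def Span (F : MvPolynomial (Fin n) K) (B : Set (Projectivization K (Fin n → K))) :
    Set (Projectivization K (Fin n → K)) :=
  {P | SpanMem F B P}

/-- Smoothness of the projective hypersurface `F = 0`: over the algebraic closure there is
no nonzero common zero of `F` and all of its partial derivatives. -/
def IsSmoothHypersurf (F : MvPolynomial (Fin n) K) : Prop :=
  ∀ v : Fin n → AlgebraicClosure K,
    eval v (MvPolynomial.map (algebraMap K (AlgebraicClosure K)) F) = 0 →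
    (∀ i, eval v (pderiv i (MvPolynomial.map (algebraMap K (AlgebraicClosure K)) F)) = 0) →
    v = 0

/-- A smooth cubic hypersurface. -/
def SmoothCubic (F : MvPolynomial (Fin n) K) : Prop :=
  F.IsHomogeneous 3 ∧ IsSmoothHypersurf F

/-- The linear form cutting out the tangent plane `Π_P` of `F = 0` at `P`,
evaluated at the representative of a point `Q`; `Q ∈ Π_P` iff this vanishes. -/
def tangentEval (F : MvPolynomial (Fin n) K) (P Q : Projectivization K (Fin n → K)) : K :=
  ∑ i, eval P.rep (pderiv i F) * Q.rep i

/-- The set of `K`-points of the tangent plane `Π_P`. -/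
def tangentPlanePts (F : MvPolynomial (Fin n) K) (P : Projectivization K (Fin n → K)) :
    Set (Projectivization K (Fin n → K)) :=
  {Q | tangentEval F P Q = 0}

/-- The set of `K`-points of `Γ_P = S ∩ Π_P`. -/
def GammaPts (F : MvPolynomial (Fin n) K) (P : Projectivization K (Fin n → K)) :
    Set (Projectivization K (Fin n → K)) :=
  zeroSet F ∩ tangentPlanePts F P

/-! ### Base change along a field embedding -/

/-- Base change of a vector along a field embedding. -/
def clVec (φ : K →+* L) (v : Fin n → K) : Fin n → L := fun i => φ (v i)

lemma clVec_ne_zero (φ : K →+* L) {v : Fin n → K} (hv : v ≠ 0) : clVec φ v ≠ 0 := by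
  intro h
  apply hv
  funext i
  have := congrFun h i
  simpa [clVec] using φ.injective (by simpa [clVec] using this)

/-- Base change of a projective point along a field embedding. -/
def clPt (φ : K →+* L) (P : Projectivization K (Fin n → K)) :
    Projectivization L (Fin n → L) :=
  Projectivization.mk L (clVec φ P.rep) (clVec_ne_zero φ P.rep_nonzero)

lemma eval_smul_of_isHomogeneous {R : Type*} [CommSemiring R] {F : MvPolynomial (Fin n) R}
    {d : ℕ} (hF : F.IsHomogeneous d) (a : R) (w : Fin n → R) :
    eval (a • w) F = a ^ d * eval w F := by
  classical
  rw [eval_eq', eval_eq', Finset.mul_sum]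
  refine Finset.sum_congr rfl fun s hs => ?_
  have hdeg : ∑ i, s i = d := by
    have h1 := hF (MvPolynomial.mem_support_iff.mp hs)
    rw [Finsupp.weight_apply] at h1
    rw [← h1, Finsupp.sum_fintype]
    · simp
    · intro i; simp
  have key : ∀ i : Fin n, (a • w) i ^ s i = a ^ s i * w i ^ s i := by
    intro i; simp [mul_pow]
  rw [Finset.prod_congr rfl (fun i _ => key i), Finset.prod_mul_distrib,
    Finset.prod_pow_eq_pow_sum, hdeg]
  ring

lemma clVec_eval (φ : K →+* L) (F : MvPolynomial (Fin n) K) (v : Fin n → K) :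
    eval (clVec φ v) (MvPolynomial.map φ F) = φ (eval v F) := by
  rw [eval_map]
  have h : φ (eval v F) = φ (eval₂Hom (RingHom.id K) v F) := rfl
  rw [h, map_eval₂Hom]
  rfl

/-- A point given by a vector on which a homogeneous `F` vanishes lies in the zero set. -/
lemma mk_mem_zeroSet {F : MvPolynomial (Fin n) K} {d : ℕ} (hF : F.IsHomogeneous d)
    {v : Fin n → K} (hv : v ≠ 0) (h : eval v F = 0) :
    Projectivization.mk K v hv ∈ zeroSet F := by
  obtain ⟨a, ha⟩ := Projectivization.exists_smul_eq_mk_rep K v hv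
  show eval (Projectivization.mk K v hv).rep F = 0
  have hrep : (Projectivization.mk K v hv).rep = (a : K) • v := by
    rw [← ha, Units.smul_def]
  rw [hrep, eval_smul_of_isHomogeneous hF, h, mul_zero]

lemma clPt_mem_zeroSet (φ : K →+* L) {F : MvPolynomial (Fin n) K} {d : ℕ}
    (hF : F.IsHomogeneous d) {P : Projectivization K (Fin n → K)} (hP : P ∈ zeroSet F) :
    clPt φ P ∈ zeroSet (MvPolynomial.map φ F) := by
  apply mk_mem_zeroSet (hF.map φ)
  rw [clVec_eval, hP, map_zero]

/-- The induced map on points of `S` under base change of the field. -/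
def ptMap (φ : K →+* L) {F : MvPolynomial (Fin n) K} {d : ℕ} (hF : F.IsHomogeneous d)
    (P : zeroSet F) : zeroSet (MvPolynomial.map φ F) :=
  ⟨clPt φ P.1, clPt_mem_zeroSet φ hF P.2⟩

/-- A subspace of `L^n` is defined over `K` (w.r.t. `φ : K →+* L`) if it is spanned by
the base change of a `K`-subspace. -/
def DefinedOver (φ : K →+* L) (W : Submodule L (Fin n → L)) : Prop :=
  ∃ W₀ : Submodule K (Fin n → K), W = Submodule.span L (clVec φ '' (W₀ : Set (Fin n → K)))

/-! ### Asymptotic lines, parabolic points, Eckardt points -/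

/-- The line `W` is asymptotic to `F = 0` at `P`: the intersection multiplicity
`(ℓ · S)_P` is at least 3. -/
def AsymptoticAt (F : MvPolynomial (Fin n) K) (W : Submodule K (Fin n → K))
    (P : Projectivization K (Fin n → K)) : Prop :=
  IsLine W ∧ P.rep ∈ W ∧
    ∃ v ∈ W, LinearIndependent K ![P.rep, v] ∧
      ∃ c : K, lineRestrict F P.rep v = C c * (X 1) ^ 3

/-- The set of asymptotic lines at `P`. -/
def AsymSet (F : MvPolynomial (Fin n) K) (P : Projectivization K (Fin n → K)) :
    Set (Submodule K (Fin n → K)) :=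
  {W | AsymptoticAt F W P}

/-- A point of a hypersurface is parabolic (relative to the given field) if it does
not have exactly two distinct asymptotic lines (i.e. it has one or infinitely many). -/
def ParabolicAt (F : MvPolynomial (Fin n) K) (P : Projectivization K (Fin n → K)) : Prop :=
  ¬ ∃ W₁ W₂ : Submodule K (Fin n → K), W₁ ≠ W₂ ∧ AsymSet F P = {W₁, W₂}

/-- An Eckardt point (relative to the given field): three distinct lines lying on the
surface pass through `P`. -/
def EckardtAt (F : MvPolynomial (Fin n) K) (P : Projectivization K (Fin n → K)) : Prop :=
  ∃ W₁ W₂ W₃ : Submodule K (Fin n → K), W₁ ≠ W₂ ∧ W₁ ≠ W₃ ∧ W₂ ≠ W₃ ∧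
    (∀ W ∈ ({W₁, W₂, W₃} : Set (Submodule K (Fin n → K))),
      IsLine W ∧ LineOnSurf F W ∧ OnLine W P)

section geometric

variable (F : MvPolynomial (Fin n) K)

/-- `F` base changed to the algebraic closure of `K`. -/
def clF : MvPolynomial (Fin n) (AlgebraicClosure K) :=
  MvPolynomial.map (algebraMap K (AlgebraicClosure K)) F

/-- A `K`-point of `S` is parabolic (a geometric notion, checked over `K̄`). -/
def IsParabolic (P : Projectivization K (Fin n → K)) : Prop :=
  ParabolicAt (clF F) (clPt (algebraMap K (AlgebraicClosure K)) P)

/-- A `K`-point of `S` is an Eckardt point (a geometric notion, checked over `K̄`). -/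
def IsEckardt (P : Projectivization K (Fin n → K)) : Prop :=
  EckardtAt (clF F) (clPt (algebraMap K (AlgebraicClosure K)) P)

/-- A `K`-point of `S` is `K`-hyperbolic: it has exactly two asymptotic lines over `K̄`,
and both are defined over `K`. -/
def IsHyperbolic (P : Projectivization K (Fin n → K)) : Prop :=
  ∃ W₁ W₂, W₁ ≠ W₂ ∧
    AsymSet (clF F) (clPt (algebraMap K (AlgebraicClosure K)) P) = {W₁, W₂} ∧
    DefinedOver (algebraMap K (AlgebraicClosure K)) W₁ ∧
    DefinedOver (algebraMap K (AlgebraicClosure K)) W₂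

/-- A `K`-point of `S` is `K`-ternary: at least one of the asymptotic lines of `S`
through `P` is defined over `K`. -/
def IsTernary (P : Projectivization K (Fin n → K)) : Prop :=
  ∃ W ∈ AsymSet (clF F) (clPt (algebraMap K (AlgebraicClosure K)) P),
    DefinedOver (algebraMap K (AlgebraicClosure K)) W

end geometric

/-! ### The group `H_S(K)` -/

variable (F : MvPolynomial (Fin n) K)

/-- `G_S(K)`: the free abelian group on the set `S(K)`. -/
abbrev GS := FreeAbelianGroup (zeroSet F)

/-- The degree homomorphism `G_S(K) → ℤ`, `Σ aᵢ Pᵢ ↦ Σ aᵢ`. -/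
def degHom : GS F →+ ℤ := FreeAbelianGroup.lift fun _ => (1 : ℤ)

/-- `P + Q + R` is a "three point sum": either cut out on `S` with multiplicity by a
`K`-line not contained in `S`, or `P`, `Q`, `R` all lie on a `K`-line contained in `S`. -/
def TripleRel (P Q R : zeroSet F) : Prop :=
  ∃ W : Submodule K (Fin n → K), IsLine W ∧
    ((¬ LineOnSurf F W ∧ MeetsIn F W P.1 Q.1 R.1) ∨
      (LineOnSurf F W ∧ OnLine W P.1 ∧ OnLine W Q.1 ∧ OnLine W R.1))

/-- `G'_S(K)`: the subgroup generated by all three point sums. -/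
def Gp : AddSubgroup (GS F) :=
  AddSubgroup.closure {x | ∃ P Q R : zeroSet F, TripleRel F P Q R ∧
    x = FreeAbelianGroup.of P + FreeAbelianGroup.of Q + FreeAbelianGroup.of R}

/-- `G''_S(K)`: the degree-0 part of `G'_S(K)`. -/
def Gpp : AddSubgroup (GS F) := Gp F ⊓ (degHom F).ker

/-- `H_S(K) = G_S(K)/G''_S(K)`. -/
abbrev HS := GS F ⧸ Gpp F

/-- The class `[P] ∈ H_S(K)` of a point `P ∈ S(K)`. -/
def HClass (P : zeroSet F) : HS F := QuotientAddGroup.mk' (Gpp F) (FreeAbelianGroup.of P)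

/-- The degree homomorphism `H_S(K) → ℤ`. -/
def HdegHom : HS F →+ ℤ :=
  QuotientAddGroup.lift (Gpp F) (degHom F) (fun _ hx => hx.2)

/-- `H⁰_S(K)`: the degree-0 part of `H_S(K)`. -/
def H0 : AddSubgroup (HS F) := (HdegHom F).ker

@[simp] lemma HdegHom_HClass (P : zeroSet F) : HdegHom F (HClass F P) = 1 := by
  simp [HdegHom, HClass, degHom]

/-- The class `[P] - [Q]`, as an element of `H⁰_S(K)`. -/
def H0diff (P Q : zeroSet F) : H0 F :=
  ⟨HClass F P - HClass F Q, by simp [H0, AddMonoidHom.mem_ker, map_sub]⟩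

/-! ### mod-`p` dimensions and torsion -/

/-- `A/pA` for an abelian group `A`. -/
abbrev ModP (p : ℕ) (A : Type*) [AddCommGroup A] : Type _ :=
  A ⧸ (AddMonoidHom.range (nsmulAddMonoidHom p : A →+ A))

instance ModP.instModule (p : ℕ) (A : Type*) [AddCommGroup A] : Module (ZMod p) (ModP p A) :=
  QuotientAddGroup.zmodModule (fun x => ⟨x, rfl⟩)

/-- `dim_{F_p} A/pA`. -/
def dimModP (p : ℕ) (A : Type*) [AddCommGroup A] : Cardinal := Module.rank (ZMod p) (ModP p A)

/-- The `k`-torsion subgroup `A[k]` of an abelian group `A`. -/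
def torsion (k : ℕ) (A : Type*) [AddCommGroup A] : AddSubgroup A :=
  (nsmulAddMonoidHom k : A →+ A).ker

instance torsion.instModule (k : ℕ) (A : Type*) [AddCommGroup A] :
    Module (ZMod k) (torsion k A) :=
  AddCommGroup.zmodModule (fun x => Subtype.ext x.2)

/-- `dim_{F_k} A[k]`: the dimension of the `k`-torsion subgroup (for `k` prime). -/
def dimTorsion (k : ℕ) (A : Type*) [AddCommGroup A] : Cardinal :=
  Module.rank (ZMod k) (torsion k A)

/-! ### Topologies -/

/-- The quotient topology on projective space induced by the topology of `K`. -/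
def projTop (K : Type*) [Field K] [TopologicalSpace K] (n : ℕ) :
    TopologicalSpace (Projectivization K (Fin n → K)) :=
  TopologicalSpace.coinduced
    (fun v : {v : Fin n → K // v ≠ 0} => Projectivization.mk K v.1 v.2) inferInstance

/-- The induced topology on the set of `K`-points of `S`. -/
def surfTop (F : MvPolynomial (Fin n) K) [TopologicalSpace K] :
    TopologicalSpace (zeroSet F) :=
  TopologicalSpace.induced Subtype.val (projTop K n)

/-- `K` (a topological field) is a local field: it is isomorphic, as a topological field,
to `ℝ`, to `ℂ`, or to a finite extension of `ℚ_p` for some prime `p` (with its canonical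
topology, namely the `ℚ_p`-vector space topology). -/
def IsLocalField (K : Type*) [Field K] [TopologicalSpace K] : Prop :=
  (∃ e : K ≃+* ℝ, IsHomeomorph e) ∨ (∃ e : K ≃+* ℂ, IsHomeomorph e) ∨
    (∃ (p : ℕ), p.Prime ∧ ∃ (_ : Fact p.Prime) (f : ℚ_[p] →+* K) (m : ℕ)
      (e : K ≃+ (Fin m → ℚ_[p])),
      (∀ (c : ℚ_[p]) (x : K), e (f c * x) = c • e x) ∧ IsHomeomorph e)

end CubicSurf

/-! ### Symmetric trilinear forms -/

set_option linter.unusedSectionVars false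

namespace CubicAux

section tri

variable {R : Type*} [CommRing R]

/-- The trilinear form with coefficients `a`. -/
def T (a : Fin 4 → Fin 4 → Fin 4 → R) (u v w : Fin 4 → R) : R :=
  ∑ i, ∑ j, ∑ k, a i j k * u i * v j * w k

/-- Symmetry of the coefficients. -/
def Sym3 (a : Fin 4 → Fin 4 → Fin 4 → R) : Prop :=
  (∀ i j k, a i j k = a j i k) ∧ (∀ i j k, a i j k = a i k j)

variable (a : Fin 4 → Fin 4 → Fin 4 → R)

lemma T_add1 (u u' v w : Fin 4 → R) : T a (u + u') v w = T a u v w + T a u' v w := by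
  simp only [T, ← Finset.sum_add_distrib, Pi.add_apply]
  refine Finset.sum_congr rfl fun i _ => Finset.sum_congr rfl fun j _ =>
    Finset.sum_congr rfl fun k _ => by ring

lemma T_add2 (u v v' w : Fin 4 → R) : T a u (v + v') w = T a u v w + T a u v' w := by
  simp only [T, ← Finset.sum_add_distrib, Pi.add_apply]
  refine Finset.sum_congr rfl fun i _ => Finset.sum_congr rfl fun j _ =>
    Finset.sum_congr rfl fun k _ => by ring

lemma T_add3 (u v w w' : Fin 4 → R) : T a u v (w + w') = T a u v w + T a u v w' := by
  simp only [T, ← Finset.sum_add_distrib, Pi.add_apply]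
  refine Finset.sum_congr rfl fun i _ => Finset.sum_congr rfl fun j _ =>
    Finset.sum_congr rfl fun k _ => by ring

lemma T_smul1 (c : R) (u v w : Fin 4 → R) : T a (c • u) v w = c * T a u v w := by
  simp only [T, Finset.mul_sum, Pi.smul_apply, smul_eq_mul]
  refine Finset.sum_congr rfl fun i _ => Finset.sum_congr rfl fun j _ =>
    Finset.sum_congr rfl fun k _ => by ring

lemma T_smul2 (c : R) (u v w : Fin 4 → R) : T a u (c • v) w = c * T a u v w := by
  simp only [T, Finset.mul_sum, Pi.smul_apply, smul_eq_mul]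
  refine Finset.sum_congr rfl fun i _ => Finset.sum_congr rfl fun j _ =>
    Finset.sum_congr rfl fun k _ => by ring

lemma T_smul3 (c : R) (u v w : Fin 4 → R) : T a u v (c • w) = c * T a u v w := by
  simp only [T, Finset.mul_sum, Pi.smul_apply, smul_eq_mul]
  refine Finset.sum_congr rfl fun i _ => Finset.sum_congr rfl fun j _ =>
    Finset.sum_congr rfl fun k _ => by ring

lemma T_sub1 (u u' v w : Fin 4 → R) : T a (u - u') v w = T a u v w - T a u' v w := by
  have h : u - u' = u + (-1 : R) • u' := by ext i; simp [sub_eq_add_neg]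
  rw [h, T_add1, T_smul1]; ring

lemma T_sub2 (u v v' w : Fin 4 → R) : T a u (v - v') w = T a u v w - T a u v' w := by
  have h : v - v' = v + (-1 : R) • v' := by ext i; simp [sub_eq_add_neg]
  rw [h, T_add2, T_smul2]; ring

lemma T_sub3 (u v w w' : Fin 4 → R) : T a u v (w - w') = T a u v w - T a u v w' := by
  have h : w - w' = w + (-1 : R) • w' := by ext i; simp [sub_eq_add_neg]
  rw [h, T_add3, T_smul3]; ring

lemma T_zero1 (v w : Fin 4 → R) : T a 0 v w = 0 := by simp [T]
lemma T_zero2 (v w : Fin 4 → R) : T a v 0 w = 0 := by simp [T]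
lemma T_zero3 (v w : Fin 4 → R) : T a v w 0 = 0 := by simp [T]

variable {a}

lemma Sym3.s12 (h : Sym3 a) (u v w : Fin 4 → R) : T a u v w = T a v u w := by
  unfold T
  rw [Finset.sum_comm]
  refine Finset.sum_congr rfl fun i _ => Finset.sum_congr rfl fun j _ =>
    Finset.sum_congr rfl fun k _ => ?_
  rw [h.1 i j k]; ring

lemma Sym3.s23 (h : Sym3 a) (u v w : Fin 4 → R) : T a u v w = T a u w v := by
  unfold T
  refine Finset.sum_congr rfl fun i _ => ?_
  rw [Finset.sum_comm]
  refine Finset.sum_congr rfl fun j _ =>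
    Finset.sum_congr rfl fun k _ => ?_
  rw [h.2 i j k]; ring

/-- `T` in terms of its values on basis vectors in the last slot. -/
lemma T_last (a : Fin 4 → Fin 4 → Fin 4 → R) (u v w : Fin 4 → R) :
    T a u v w = ∑ k, T a u v (Pi.single k 1) * w k := by
  conv_lhs => rw [pi_eq_sum_univ' w]
  have : ∀ s : Finset (Fin 4), T a u v (∑ k ∈ s, w k • (Pi.single k 1 : Fin 4 → R))
      = ∑ k ∈ s, T a u v (Pi.single k 1) * w k := by
    intro s
    induction s using Finset.induction_on with
    | empty => simp [T_zero3]
    | insert k s hk ih => rw [Finset.sum_insert hk, Finset.sum_insert hk, T_add3, T_smul3, ih]; ring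
  convert this Finset.univ using 3

lemma T_map {S : Type*} [CommRing S] (φ : R →+* S) (a : Fin 4 → Fin 4 → Fin 4 → R)
    (u v w : Fin 4 → R) :
    φ (T a u v w) = T (fun i j k => φ (a i j k)) (fun i => φ (u i)) (fun i => φ (v i))
      (fun i => φ (w i)) := by
  simp [T, map_sum, map_mul]

lemma Sym3.map {S : Type*} [CommRing S] (φ : R →+* S) (h : Sym3 a) :
    Sym3 (fun i j k => φ (a i j k)) :=
  ⟨fun i j k => by simp only [h.1 i j k], fun i j k => by simp only [h.2 i j k]⟩

lemma T_cube (h : Sym3 a) (s t : R) (u v : Fin 4 → R) :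
    T a (s • u + t • v) (s • u + t • v) (s • u + t • v) =
      s ^ 3 * T a u u u + 3 * s ^ 2 * t * T a u u v + 3 * s * t ^ 2 * T a u v v
        + t ^ 3 * T a v v v := by
  simp only [T_add1, T_add2, T_add3, T_smul1, T_smul2, T_smul3]
  rw [h.s23 u v u, h.s12 v u u, h.s23 u v u, h.s12 v u v, h.s23 v v u, h.s12 v u v]; ring

end tri

/-! ### The cubic form as a trilinear form -/

open MvPolynomial

section cubic

variable {K : Type*} [Field K] [CharZero K]

lemma pderiv_comm' (i j : Fin 4) (F : MvPolynomial (Fin 4) K) :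
    pderiv i (pderiv j F) = pderiv j (pderiv i F) := by
  have h : ⁅(pderiv i : Derivation K (MvPolynomial (Fin 4) K) _),
      (pderiv j : Derivation K (MvPolynomial (Fin 4) K) _)⁆ = 0 := by
    apply MvPolynomial.derivation_ext
    intro k
    simp [Derivation.commutator_apply, pderiv_X, Pi.single_apply, apply_ite]
  have := congrArg (fun D => D F) h
  simpa [Derivation.commutator_apply, sub_eq_zero] using this

/-- Coefficients of the polarization. -/
def coef (F : MvPolynomial (Fin 4) K) (i j k : Fin 4) : K :=
  coeff 0 (pderiv k (pderiv j (pderiv i F))) / 6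

lemma coef_sym (F : MvPolynomial (Fin 4) K) : Sym3 (coef F) := by
  constructor
  · intro i j k
    simp only [coef]
    rw [pderiv_comm' j i]
  · intro i j k
    simp only [coef]
    rw [pderiv_comm' k j]

lemma pderiv3 {F : MvPolynomial (Fin 4) K} (hF : F.IsHomogeneous 3) (i j k : Fin 4) :
    pderiv k (pderiv j (pderiv i F)) = C (6 * coef F i j k) := by
  have h : (pderiv k (pderiv j (pderiv i F))).IsHomogeneous 0 := by
    simpa using ((hF.pderiv (i := i)).pderiv (i := j)).pderiv (i := k)
  have h2 := totalDegree_eq_zero_iff_eq_C.1 (Nat.le_zero.1 (h.totalDegree_le))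
  rw [h2, coef]
  congr 1
  field_simp

lemma eval_pderiv {F : MvPolynomial (Fin 4) K} (hF : F.IsHomogeneous 3) {L : Type*} [Field L]
    [CharZero L] (φ : K →+* L) (v : Fin 4 → L) (i : Fin 4) :
    eval v (pderiv i (MvPolynomial.map φ F)) =
      3 * T (fun i j k => φ (coef F i j k)) (Pi.single i 1) v v := by
  rw [pderiv_map]
  have h2 := fun j => ((hF.pderiv (i := i)).pderiv (i := j)).sum_X_mul_pderiv
  have h1 := (hF.pderiv (i := i)).sum_X_mul_pderiv
  have e1 := congrArg (fun p => eval v (MvPolynomial.map φ p)) h1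
  have e2 := fun j => congrArg (fun p => eval v (MvPolynomial.map φ p)) (h2 j)
  simp only [pderiv3 hF] at e2
  simp [map_sum, -eval_map] at e1 e2
  have h6 : φ 6 = 6 := map_ofNat φ 6
  simp only [h6] at e2
  rw [← mul_right_inj' (two_ne_zero (α := L)), ← e1]
  simp only [← e2]
  simp [T, Pi.single_apply, Finset.mul_sum]
  refine Finset.sum_congr rfl fun j _ => Finset.sum_congr rfl fun k _ => by ring

lemma eval_map_eq {F : MvPolynomial (Fin 4) K} (hF : F.IsHomogeneous 3) {L : Type*} [Field L]
    [CharZero L] (φ : K →+* L) (v : Fin 4 → L) :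
    eval v (MvPolynomial.map φ F) = T (fun i j k => φ (coef F i j k)) v v v := by
  have e0 := congrArg (fun p => eval v p) (hF.map φ).sum_X_mul_pderiv
  simp only [map_sum, map_mul, eval_X, eval_pderiv hF] at e0
  simp [-eval_map] at e0
  rw [← mul_right_inj' (three_ne_zero (α := L)), ← e0]
  have hs := (coef_sym F).map φ
  rw [T_last, Finset.mul_sum]
  refine Finset.sum_congr rfl fun i _ => ?_
  rw [hs.s23 v v, hs.s12 v]; ring

lemma eval_eq {F : MvPolynomial (Fin 4) K} (hF : F.IsHomogeneous 3) (v : Fin 4 → K) :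
    eval v F = T (coef F) v v v := by
  simpa using eval_map_eq hF (RingHom.id K) v

/-- Smoothness in terms of the trilinear form. -/
def SmoothT (a : Fin 4 → Fin 4 → Fin 4 → K) : Prop :=
  ∀ v : Fin 4 → AlgebraicClosure K,
    (∀ w, T (fun i j k => algebraMap K (AlgebraicClosure K) (a i j k)) v v w = 0) → v = 0

end cubic
end CubicAux

namespace CubicAux

section lemA

open Polynomial

variable {K : Type*} [Field K] [CharZero K] {a : Fin 4 → Fin 4 → Fin 4 → K}


lemma smoothK (hs : SmoothT a) (v : Fin 4 → K) (h : ∀ w, T a v v w = 0) : v = 0 := by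
  have := hs (fun i => algebraMap K (AlgebraicClosure K) (v i)) (by
    intro w
    rw [T_last]
    refine Finset.sum_eq_zero fun k _ => ?_
    have h2 := congrArg (algebraMap K (AlgebraicClosure K)) (h (Pi.single k 1))
    rw [T_map, map_zero] at h2
    have h3 : (fun i => algebraMap K (AlgebraicClosure K) ((Pi.single k 1 : Fin 4 → K) i))
        = Pi.single k 1 := by
      ext i; by_cases hi : i = k
      · subst hi; simp
      · simp [hi]
    rw [h3] at h2
    rw [h2, zero_mul])
  ext i
  have h2 := congrFun this i
  simpa using h2

lemma T_coeff (P : Fin 4 → K[X]) (k : ℕ) (hk : ∀ i, (P i).natDegree ≤ k) (i : Fin 4) :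
    (T (fun i j l => Polynomial.C (a i j l)) P P (Pi.single i 1)).coeff (k + k) =
      T a (fun i => (P i).coeff k) (fun i => (P i).coeff k) (Pi.single i 1) := by
  have h3 : (Pi.single i 1 : Fin 4 → K[X]) = fun l => Polynomial.C ((Pi.single i 1 : Fin 4 → K) l) := by
    ext1 l; by_cases hi : l = i
    · subst hi; simp
    · simp [hi]
  rw [h3]
  simp only [T, Polynomial.finsetSum_coeff, Polynomial.coeff_mul_C]
  refine Finset.sum_congr rfl fun i _ => Finset.sum_congr rfl fun j _ =>
    Finset.sum_congr rfl fun l _ => ?_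
  rw [mul_assoc, Polynomial.coeff_C_mul, Polynomial.coeff_mul_add_eq_of_natDegree_le (hk i) (hk j)]
  ring

lemma no_common_root (hs : SmoothT a) (P b : Fin 4 → K[X]) (hb : ∑ i, b i * P i = 1)
    (t : AlgebraicClosure K) :
    ∃ i, Polynomial.aeval t (T (fun i j l => Polynomial.C (a i j l)) P P (Pi.single i 1)) ≠ 0 := by
  by_contra! hcon
  have hv := hs (fun i => Polynomial.aeval t (P i)) (by
    intro w
    rw [T_last]
    refine Finset.sum_eq_zero fun k _ => ?_
    have h2 := hcon k
    have h4 := T_map ((Polynomial.aeval t : K[X] →ₐ[K] AlgebraicClosure K) : K[X] →+* AlgebraicClosure K)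
      (fun i j l => Polynomial.C (a i j l)) P P (Pi.single k 1)
    have h3 : (fun i => ((Polynomial.aeval t : K[X] →ₐ[K] AlgebraicClosure K) : K[X] →+* AlgebraicClosure K)
        ((Pi.single k 1 : Fin 4 → K[X]) i)) = Pi.single k 1 := by
      ext i; by_cases hi : i = k
      · subst hi; simp
      · simp [hi]
    rw [h3] at h4
    simp only [RingHom.coe_coe, Polynomial.aeval_C] at h4
    rw [← h4, h2, zero_mul])
  have h1 := congrArg (Polynomial.aeval t) hb
  simp only [map_sum, map_mul, map_one] at h1
  have : ∀ i, Polynomial.aeval t (P i) = 0 := fun i => congrFun hv i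
  simp [this] at h1

lemma const_dir (hs : SmoothT a) (P : Fin 4 → K[X])
    (hW : ∀ i j, T (fun i j l => Polynomial.C (a i j l)) P P (Pi.single i 1) *
        Polynomial.derivative (T (fun i j l => Polynomial.C (a i j l)) P P (Pi.single j 1)) =
      Polynomial.derivative (T (fun i j l => Polynomial.C (a i j l)) P P (Pi.single i 1)) *
        T (fun i j l => Polynomial.C (a i j l)) P P (Pi.single j 1)) :
    ∃ (g : K[X]) (p : Fin 4 → K), ∀ i, P i = g * Polynomial.C (p i) := by
  obtain ⟨g, hg⟩ := (IsPrincipalIdealRing.principal (Ideal.span (Set.range P))).principal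
  have hg' : Ideal.span (Set.range P) = Ideal.span {g} := hg
  have hdvd : ∀ i, g ∣ P i := by
    intro i
    rw [← Ideal.mem_span_singleton, ← hg']
    exact Ideal.subset_span ⟨i, rfl⟩
  choose Q hQ using hdvd
  by_cases hg0 : g = 0
  · exact ⟨0, 0, fun i => by rw [hQ i, hg0]; simp⟩
  have hgm : g ∈ Ideal.span (Set.range P) := by
    rw [hg']; exact Ideal.mem_span_singleton_self g
  obtain ⟨b, hb⟩ := Ideal.mem_span_range_iff_exists_fun.1 hgm
  have hb1 : ∑ i, b i * Q i = 1 := by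
    apply mul_left_cancel₀ hg0
    rw [Finset.mul_sum, mul_one]
    conv_rhs => rw [← hb]
    refine Finset.sum_congr rfl fun i _ => ?_
    rw [hQ i]; ring
  have hPQ : P = g • Q := by ext1 i; simp [hQ i]
  set N : Fin 4 → K[X] := fun i => T (fun i j l => Polynomial.C (a i j l)) Q Q (Pi.single i 1) with hN
  have hNP : ∀ i, T (fun i j l => Polynomial.C (a i j l)) P P (Pi.single i 1) = g ^ 2 * N i := by
    intro i
    rw [hPQ, T_smul1, T_smul2]; ring
  have hWN : ∀ i j, N i * Polynomial.derivative (N j) = Polynomial.derivative (N i) * N j := by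
    intro i j
    have h := hW i j
    rw [hNP, hNP] at h
    simp only [Polynomial.derivative_mul] at h
    apply mul_left_cancel₀ (pow_ne_zero 4 hg0)
    linear_combination h
  have hroot := no_common_root hs Q b hb1
  have hconst : ∀ j, (N j).natDegree = 0 := by
    intro j
    by_contra hdeg
    set φ := algebraMap K (AlgebraicClosure K)
    have hdeg' : ((N j).map φ).degree ≠ 0 := by
      rw [Polynomial.degree_map]
      intro h
      exact hdeg (natDegree_eq_of_degree_eq_some h)
    obtain ⟨t, ht⟩ := IsAlgClosed.exists_root _ hdeg'
    obtain ⟨i, hi⟩ := hroot t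
    have hW2 := congrArg (Polynomial.map φ) (hWN i j)
    simp only [Polynomial.map_mul, ← Polynomial.derivative_map] at hW2
    have hne : (N j).map φ ≠ 0 := by
      rw [Polynomial.map_ne_zero_iff φ.injective]
      rintro h; rw [h] at hdeg; simp at hdeg
    have hdne : Polynomial.derivative ((N j).map φ) ≠ 0 := by
      intro h
      have := derivative_eq_zero.1 h
      rw [natDegree_map] at this
      exact hdeg this
    have hm := derivative_rootMultiplicity_of_root ht
    have hpos : 0 < ((N j).map φ).rootMultiplicity t := (rootMultiplicity_pos hne).2 ht
    have hdvd : (Polynomial.X - Polynomial.C t) ^ ((N j).map φ).rootMultiplicity t ∣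
        (N i).map φ * Polynomial.derivative ((N j).map φ) := by
      rw [hW2]
      exact Dvd.dvd.mul_left (pow_rootMultiplicity_dvd _ _) _
    have hnd : ¬ (Polynomial.X - Polynomial.C t) ∣ (N i).map φ := by
      rw [Polynomial.dvd_iff_isRoot]
      intro h
      apply hi
      rw [IsRoot.def, Polynomial.eval_map_algebraMap] at h
      exact h
    have h3 := (Polynomial.prime_X_sub_C t).pow_dvd_of_dvd_mul_left _ hnd hdvd
    have h4 := (le_rootMultiplicity_iff hdne).2 h3
    omega
  set k := Finset.univ.sup fun i => (Q i).natDegree with hk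
  have hle : ∀ i, (Q i).natDegree ≤ k := fun i =>
    Finset.le_sup (f := fun i => (Q i).natDegree) (Finset.mem_univ i)
  have hk0 : k = 0 := by
    by_contra hk0
    have hv := smoothK hs (fun i => (Q i).coeff k) (by
      intro w
      rw [T_last]
      refine Finset.sum_eq_zero fun l _ => ?_
      rw [← T_coeff Q k hle l, Polynomial.coeff_eq_zero_of_natDegree_lt, zero_mul]
      have := hconst l
      simp only [hN] at this
      rw [this]; omega)
    obtain ⟨i, -, hi⟩ := Finset.exists_mem_eq_sup Finset.univ ⟨0, Finset.mem_univ _⟩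
      (fun i => (Q i).natDegree)
    rw [← hk] at hi
    have h5 : (Q i).coeff k = 0 := congrFun hv i
    rw [hi] at h5
    have h6 : Q i = 0 := leadingCoeff_eq_zero.1 h5
    rw [h6] at hi
    simp at hi
    exact hk0 hi
  refine ⟨g, fun i => (Q i).coeff 0, fun i => ?_⟩
  rw [← eq_C_of_natDegree_eq_zero (by have := hle i; omega), hQ i]

end lemA
end CubicAux

namespace CubicAux

section classes

open MvPolynomial CubicSurf

variable {K : Type*} [Field K] [CharZero K] {F : MvPolynomial (Fin 4) K}

open Classical in
/-- The class of a vector. -/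
def cls (hF : F.IsHomogeneous 3) (v : Fin 4 → K) : HS F :=
  if h : v ≠ 0 ∧ eval v F = 0 then
    HClass F ⟨Projectivization.mk K v h.1, mk_mem_zeroSet hF h.1 h.2⟩ else 0

lemma cls_eq (hF : F.IsHomogeneous 3) {v : Fin 4 → K} (h0 : v ≠ 0)
    (h : Projectivization.mk K v h0 ∈ zeroSet F) (h1 : T (coef F) v v v = 0) :
    cls hF v = HClass F ⟨Projectivization.mk K v h0, h⟩ := by
  rw [cls, dif_pos ⟨h0, by rw [eval_eq hF, h1]⟩]

lemma cls_smul (hF : F.IsHomogeneous 3) {v : Fin 4 → K} {c : K} (hc : c ≠ 0) :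
    cls hF (c • v) = cls hF v := by
  have e : (c • v ≠ 0 ∧ eval (c • v) F = 0) ↔ (v ≠ 0 ∧ eval v F = 0) := by
    rw [eval_smul_of_isHomogeneous hF]
    simp [hc]
  by_cases h : v ≠ 0 ∧ eval v F = 0
  · rw [cls, dif_pos (e.2 h), cls, dif_pos h]
    congr 2
    rw [Projectivization.mk_eq_mk_iff']
    exact ⟨c, rfl⟩
  · rw [cls, dif_neg (fun h' => h (e.1 h')), cls, dif_neg h]

lemma cls_rep (hF : F.IsHomogeneous 3) (P : zeroSet F) : HClass F P = cls hF P.1.rep := by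
  have h : eval P.1.rep F = 0 := P.2
  rw [cls, dif_pos ⟨P.1.rep_nonzero, h⟩]
  congr 1
  ext
  simp

/-- `h` is the class of a line section. -/
def IsH (F : MvPolynomial (Fin 4) K) (h : HS F) : Prop :=
  ∀ P Q R : zeroSet F, TripleRel F P Q R → HClass F P + HClass F Q + HClass F R = h

lemma exists_h (F : MvPolynomial (Fin 4) K) : ∃ h : HS F, IsH F h := by
  by_cases hex : ∃ P Q R : zeroSet F, TripleRel F P Q R
  · obtain ⟨P, Q, R, hr⟩ := hex
    refine ⟨HClass F P + HClass F Q + HClass F R, fun P' Q' R' hr' => ?_⟩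
    unfold HClass
    rw [← map_add, ← map_add, ← map_add, ← map_add, QuotientAddGroup.mk'_eq_mk']
    refine ⟨(FreeAbelianGroup.of P + FreeAbelianGroup.of Q + FreeAbelianGroup.of R) -
      (FreeAbelianGroup.of P' + FreeAbelianGroup.of Q' + FreeAbelianGroup.of R'), ⟨?_, ?_⟩, by abel⟩
    · exact AddSubgroup.sub_mem _ (AddSubgroup.subset_closure ⟨P, Q, R, hr, rfl⟩)
        (AddSubgroup.subset_closure ⟨P', Q', R', hr', rfl⟩)
    · simp [degHom, AddMonoidHom.mem_ker]
  · exact ⟨0, fun P Q R hr => absurd ⟨P, Q, R, hr⟩ hex⟩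

lemma eval_lineRestrict (F : MvPolynomial (Fin 4) K) (u v : Fin 4 → K) (x : Fin 2 → K) :
    eval x (lineRestrict F u v) = eval (x 0 • u + x 1 • v) F := by
  rw [lineRestrict, ← MvPolynomial.coe_aeval_eq_eval, ← MvPolynomial.coe_aeval_eq_eval]
  simp only [RingHom.coe_coe]
  have := congrArg (fun f => f F) (comp_aeval (R := K) (fun i => C (u i) * X 0 + C (v i) * X 1)
    (MvPolynomial.aeval x : MvPolynomial (Fin 2) K →ₐ[K] K))
  simp only [AlgHom.comp_apply] at this
  rw [this]
  congr 2
  ext i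
  simp
  ring

lemma rel_line (hF : F.IsHomogeneous 3) {h : HS F} (hh : IsH F h) {u v : Fin 4 → K}
    (hli : LinearIndependent K ![u, v]) (c : K) (l m : Fin 3 → K)
    (hne : ∀ k, l k • u + m k • v ≠ 0)
    (hfac : ∀ s t : K, T (coef F) (s • u + t • v) (s • u + t • v) (s • u + t • v) =
      c * ∏ k, (m k * s - l k * t)) :
    cls hF (l 0 • u + m 0 • v) + cls hF (l 1 • u + m 1 • v) + cls hF (l 2 • u + m 2 • v) = h := by
  have hz : ∀ k, T (coef F) (l k • u + m k • v) (l k • u + m k • v) (l k • u + m k • v) = 0 := by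
    intro k
    rw [hfac, Finset.prod_eq_zero (Finset.mem_univ k) (by ring), mul_zero]
  have hmem : ∀ k, Projectivization.mk K _ (hne k) ∈ zeroSet F := fun k =>
    mk_mem_zeroSet hF (hne k) (by rw [eval_eq hF, hz])
  rw [cls_eq hF (hne 0) (hmem 0) (hz 0), cls_eq hF (hne 1) (hmem 1) (hz 1),
    cls_eq hF (hne 2) (hmem 2) (hz 2)]
  apply hh
  set W := Submodule.span K (Set.range ![u, v]) with hW
  have huW : u ∈ W := Submodule.subset_span ⟨0, rfl⟩
  have hvW : v ∈ W := Submodule.subset_span ⟨1, rfl⟩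
  have hres : lineRestrict F u v = C c * ∏ k : Fin 3, (C (m k) * X 0 - C (l k) * X 1) := by
    apply MvPolynomial.funext
    intro x
    rw [eval_lineRestrict, eval_eq hF, hfac]
    simp
  refine ⟨W, ?_, ?_⟩
  · unfold IsLine
    rw [hW, finrank_span_eq_card hli]; simp
  by_cases hc : c = 0
  · right
    have hon : ∀ k, OnLine W (Projectivization.mk K _ (hne k)) := by
      intro k
      obtain ⟨b, hb⟩ := Projectivization.exists_smul_eq_mk_rep K _ (hne k)
      unfold OnLine
      rw [← hb, Units.smul_def]
      exact W.smul_mem _ (W.add_mem (W.smul_mem _ huW) (W.smul_mem _ hvW))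
    refine ⟨?_, hon 0, hon 1, hon 2⟩
    intro u' v' hu' hv'
    apply MvPolynomial.funext
    intro x
    rw [eval_lineRestrict, eval_eq hF, map_zero]
    have hx : x 0 • u' + x 1 • v' ∈ W := W.add_mem (W.smul_mem _ hu') (W.smul_mem _ hv')
    have hr : Set.range ![u, v] = {u, v} := by simp [Set.pair_comm]
    rw [hW, hr, Submodule.mem_span_pair] at hx
    obtain ⟨s, t, hst⟩ := hx
    rw [← hst, hfac, hc, zero_mul]
  · left
    refine ⟨?_, u, v, huW, hvW, hli, c, l, m, hne, hc, hres, rfl, rfl, rfl⟩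
    intro hon
    have h0 := hon u v huW hvW
    rw [hres] at h0
    rcases mul_eq_zero.1 h0 with h1 | h1
    · exact hc (by simpa using h1)
    · obtain ⟨k, -, hk⟩ := Finset.prod_eq_zero_iff.1 h1
      apply hne k
      have e1 := congrArg (eval ![1, 0]) hk
      have e2 := congrArg (eval ![0, 1]) hk
      simp at e1 e2
      simp [e1, e2]

lemma li_pair_ne {V : Type*} [AddCommGroup V] [Module K V] {u v : V}
    (hli : LinearIndependent K ![u, v]) {s t : K} (hst : s ≠ 0 ∨ t ≠ 0) : s • u + t • v ≠ 0 := by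
  intro h0
  have := LinearIndependent.pair_iff.1 hli s t h0
  tauto

lemma rel_tangent (hF : F.IsHomogeneous 3) {h : HS F} (hh : IsH F h) {u d : Fin 4 → K} (hli : LinearIndependent K ![u, d])
    (hu : T (coef F) u u u = 0) (hud : T (coef F) u u d = 0) (hq : T (coef F) u d d ≠ 0) :
    2 • cls hF u + cls hF (T (coef F) d d d • u + (-(3 * T (coef F) u d d)) • d) = h := by
  have := rel_line hF hh hli (-1) ![1, 1, T (coef F) d d d] ![0, 0, -(3 * T (coef F) u d d)] ?_ ?_
  · simpa [two_smul] using this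
  · intro k
    fin_cases k
    · exact li_pair_ne hli (by simp)
    · exact li_pair_ne hli (by simp)
    · exact li_pair_ne hli (by simp [hq])
  · intro s t
    rw [T_cube (coef_sym F), hu, hud, Fin.prod_univ_three]
    simp
    ring

lemma rel_gamma (hF : F.IsHomogeneous 3) {h : HS F} (hh : IsH F h) {u v : Fin 4 → K} (hli : LinearIndependent K ![u, v])
    (hu : T (coef F) u u u = 0) (hv : T (coef F) v v v = 0) (huv : T (coef F) u u v = 0) :
    2 • cls hF u + cls hF v = h := by
  have := rel_line hF hh hli (3 * T (coef F) u v v) ![1, 1, 0] ![0, 0, 1] ?_ ?_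
  · simpa [two_smul] using this
  · intro k
    fin_cases k <;> exact li_pair_ne hli (by simp)
  · intro s t
    rw [T_cube (coef_sym F), hu, hv, huv, Fin.prod_univ_three]
    simp
    ring

lemma rel_secant (hF : F.IsHomogeneous 3) {h : HS F} (hh : IsH F h) {u v : Fin 4 → K} (hli : LinearIndependent K ![u, v])
    (hu : T (coef F) u u u = 0) (hv : T (coef F) v v v = 0)
    (hne : T (coef F) u u v ≠ 0 ∨ T (coef F) u v v ≠ 0) :
    cls hF u + cls hF v + cls hF (T (coef F) u v v • u + (-T (coef F) u u v) • v) = h := by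
  have := rel_line hF hh hli 3 ![1, 0, T (coef F) u v v] ![0, 1, -T (coef F) u u v] ?_ ?_
  · simpa using this
  · intro k
    fin_cases k
    · exact li_pair_ne hli (by simp)
    · exact li_pair_ne hli (by simp)
    · exact li_pair_ne hli (by simpa using hne.symm)
  · intro s t
    rw [T_cube (coef_sym F), hu, hv, Fin.prod_univ_three]
    simp
    ring

lemma exists_ker (ℓ : (Fin 4 → K) →ₗ[K] K) (u v : Fin 4 → K) :
    ∃ d, ℓ d = 0 ∧ d ∉ Submodule.span K {u, v} := by
  by_contra! hcon
  have hle : LinearMap.ker ℓ ≤ Submodule.span K {u, v} := fun d hd => hcon d hd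
  have h1 := Submodule.finrank_mono hle
  have h2 := LinearMap.finrank_range_add_finrank_ker ℓ
  have h3 : Module.finrank K (LinearMap.range ℓ) ≤ 1 := by
    simpa using Submodule.finrank_le (LinearMap.range ℓ)
  have h4 : Module.finrank K (Submodule.span K {u, v}) ≤ 2 := by
    classical
    have h5 := finrank_span_finset_le_card (R := K) ({u, v} : Finset (Fin 4 → K))
    have h6 := Finset.card_le_two (a := u) (b := v)
    unfold Set.finrank at h5
    rw [Finset.coe_insert, Finset.coe_singleton] at h5
    omega
  simp at h2
  omega

/-- The last-slot linear form. -/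
def Tlin (a : Fin 4 → Fin 4 → Fin 4 → K) (u v : Fin 4 → K) : (Fin 4 → K) →ₗ[K] K where
  toFun w := T a u v w
  map_add' := T_add3 a u v
  map_smul' c w := T_smul3 a c u v w

lemma li_of_notMem {u d : Fin 4 → K} (hu : u ≠ 0) (hd : d ∉ Submodule.span K {u}) :
    LinearIndependent K ![u, d] := by
  rw [LinearIndependent.pair_iff' hu]
  intro c hc
  exact hd (Submodule.mem_span_singleton.2 ⟨c, hc⟩)

lemma zeroSet_rep (hF : F.IsHomogeneous 3) (P : zeroSet F) :
    T (coef F) P.1.rep P.1.rep P.1.rep = 0 := by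
  rw [← eval_eq hF]; exact P.2

lemma exists_third (hF : F.IsHomogeneous 3) {h : HS F} (hh : IsH F h) (P Q : zeroSet F) :
    ∃ R, HClass F P + HClass F Q + HClass F R = h := by
  have hP := zeroSet_rep hF P
  have hQ := zeroSet_rep hF Q
  have hP0 := P.1.rep_nonzero
  have hQ0 := Q.1.rep_nonzero
  have key : ∀ w : Fin 4 → K, w ≠ 0 → T (coef F) w w w = 0 → ∃ R, HClass F R = cls hF w :=
    fun w hw hw' => ⟨_, (cls_eq hF hw (mk_mem_zeroSet hF hw (by rw [eval_eq hF, hw'])) hw').symm⟩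
  by_cases hPQ : P = Q
  · subst hPQ
    obtain ⟨d, hd, hds⟩ := exists_ker (Tlin (coef F) P.1.rep P.1.rep) P.1.rep P.1.rep
    have hd : T (coef F) P.1.rep P.1.rep d = 0 := hd
    simp only [Set.pair_eq_singleton] at hds
    have hli := li_of_notMem hP0 hds
    rw [cls_rep hF P]
    generalize P.1.rep = u at *
    by_cases hq : T (coef F) u d d = 0
    · by_cases hc : T (coef F) d d d = 0
      · have := rel_gamma hF hh hli hP hc hd
        obtain ⟨R, hR⟩ := key d (by rintro rfl; simp at hds) hc
        exact ⟨R, by rw [hR, ← this]; abel⟩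
      · have := rel_line hF hh hli (-T (coef F) d d d) ![1, 1, 1] ![0, 0, 0] ?_ ?_
        · simp only [Matrix.cons_val, one_smul, zero_smul, add_zero] at this
          obtain ⟨R, hR⟩ := key u hP0 hP
          exact ⟨R, by rw [hR, ← this]⟩
        · intro k
          fin_cases k <;> simpa using hP0
        · intro s t
          rw [T_cube (coef_sym F), hP, hd, hq, Fin.prod_univ_three]
          simp
          ring
    · have := rel_tangent hF hh hli hP hd hq
      obtain ⟨R, hR⟩ := key (T (coef F) d d d • u + (-(3 * T (coef F) u d d)) • d)
        (li_pair_ne hli (by simp [hq])) (by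
          rw [T_cube (coef_sym F), hP, hd]; ring)
      exact ⟨R, by rw [hR, ← this]; abel⟩
  · have hli : LinearIndependent K ![P.1.rep, Q.1.rep] := by
      rw [LinearIndependent.pair_iff' hP0]
      intro c hc
      apply hPQ
      ext1
      rw [← P.1.mk_rep, ← Q.1.mk_rep, eq_comm, Projectivization.mk_eq_mk_iff']
      exact ⟨c, hc⟩
    rw [cls_rep hF P, cls_rep hF Q]
    generalize P.1.rep = u at *
    generalize Q.1.rep = v at *
    by_cases hab : T (coef F) u u v ≠ 0 ∨ T (coef F) u v v ≠ 0
    · have := rel_secant hF hh hli hP hQ hab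
      obtain ⟨R, hR⟩ := key (T (coef F) u v v • u + (-T (coef F) u u v) • v)
        (li_pair_ne hli (by simpa using hab.symm)) (by
          rw [T_cube (coef_sym F), hP, hQ]; ring)
      exact ⟨R, by rw [hR, ← this]⟩
    · push Not at hab
      have := rel_line hF hh hli 0 ![1, 0, 1] ![0, 1, 0] ?_ ?_
      · simp only [Matrix.cons_val, one_smul, zero_smul, add_zero, zero_add] at this
        obtain ⟨R, hR⟩ := key u hP0 hP
        exact ⟨R, by rw [hR, ← this]⟩
      · intro k
        fin_cases k <;> simp [hP0, hQ0]
      · intro s t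
        rw [T_cube (coef_sym F), hP, hQ, hab.1, hab.2]
        ring

end classes
end CubicAux

set_option linter.unusedSectionVars false
set_option linter.unusedSimpArgs false
namespace CubicAux

section alg

open Polynomial

variable {K : Type*} [Field K] [CharZero K] {a : Fin 4 → Fin 4 → Fin 4 → K}

/-- Evaluate a polynomial vector. -/
def ev (P : Fin 4 → K[X]) (t : K) : Fin 4 → K := fun i => (P i).eval t

lemma eval_T (t : K) (P Q R : Fin 4 → K[X]) :
    (T (fun i j l => Polynomial.C (a i j l)) P Q R).eval t = T a (ev P t) (ev Q t) (ev R t) := by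
  have := T_map (Polynomial.evalRingHom t) (fun i j l => Polynomial.C (a i j l)) P Q R
  simp only [Polynomial.coe_evalRingHom, Polynomial.eval_C] at this
  exact this

lemma derivative_T (P Q R : Fin 4 → K[X]) :
    Polynomial.derivative (T (fun i j l => Polynomial.C (a i j l)) P Q R) =
      T (fun i j l => Polynomial.C (a i j l)) (fun i => Polynomial.derivative (P i)) Q R +
      T (fun i j l => Polynomial.C (a i j l)) P (fun i => Polynomial.derivative (Q i)) R +
      T (fun i j l => Polynomial.C (a i j l)) P Q (fun i => Polynomial.derivative (R i)) := by
  simp only [T, ← Finset.sum_add_distrib, Polynomial.derivative_sum, Polynomial.derivative_mul, Polynomial.derivative_C]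
  refine Finset.sum_congr rfl fun i _ => Finset.sum_congr rfl fun j _ =>
    Finset.sum_congr rfl fun k _ => by ring

lemma ev_single (i : Fin 4) (t : K) : ev (Pi.single i 1 : Fin 4 → K[X]) t = Pi.single i 1 := by
  ext l; by_cases hi : l = i
  · subst hi; simp [ev]
  · simp [ev, hi]

lemma ev_C (v : Fin 4 → K) (t : K) : ev (fun i => Polynomial.C (v i)) t = v := by
  ext l; simp [ev]

lemma ev_derivative_single (i : Fin 4) (t : K) :
    ev (fun l => Polynomial.derivative ((Pi.single i 1 : Fin 4 → K[X]) l)) t = 0 := by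
  ext l; by_cases hi : l = i
  · subst hi; simp [ev]
  · simp [ev, hi]

lemma polarize (hsym : Sym3 a) (ℓ : (Fin 4 → K) →ₗ[K] K)
    (hcon : ∀ d, ℓ d = 0 → T a d d d = 0) (x w : Fin 4 → K) (hx : ℓ x = 0) (hw : ℓ w = 0) :
    T a x x w = 0 := by
  have h1 := hcon ((1 : K) • x + (1 : K) • w) (by simp [hx, hw])
  have h2 := hcon ((1 : K) • x + (-1 : K) • w) (by simp [hx, hw])
  rw [T_cube hsym, hcon x hx, hcon w hw] at h1 h2
  have h3 : 6 * T a x x w = 0 := by linear_combination h1 - h2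
  simpa using h3

lemma plane_not (hsym : Sym3 a) (hs : SmoothT a) (ℓ : (Fin 4 → K) →ₗ[K] K) (hℓ : ℓ ≠ 0) :
    ∃ d, ℓ d = 0 ∧ T a d d d ≠ 0 := by
  by_contra! hcon
  have hpol := polarize hsym ℓ hcon
  obtain ⟨p, hp, hp0⟩ := exists_ker ℓ 0 0
  have hp0 : p ≠ 0 := by rintro rfl; simp at hp0
  obtain ⟨p', hp', hpp'⟩ := exists_ker ℓ p p
  simp only [Set.pair_eq_singleton] at hpp'
  obtain ⟨m, hm⟩ : ∃ m, ℓ (Pi.single m 1) ≠ 0 := by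
    by_contra! hall
    apply hℓ
    apply LinearMap.pi_ext'
    intro i
    ext
    simpa using hall i
  set P : Fin 4 → K[X] := fun i => Polynomial.C (p i) + Polynomial.X * Polynomial.C (p' i) with hP
  have hev : ∀ t, ev P t = p + t • p' := by
    intro t; ext i; simp [ev, hP]; ring
  have hprop : ∀ j, T (fun i j l => Polynomial.C (a i j l)) P P (Pi.single j 1) =
      Polynomial.C (ℓ (Pi.single j 1) / ℓ (Pi.single m 1)) *
        T (fun i j l => Polynomial.C (a i j l)) P P (Pi.single m 1) := by
    intro j
    apply Polynomial.funext
    intro t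
    rw [Polynomial.eval_mul, Polynomial.eval_C, eval_T, eval_T, ev_single, ev_single, hev]
    have := hpol (p + t • p') (ℓ (Pi.single m 1) • Pi.single j 1 - ℓ (Pi.single j 1) • Pi.single m 1)
      (by simp [hp, hp']) (by simp; ring)
    rw [T_sub3, T_smul3, T_smul3] at this
    field_simp
    linear_combination this
  obtain ⟨g, r, hgr⟩ := const_dir hs P (by
    intro i j
    rw [hprop i, hprop j]
    simp only [Polynomial.derivative_mul, Polynomial.derivative_C]
    ring)
  have h0 : p = g.eval 0 • r := by
    have := hev 0
    ext i
    have h2 := congrFun this i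
    simp [ev, hgr i] at h2
    simp [h2]
  have h1 : p + p' = g.eval 1 • r := by
    have := hev 1
    ext i
    have h2 := congrFun this i
    simp [ev, hgr i] at h2
    simp [h2]
  have hg0 : g.eval 0 ≠ 0 := by
    intro h; rw [h, zero_smul] at h0; exact hp0 h0
  apply hpp'
  rw [Submodule.mem_span_singleton]
  refine ⟨g.eval 1 / g.eval 0 - 1, ?_⟩
  have h3 : p' = g.eval 1 • r - p := by rw [← h1]; abel
  rw [h3]
  nth_rw 1 [h0]
  rw [sub_smul, smul_smul, one_smul, ← h0]
  congr 2
  field_simp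

end alg

section ana

variable {K : Type*} [NontriviallyNormedField K] [CompleteSpace K] [CharZero K]
  {a : Fin 4 → Fin 4 → Fin 4 → K}

open Topology Filter

lemma ift {E : Type*} [NormedAddCommGroup E] [NormedSpace K E] [CompleteSpace E]
    (φ : E × K → K) (x0 : E) (t0 : K) (hφ : AnalyticAt K φ (x0, t0)) (h0 : φ (x0, t0) = 0)
    (δ : K) (hδ : HasDerivAt (fun t => φ (x0, t)) δ t0) (hne : δ ≠ 0)
    {V : Set (E × K)} (hV : V ∈ 𝓝 (x0, t0)) :
    ∀ᶠ x in 𝓝 x0, ∃ t, (x, t) ∈ V ∧ φ (x, t) = 0 := by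
  have hf := hφ.hasStrictFDerivAt
  set f' := fderiv K φ (x0, t0)
  have hd : f' (0, 1) = δ := by
    have h1 : HasDerivAt (fun t : K => (x0, t)) ((0 : E), (1 : K)) t0 :=
      (hasDerivAt_const t0 x0).prodMk (hasDerivAt_id t0)
    have h2 := hf.hasFDerivAt.comp_hasDerivAt t0 h1
    exact h2.unique hδ
  have hG : HasStrictFDerivAt (fun z : E × K => (z.1, φ z))
      ((ContinuousLinearMap.fst K E K).prod f') (x0, t0) :=
    hasStrictFDerivAt_fst.prodMk hf
  have hmap := hG.map_nhds_eq_of_surj (by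
    rw [LinearMap.range_eq_top]
    rintro ⟨y, r⟩
    refine ⟨(y, (r - f' (y, 0)) / δ), ?_⟩
    have h3 : ((y, (r - f' (y, 0)) / δ) : E × K) = (y, 0) + ((r - f' (y, 0)) / δ) • (0, 1) := by
      simp
    have h4 : f' (y, (r - f' (y, 0)) / δ) = r := by
      rw [h3, map_add, map_smul, hd]
      simp only [smul_eq_mul]
      field_simp
      ring
    simp [h4])
  have himg : (fun z : E × K => (z.1, φ z)) '' V ∈ 𝓝 (x0, (0 : K)) := by
    have := image_mem_map (m := fun z : E × K => (z.1, φ z)) hV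
    rw [hmap] at this
    simpa [h0] using this
  have hc : Tendsto (fun x : E => (x, (0 : K))) (𝓝 x0) (𝓝 (x0, 0)) :=
    (Continuous.prodMk_left (0 : K)).tendsto x0
  filter_upwards [hc himg] with x hx
  obtain ⟨⟨y, t⟩, hyV, hy⟩ := hx
  simp only [Prod.mk.injEq] at hy
  exact ⟨t, by rw [← hy.1]; exact hyV, by rw [← hy.1]; exact hy.2⟩

lemma continuous_T {X : Type*} [TopologicalSpace X] {u v w : X → Fin 4 → K}
    (hu : Continuous u) (hv : Continuous v) (hw : Continuous w) :
    Continuous fun x => T a (u x) (v x) (w x) := by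
  unfold T
  fun_prop

lemma exists_nonEck (hsym : Sym3 a) (hs : SmoothT a) {O : Fin 4 → K} (hO : O ≠ 0)
    (hOS : T a O O O = 0) :
    ∃ R d : Fin 4 → K, R ≠ 0 ∧ T a R R R = 0 ∧ T a R R d = 0 ∧ T a R d d ≠ 0 := by
  by_cases hq : ∃ d, T a O O d = 0 ∧ T a O d d ≠ 0
  · obtain ⟨d, h1, h2⟩ := hq
    exact ⟨O, d, hO, hOS, h1, h2⟩
  push Not at hq
  obtain ⟨n, hn⟩ : ∃ n, T a O O n ≠ 0 := by
    by_contra! hall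
    exact hO (smoothK hs O hall)
  obtain ⟨d, hd, hc⟩ := plane_not hsym hs (Tlin a O O) (by
    intro h0
    exact hn (congrArg (fun f => f n) h0))
  have hd : T a O O d = 0 := hd
  have hOdd := hq d hd
  obtain ⟨α, hα⟩ : ∃ x, T a O O n = x := ⟨_, rfl⟩
  obtain ⟨β, hβ⟩ : ∃ x, T a O d n = x := ⟨_, rfl⟩
  obtain ⟨γ, hγ⟩ : ∃ x, T a O n n = x := ⟨_, rfl⟩
  obtain ⟨δ, hδ⟩ : ∃ x, T a d d n = x := ⟨_, rfl⟩
  obtain ⟨ε, hε⟩ : ∃ x, T a d n n = x := ⟨_, rfl⟩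
  obtain ⟨ζ, hζ⟩ : ∃ x, T a n n n = x := ⟨_, rfl⟩
  obtain ⟨c, hcc⟩ : ∃ x, T a d d d = x := ⟨_, rfl⟩
  have hα0 : α ≠ 0 := hα ▸ hn
  have hc0 : c ≠ 0 := hcc ▸ hc
  set φ : K × K → K := fun z => z.2 * (3 * α + 6 * z.1 * β + 3 * z.1 ^ 3 * z.2 * γ
    + 3 * z.1 ^ 2 * δ + 3 * z.1 ^ 4 * z.2 * ε + z.1 ^ 6 * z.2 ^ 2 * ζ) + c with hφ
  set A : K × K → K := fun z => α + z.1 ^ 2 * δ + z.1 ^ 6 * z.2 ^ 2 * ζ + 2 * z.1 * β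
    + 2 * z.1 ^ 3 * z.2 * γ + 2 * z.1 ^ 4 * z.2 * ε with hA
  set B1 : K × K → K := fun z => c + z.1 ^ 2 * z.2 * δ with hB1
  set B2 : K × K → K := fun z => c + 2 * z.1 * z.2 * β + 2 * z.1 ^ 2 * z.2 * δ
    + z.1 ^ 4 * z.2 ^ 2 * ε with hB2
  set D : K × K → K := fun z => β + z.1 * δ + z.1 ^ 3 * z.2 * ε with hD
  set G : K × K → K := fun z => γ + z.1 * ε + z.1 ^ 3 * z.2 * ζ with hG
  set E : K × K → K := fun z => A z ^ 2 * B1 z - 2 * z.1 * A z * B2 z * D z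
    + z.1 ^ 3 * B2 z ^ 2 * G z with hE
  have hAc : Continuous A := by rw [hA]; fun_prop
  have hEc : Continuous E := by rw [hE, hA, hB1, hB2, hD, hG]; fun_prop
  have h30 : (3 : K) ≠ 0 := three_ne_zero
  have hV : {z : K × K | A z ≠ 0 ∧ E z ≠ 0} ∈ 𝓝 ((0 : K), -c / (3 * α)) := by
    apply (IsOpen.inter (isOpen_ne_fun hAc continuous_const)
      (isOpen_ne_fun hEc continuous_const)).mem_nhds
    constructor
    · simpa [hA] using hα0
    · simp [hE, hA, hB1, hα0, hc0]
  have hi := ift φ (0 : K) (-c / (3 * α)) (by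
      have h1 : AnalyticAt K (fun z : K × K => z.1) (0, -c / (3 * α)) := analyticAt_fst
      have h2 : AnalyticAt K (fun z : K × K => z.2) (0, -c / (3 * α)) := analyticAt_snd
      have hk : ∀ x : K, AnalyticAt K (fun _ : K × K => x) (0, -c / (3 * α)) :=
        fun x => analyticAt_const
      exact (h2.mul (((((((hk _).add (((hk _).mul h1).mul (hk _))).add
        ((((hk _).mul (h1.pow 3)).mul h2).mul (hk _))).add
        (((hk _).mul (h1.pow 2)).mul (hk _))).add
        ((((hk _).mul (h1.pow 4)).mul h2).mul (hk _))).add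
        (((h1.pow 6).mul (h2.pow 2)).mul (hk _))))).add (hk _)) (by simp [hφ]; field_simp; ring) (3 * α) (by
      have := ((hasDerivAt_id (-c / (3 * α))).mul_const (3 * α)).add_const c
      simpa [hφ] using this) (by simp [hα0]) hV
  obtain ⟨s, ⟨w, ⟨hA0, hE0⟩, hw⟩, hs0⟩ :=
    ((hi.filter_mono nhdsWithin_le_nhds).and (self_mem_nhdsWithin (s := {(0 : K)}ᶜ))).exists
  have hs0 : s ≠ 0 := hs0
  have hRRn : T a (O + s • d + (s ^ 3 * w) • n) (O + s • d + (s ^ 3 * w) • n) n = A (s, w) := by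
    simp only [T_add1, T_add2, T_add3, T_smul1, T_smul2, T_smul3]
    rw [hsym.s12 d O n, hsym.s12 n O n, hsym.s12 n d n, hα, hβ, hγ, hδ, hε, hζ, hA]; ring
  have hRRd : T a (O + s • d + (s ^ 3 * w) • n) (O + s • d + (s ^ 3 * w) • n) d
      = s ^ 2 * B2 (s, w) := by
    simp only [T_add1, T_add2, T_add3, T_smul1, T_smul2, T_smul3]
    rw [hsym.s12 d O d, hsym.s12 n O d, hsym.s12 n d d, hsym.s23 O n d, hsym.s23 d n d,
      hsym.s23 n n d, hsym.s12 n d n, hd, hOdd, hβ, hδ, hε, hcc, hB2]; ring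
  have hRdd : T a (O + s • d + (s ^ 3 * w) • n) d d = s * B1 (s, w) := by
    simp only [T_add1, T_add2, T_add3, T_smul1, T_smul2, T_smul3]
    rw [hsym.s12 n d d, hsym.s23 d n d, hOdd, hcc, hδ, hB1]; ring
  have hRdn : T a (O + s • d + (s ^ 3 * w) • n) d n = D (s, w) := by
    simp only [T_add1, T_add2, T_add3, T_smul1, T_smul2, T_smul3]
    rw [hsym.s12 n d n, hβ, hδ, hε, hD]
  have hRnn : T a (O + s • d + (s ^ 3 * w) • n) n n = G (s, w) := by
    simp only [T_add1, T_add2, T_add3, T_smul1, T_smul2, T_smul3]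
    rw [hγ, hε, hζ, hG]
  have hRRO : T a (O + s • d + (s ^ 3 * w) • n) (O + s • d + (s ^ 3 * w) • n) O
      = 2 * (s ^ 3 * w) * α + 2 * s * (s ^ 3 * w) * β + (s ^ 3 * w) ^ 2 * γ := by
    simp only [T_add1, T_add2, T_add3, T_smul1, T_smul2, T_smul3]
    rw [hsym.s23 O d O, hsym.s12 d O O, hsym.s23 O d O, hsym.s23 O n O, hsym.s12 n O O,
      hsym.s23 O n O, hsym.s23 d d O, hsym.s12 d O d, hsym.s23 d n O, hsym.s12 d O n,
      hsym.s23 n d O, hsym.s12 n O d, hsym.s23 O n d, hsym.s23 n n O, hsym.s12 n O n,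
      hOS, hd, hOdd, hα, hβ, hγ]
    ring
  generalize hR : O + s • d + (s ^ 3 * w) • n = R at *
  refine ⟨R, A (s, w) • d - (s ^ 2 * B2 (s, w)) • n, ?_, ?_, ?_, ?_⟩
  · rintro rfl
    rw [T_zero1] at hRRn
    exact hA0 hRRn.symm
  · nth_rw 3 [← hR]
    rw [T_add3, T_add3, T_smul3, T_smul3, hRRn, hRRd, hRRO]
    simp only [hφ] at hw
    simp only [hA, hB2]
    linear_combination s ^ 3 * hw
  · rw [T_sub3, T_smul3, T_smul3, hRRn, hRRd]; ring
  · have : T a R (A (s, w) • d - (s ^ 2 * B2 (s, w)) • n) (A (s, w) • d - (s ^ 2 * B2 (s, w)) • n)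
        = s * E (s, w) := by
      simp only [T_sub2, T_sub3, T_smul2, T_smul3]
      rw [hsym.s23 R n d, hRdd, hRdn, hRnn, hE]; ring
    rw [this]
    exact mul_ne_zero hs0 hE0

end ana
end CubicAux

set_option linter.unusedSectionVars false
set_option linter.unusedSimpArgs false
namespace CubicAux

section alg

open Polynomial

variable {K : Type*} [Field K] [CharZero K] {a : Fin 4 → Fin 4 → Fin 4 → K}

/-- The residual point of a tangent line lies on the surface. -/
lemma tangent_mem (hsym : Sym3 a) {u d : Fin 4 → K} (hu : T a u u u = 0) (hud : T a u u d = 0) :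
    T a (T a d d d • u + (-(3 * T a u d d)) • d) (T a d d d • u + (-(3 * T a u d d)) • d)
      (T a d d d • u + (-(3 * T a u d d)) • d) = 0 := by
  rw [T_cube hsym, hu, hud]; ring

lemma exists_curve (hsym : Sym3 a) (hs : SmoothT a) {R d0 : Fin 4 → K} (hR : R ≠ 0)
    (hRS : T a R R R = 0) (hd0 : T a R R d0 = 0) (hq0 : T a R d0 d0 ≠ 0) :
    ∃ D P : Fin 4 → K[X], (∀ t, T a R R (ev D t) = 0) ∧
      (∀ t, ev P t = T a (ev D t) (ev D t) (ev D t) • R +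
        (-(3 * T a R (ev D t) (ev D t))) • ev D t) ∧
      ∃ t0 i j, T a R (ev D t0) (ev D t0) ≠ 0 ∧
        Polynomial.eval t0 (T (fun i j l => Polynomial.C (a i j l)) P P (Pi.single i 1) *
            Polynomial.derivative (T (fun i j l => Polynomial.C (a i j l)) P P (Pi.single j 1)) -
          Polynomial.derivative (T (fun i j l => Polynomial.C (a i j l)) P P (Pi.single i 1)) *
            T (fun i j l => Polynomial.C (a i j l)) P P (Pi.single j 1)) ≠ 0 := by
  obtain ⟨d1, hd1, hd1n⟩ := exists_ker (Tlin a R R) R d0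
  have hd1 : T a R R d1 = 0 := hd1
  obtain ⟨D, hD⟩ : ∃ D : Fin 4 → K[X], D = fun i => Polynomial.C (d0 i) + Polynomial.X * Polynomial.C (d1 i) := ⟨_, rfl⟩
  have hevD : ∀ t, ev D t = d0 + t • d1 := by
    intro t; ext i; simp [ev, hD]; ring
  obtain ⟨q, hq⟩ : ∃ q, q = T (fun i j l => Polynomial.C (a i j l)) (fun i => Polynomial.C (R i)) D D := ⟨_, rfl⟩
  have hqe : ∀ t, q.eval t = T a R (ev D t) (ev D t) := by
    intro t; rw [hq, eval_T, ev_C]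
  obtain ⟨P, hP⟩ : ∃ P : Fin 4 → K[X], P = fun i =>
    T (fun i j l => Polynomial.C (a i j l)) D D D * Polynomial.C (R i) - 3 * q * D i := ⟨_, rfl⟩
  have hevP : ∀ t, ev P t = T a (ev D t) (ev D t) (ev D t) • R +
        (-(3 * T a R (ev D t) (ev D t))) • ev D t := by
    intro t
    rw [← hqe, ← eval_T]
    ext i
    simp [ev, hP]; ring
  have hq0' : q.eval 0 ≠ 0 := by rw [hqe, hevD]; simpa using hq0
  have hqne : q ≠ 0 := by rintro rfl; simp at hq0'
  refine ⟨D, P, ?_, hevP, ?_⟩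
  · intro t
    rw [hevD, T_add3, T_smul3, hd0, hd1]; simp
  by_contra! hcon
  have hW : ∀ i j, T (fun i j l => Polynomial.C (a i j l)) P P (Pi.single i 1) *
            Polynomial.derivative (T (fun i j l => Polynomial.C (a i j l)) P P (Pi.single j 1)) =
          Polynomial.derivative (T (fun i j l => Polynomial.C (a i j l)) P P (Pi.single i 1)) *
            T (fun i j l => Polynomial.C (a i j l)) P P (Pi.single j 1) := by
    intro i j
    rw [← sub_eq_zero]
    have : q * (T (fun i j l => Polynomial.C (a i j l)) P P (Pi.single i 1) *
            Polynomial.derivative (T (fun i j l => Polynomial.C (a i j l)) P P (Pi.single j 1)) -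
          Polynomial.derivative (T (fun i j l => Polynomial.C (a i j l)) P P (Pi.single i 1)) *
            T (fun i j l => Polynomial.C (a i j l)) P P (Pi.single j 1)) = 0 := by
      apply Polynomial.funext
      intro t
      rw [Polynomial.eval_mul, Polynomial.eval_zero]
      by_cases h : q.eval t = 0
      · rw [h, zero_mul]
      · rw [hcon t i j (by rwa [← hqe]), mul_zero]
    exact (mul_eq_zero.1 this).resolve_left hqne
  obtain ⟨g, p, hgp⟩ := const_dir hs P hW
  have hPg : ∀ t, ev P t = g.eval t • p := by
    intro t; ext i; simp [ev, hgp]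
  obtain ⟨t1, ht1⟩ : ∃ t1, (Polynomial.X * q).eval t1 ≠ 0 := by
    by_contra! hall
    have : Polynomial.X * q = 0 := Polynomial.funext fun t => by rw [hall t, Polynomial.eval_zero]
    exact (mul_ne_zero Polynomial.X_ne_zero hqne) this
  rw [Polynomial.eval_mul, Polynomial.eval_X] at ht1
  have ht10 := left_ne_zero_of_mul ht1
  have hq1 := right_ne_zero_of_mul ht1
  have e0 : g.eval 0 • p = T a (ev D 0) (ev D 0) (ev D 0) • R + (-(3 * q.eval 0)) • d0 := by
    rw [← hPg, hevP, ← hqe]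
    congr 2
    rw [hevD]; simp
  have e1 : g.eval t1 • p = T a (ev D t1) (ev D t1) (ev D t1) • R
      + (-(3 * q.eval t1)) • (d0 + t1 • d1) := by
    rw [← hPg, hevP, ← hqe, ← hevD]
  generalize T a (ev D 0) (ev D 0) (ev D 0) = c0 at e0
  generalize T a (ev D t1) (ev D t1) (ev D t1) = c1 at e1
  generalize q.eval 0 = q0 at *
  generalize q.eval t1 = q1 at *
  have hg0 : g.eval 0 ≠ 0 := by
    intro h
    rw [h, zero_smul] at e0
    have h2 : d0 = (c0 / (3 * q0)) • R := by
      ext i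
      have := congrFun e0 i
      simp at this ⊢
      field_simp
      linear_combination this
    apply hq0
    rw [h2, T_smul2, T_smul3, hRS]; simp
  generalize g.eval 0 = g0 at *
  generalize g.eval t1 = g1 at *
  apply hd1n
  rw [Submodule.mem_span_pair]
  refine ⟨(c1 - g1 / g0 * c0) / (3 * q1 * t1), (-(3 * q1) + g1 / g0 * (3 * q0)) / (3 * q1 * t1), ?_⟩
  ext i
  have h0 := congrFun e0 i
  have h1 := congrFun e1 i
  simp at h0 h1 ⊢
  field_simp
  linear_combination g1 * h0 - g0 * h1

end alg

section ana

variable {K : Type*} [NontriviallyNormedField K] [CompleteSpace K] [CharZero K]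
  {a : Fin 4 → Fin 4 → Fin 4 → K}

open Topology Filter Polynomial

lemma continuous_ev (P : Fin 4 → K[X]) : Continuous (ev P) := by
  refine continuous_pi fun i => ?_
  exact (P i).continuous

lemma step2 (hsym : Sym3 a) (hs : SmoothT a) {O : Fin 4 → K} (hO : O ≠ 0)
    (hOS : T a O O O = 0) :
    ∃ R Q0 : Fin 4 → K, R ≠ 0 ∧ T a R R R = 0 ∧ Q0 ≠ 0 ∧ T a Q0 Q0 Q0 = 0 ∧
      ∀ᶠ Q in 𝓝 Q0, T a Q Q Q = 0 → ∃ d, T a R R d = 0 ∧ T a R d d ≠ 0 ∧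
        T a (T a d d d • R + (-(3 * T a R d d)) • d) (T a d d d • R + (-(3 * T a R d d)) • d) Q = 0
        ∧ LinearIndependent K ![T a d d d • R + (-(3 * T a R d d)) • d, Q] := by
  obtain ⟨R, d0, hR, hRS, hd0, hq0⟩ := exists_nonEck hsym hs hO hOS
  obtain ⟨D, P, hD, hP, t0, i, j, hqt0, hW⟩ := exists_curve hsym hs hR hRS hd0 hq0
  obtain ⟨P', hP'⟩ : ∃ P' : Fin 4 → K[X], P' = fun i => Polynomial.derivative (P i) := ⟨_, rfl⟩
  have hPS : ∀ t, T a (ev P t) (ev P t) (ev P t) = 0 := by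
    intro t; rw [hP]; exact tangent_mem hsym hRS (hD t)
  have hPP' : ∀ t, T a (ev P t) (ev P t) (ev P' t) = 0 := by
    intro t
    have h0 : T (fun i j l => Polynomial.C (a i j l)) P P P = 0 :=
      Polynomial.funext fun t => by rw [eval_T, hPS, Polynomial.eval_zero]
    have h1 := congrArg (fun f => Polynomial.eval t (Polynomial.derivative f)) h0
    simp only [derivative_T, Polynomial.eval_add, eval_T, ← hP', Polynomial.derivative_zero, Polynomial.eval_zero] at h1
    rw [hsym.s12 (ev P' t), hsym.s23 (ev P t) (ev P' t)] at h1
    have h3 : 3 * T a (ev P t) (ev P t) (ev P' t) = 0 := by linear_combination h1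
    simpa using h3
  have hPP'P : ∀ t, T a (ev P t) (ev P' t) (ev P t) = 0 := by
    intro t; rw [hsym.s23, hPP']
  have hN' : ∀ Q : Fin 4 → K, ∀ t, HasDerivAt (fun t => T a (ev P t) (ev P t) Q)
      (2 * T a (ev P t) (ev P' t) Q) t := by
    intro Q t
    have h1 := (T (fun i j l => Polynomial.C (a i j l)) P P (fun i => Polynomial.C (Q i))).hasDerivAt t
    simp only [derivative_T, Polynomial.eval_add, eval_T, ev_C, ← hP', Polynomial.derivative_C] at h1
    convert h1 using 1
    have : ev (fun _ : Fin 4 => (0 : K[X])) t = 0 := by ext; simp [ev]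
    rw [this, T_zero3, hsym.s12 (ev P' t)]; ring
  obtain ⟨P0, hP0⟩ : ∃ x, x = ev P t0 := ⟨_, rfl⟩
  obtain ⟨e, he⟩ : ∃ x, x = ev P' t0 := ⟨_, rfl⟩
  have hP0S := hPS t0
  have hP0e := hPP' t0
  have hP0eP := hPP'P t0
  simp only [Polynomial.eval_sub, Polynomial.eval_mul, derivative_T, Polynomial.eval_add, eval_T, ev_single, ev_derivative_single,
    ← hP', T_zero3, add_zero] at hW
  rw [← hP0] at hP0S hP0e hP0eP
  rw [← he] at hP0e hP0eP
  rw [← hP0, ← he, hsym.s12 e, hsym.s12 e] at hW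
  obtain ⟨d, hd⟩ : ∃ d, d = T a P0 P0 (Pi.single i 1) • (Pi.single j 1 : Fin 4 → K) -
    T a P0 P0 (Pi.single j 1) • (Pi.single i 1 : Fin 4 → K) := ⟨_, rfl⟩
  have hP0d : T a P0 P0 d = 0 := by
    rw [hd, T_sub3, T_smul3, T_smul3]; ring
  have hm : T a P0 e d ≠ 0 := by
    rw [hd, T_sub3, T_smul3, T_smul3]
    intro h0
    apply hW
    linear_combination 2 * h0
  obtain ⟨d2, hd2, hA2, hm2⟩ : ∃ d2, T a P0 P0 d2 = 0 ∧ T a P0 d2 d2 ≠ 0 ∧ T a P0 e d2 ≠ 0 := by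
    by_cases hA : T a P0 d d = 0
    · by_cases hB : T a P0 e e = 0
      · refine ⟨d + e, ?_, ?_, ?_⟩
        · rw [T_add3, hP0d, hP0e, add_zero]
        · rw [T_add3, T_add2, T_add2, hA, hB, hsym.s23 P0 d e]
          intro h0
          have : 2 * T a P0 e d = 0 := by linear_combination h0
          simp [hm] at this
        · rw [T_add3, hB, add_zero]; exact hm
      · refine ⟨d + (T a P0 e d / T a P0 e e) • e, ?_, ?_, ?_⟩
        · rw [T_add3, T_smul3, hP0d, hP0e]; simp
        · rw [T_add3, T_add2, T_smul3, T_add2, T_smul2, T_smul2, hA, hsym.s23 P0 d e]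
          intro h0
          have : 3 * (T a P0 e d) ^ 2 = 0 := by
            field_simp at h0
            linear_combination h0
          simp [hm] at this
        · rw [T_add3, T_smul3]
          field_simp
          intro h0
          have : 2 * T a P0 e d = 0 := by linear_combination h0
          simp [hm] at this
    · exact ⟨d, hP0d, hA, hm⟩
  obtain ⟨Q0, hQ0⟩ : ∃ Q0, Q0 = T a d2 d2 d2 • P0 + (-(3 * T a P0 d2 d2)) • d2 := ⟨_, rfl⟩
  have hQ0S : T a Q0 Q0 Q0 = 0 := by
    rw [hQ0]; exact tangent_mem hsym hP0S hd2
  have hPPQ : T a P0 P0 Q0 = 0 := by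
    rw [hQ0, T_add3, T_smul3, T_smul3, hP0S, hd2]; simp
  have hPeQ : T a P0 e Q0 ≠ 0 := by
    rw [hQ0, T_add3, T_smul3, T_smul3, hP0eP]
    simp [hA2, hm2]
  have hQ00 : Q0 ≠ 0 := by
    rintro h0; rw [h0, T_zero3] at hPeQ; exact hPeQ rfl
  refine ⟨R, Q0, hR, hRS, hQ00, hQ0S, ?_⟩
  have hV : {z : (Fin 4 → K) × K | T a R (ev D z.2) (ev D z.2) ≠ 0 ∧
      T a (ev P z.2) (ev P' z.2) z.1 ≠ 0} ∈ 𝓝 (Q0, t0) := by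
    have c1 := (continuous_ev D).comp (continuous_snd (X := Fin 4 → K) (Y := K))
    have c2 := (continuous_ev P).comp (continuous_snd (X := Fin 4 → K) (Y := K))
    have c3 := (continuous_ev P').comp (continuous_snd (X := Fin 4 → K) (Y := K))
    apply (IsOpen.inter (isOpen_ne_fun (continuous_T (a := a) continuous_const c1 c1)
      continuous_const) (isOpen_ne_fun (continuous_T (a := a) c2 c3 continuous_fst)
      continuous_const)).mem_nhds
    refine ⟨hqt0, ?_⟩
    show T a (ev P t0) (ev P' t0) Q0 ≠ 0
    rwa [← hP0, ← he]
  have hi := ift (fun z : (Fin 4 → K) × K => T a (ev P z.2) (ev P z.2) z.1) Q0 t0 (by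
      unfold T ev
      have h1 : ∀ i, AnalyticAt K (fun z : (Fin 4 → K) × K => (P i).eval z.2) (Q0, t0) :=
        fun i => analyticAt_snd.aeval_polynomial (P i)
      have h2 : ∀ i, AnalyticAt K (fun z : (Fin 4 → K) × K => z.1 i) (Q0, t0) := fun i =>
        ((ContinuousLinearMap.proj (R := K) (φ := fun _ : Fin 4 => K) i).comp
          (ContinuousLinearMap.fst K (Fin 4 → K) K)).analyticAt _
      refine Finset.analyticAt_fun_sum _ fun i _ => Finset.analyticAt_fun_sum _ fun j _ =>
        Finset.analyticAt_fun_sum _ fun k _ => ?_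
      exact ((analyticAt_const.mul (h1 i)).mul (h1 j)).mul (h2 k))
    (by show T a (ev P t0) (ev P t0) Q0 = 0
        rw [← hP0, hPPQ]) _ (hN' Q0 t0) (by rw [← hP0, ← he]; simp [hPeQ]) hV
  filter_upwards [hi] with Q hQ hQS
  obtain ⟨t, ⟨hqt, hPPt⟩, hPQ⟩ := hQ
  refine ⟨ev D t, hD t, hqt, ?_, ?_⟩
  · rw [← hP]; exact hPQ
  · rw [← hP, LinearIndependent.pair_iff]
    intro x y hxy
    have h1 : T a (ev P t) (ev P' t) (x • ev P t + y • Q) = 0 := by rw [hxy, T_zero3]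
    rw [T_add3, T_smul3, T_smul3, hPP'P, mul_zero, zero_add] at h1
    have hy := (mul_eq_zero.1 h1).resolve_right hPPt
    refine ⟨?_, hy⟩
    rw [hy, zero_smul, add_zero] at hxy
    refine (smul_eq_zero.1 hxy).resolve_right ?_
    intro h0
    rw [h0, T_zero1] at hPPt
    exact hPPt rfl

open CubicSurf

lemma exists_const {F : MvPolynomial (Fin 4) K} (hF : F.IsHomogeneous 3)
    (hs : SmoothT (coef F)) {h : HS F} (hh : IsH F h) {O : Fin 4 → K} (hO : O ≠ 0)
    (hOS : T (coef F) O O O = 0) :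
    ∃ Q0 : Fin 4 → K, Q0 ≠ 0 ∧ T (coef F) Q0 Q0 Q0 = 0 ∧ ∃ κ : HS F,
      ∀ᶠ Q in 𝓝 Q0, T (coef F) Q Q Q = 0 → cls hF Q = κ := by
  have hsym := coef_sym F
  obtain ⟨R, Q0, hR, hRS, hQ0, hQ0S, hev⟩ := step2 hsym hs hO hOS
  refine ⟨Q0, hQ0, hQ0S, h - 2 • (h - 2 • cls hF R), ?_⟩
  filter_upwards [hev] with Q hQ hQS
  obtain ⟨d, hd, hq, hPQ, hli⟩ := hQ hQS
  have hRd : LinearIndependent K ![R, d] := by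
    apply li_of_notMem hR
    rw [Submodule.mem_span_singleton]
    rintro ⟨c, rfl⟩
    apply hq
    rw [T_smul2, T_smul3, hRS]; simp
  have h1 := rel_tangent hF hh hRd hRS hd hq
  have h2 := rel_gamma hF hh hli (tangent_mem hsym hRS hd) hQS hPQ
  rw [eq_sub_of_add_eq' h2, eq_sub_of_add_eq' h1]

end ana
end CubicAux

set_option linter.unusedSectionVars false
set_option linter.unusedSimpArgs false
namespace CubicAux

section trans

variable {K : Type*} [NontriviallyNormedField K] [CompleteSpace K] [CharZero K]
  {a : Fin 4 → Fin 4 → Fin 4 → K}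

open Topology Filter CubicSurf

lemma secant_mem (hsym : Sym3 a) {u v : Fin 4 → K} (hu : T a u u u = 0) (hv : T a v v v = 0) :
    T a (T a u v v • u + (-T a u u v) • v) (T a u v v • u + (-T a u u v) • v)
      (T a u v v • u + (-T a u u v) • v) = 0 := by
  rw [T_cube hsym, hu, hv]; ring

lemma curve_through (hsym : Sym3 a) {B0 d n : Fin 4 → K} (hB : T a B0 B0 B0 = 0)
    (hn : T a B0 B0 n ≠ 0) {U : Set (Fin 4 → K)} (hU : U ∈ 𝓝 B0) :
    ∀ᶠ s in 𝓝 (0 : K), ∃ w : K, B0 + s • d + w • n ∈ U ∧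
      T a (B0 + s • d + w • n) (B0 + s • d + w • n) (B0 + s • d + w • n) = 0 := by
  have hc : Continuous fun z : K × K => B0 + z.1 • d + z.2 • n := by fun_prop
  have hV : {z : K × K | B0 + z.1 • d + z.2 • n ∈ U} ∈ 𝓝 ((0 : K), (0 : K)) := by
    apply hc.continuousAt
    simpa using hU
  refine ift (fun z : K × K => T a (B0 + z.1 • d + z.2 • n) (B0 + z.1 • d + z.2 • n)
    (B0 + z.1 • d + z.2 • n)) (0 : K) (0 : K) ?_ ?_ (3 * T a B0 B0 n) ?_ (by simp [hn]) hV
  · unfold T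
    have h1 : ∀ i, AnalyticAt K (fun z : K × K => (B0 + z.1 • d + z.2 • n) i) (0, 0) := by
      intro i
      exact (analyticAt_const.add (analyticAt_fst.mul analyticAt_const)).add
        (analyticAt_snd.mul analyticAt_const)
    refine Finset.analyticAt_fun_sum _ fun i _ => Finset.analyticAt_fun_sum _ fun j _ =>
        Finset.analyticAt_fun_sum _ fun k _ => ?_
    exact ((analyticAt_const.mul (h1 i)).mul (h1 j)).mul (h1 k)
  · simp [hB]
  · have h1 : (fun t : K => T a (B0 + (0 : K) • d + t • n) (B0 + (0 : K) • d + t • n)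
        (B0 + (0 : K) • d + t • n)) = fun t => t * (3 * T a B0 B0 n) +
          t ^ 2 * (3 * T a B0 n n + t * T a n n n) := by
      funext t
      have := T_cube hsym 1 t B0 n
      rw [one_smul] at this
      rw [zero_smul, add_zero, this, hB]; ring
    simp only [h1]
    have h2 : HasDerivAt (fun t : K => t ^ 2 * (3 * T a B0 n n + t * T a n n n)) 0 0 := by
      have := (hasDerivAt_pow 2 (0 : K)).mul
        (((hasDerivAt_id (0 : K)).mul_const (T a n n n)).const_add (3 * T a B0 n n))
      have h5 : (((2 : ℕ) : K) * 0 ^ (2 - 1) * (3 * T a B0 n n + id 0 * T a n n n)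
          + 0 ^ 2 * (1 * T a n n n)) = 0 := by norm_num
      rw [h5] at this
      exact this
    have h3 := ((hasDerivAt_id (0 : K)).mul_const (3 * T a B0 B0 n)).add h2
    rw [one_mul, add_zero] at h3
    exact h3

lemma find_B (hsym : Sym3 a) (hs : SmoothT a) {B0 Q0 : Fin 4 → K} (hB0 : B0 ≠ 0)
    (hB : T a B0 B0 B0 = 0) (hQ0 : Q0 ≠ 0) {U : Set (Fin 4 → K)} (hU : U ∈ 𝓝 B0) :
    ∃ B ∈ U, T a B B B = 0 ∧ T a Q0 Q0 B ≠ 0 := by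
  by_cases hl : T a Q0 Q0 B0 = 0
  swap
  · exact ⟨B0, mem_of_mem_nhds hU, hB, hl⟩
  have exQ : ∃ d, T a Q0 Q0 d ≠ 0 := by
    by_contra! hall
    exact hQ0 (smoothK hs _ hall)
  have exB : ∃ d, T a B0 B0 d ≠ 0 := by
    by_contra! hall
    exact hB0 (smoothK hs _ hall)
  by_cases hcase : ∃ n, T a B0 B0 n ≠ 0 ∧ T a Q0 Q0 n = 0
  · obtain ⟨n, hn, hln⟩ := hcase
    obtain ⟨d, hd⟩ := exQ
    obtain ⟨s, ⟨w, hw, hwS⟩, hs0⟩ := (((curve_through (d := d) hsym hB hn hU).filter_mono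
      nhdsWithin_le_nhds).and (self_mem_nhdsWithin (s := {(0 : K)}ᶜ))).exists
    refine ⟨_, hw, hwS, ?_⟩
    rw [T_add3, T_add3, T_smul3, T_smul3, hl, hln]
    have hs0 : s ≠ 0 := hs0
    simp [hs0, hd]
  · push Not at hcase
    obtain ⟨n, hn⟩ := exB
    have hln : T a Q0 Q0 n ≠ 0 := hcase n hn
    obtain ⟨d, hld, hd⟩ := plane_not hsym hs (Tlin a Q0 Q0) (by
      intro h0
      exact hln (congrArg (fun f => f n) h0))
    have hld : T a Q0 Q0 d = 0 := hld
    have hNd : T a B0 B0 d = 0 := by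
      by_contra h; exact hcase d h hld
    have hne : ∀ᶠ s in 𝓝[≠] (0 : K), 3 * T a B0 d d + s * T a d d d ≠ 0 := by
      by_cases h0 : T a B0 d d = 0
      · filter_upwards [self_mem_nhdsWithin] with s hs0
        have hs0 : s ≠ 0 := hs0
        simp [h0, hs0, hd]
      · apply Filter.Eventually.filter_mono nhdsWithin_le_nhds
        have hc : Continuous fun s : K => 3 * T a B0 d d + s * T a d d d := by fun_prop
        exact (isOpen_ne_fun hc continuous_const).mem_nhds (by simp [h0])
    obtain ⟨s, ⟨⟨w, hw, hwS⟩, hs0⟩, hs1⟩ := ((((curve_through (d := d) hsym hB hn hU).filter_mono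
      nhdsWithin_le_nhds).and (self_mem_nhdsWithin (s := {(0 : K)}ᶜ))).and hne).exists
    have hs0 : s ≠ 0 := hs0
    refine ⟨_, hw, hwS, ?_⟩
    rw [T_add3, T_add3, T_smul3, T_smul3, hl, hld]
    have hw0 : w ≠ 0 := by
      rintro rfl
      have := T_cube hsym 1 s B0 d
      rw [one_smul] at this
      rw [zero_smul, add_zero, this, hB, hNd] at hwS
      have h3 : s ^ 2 * (3 * T a B0 d d + s * T a d d d) = 0 := by linear_combination hwS
      simp [hs0, hs1] at h3
    simp [hw0, hln]

lemma transport {F : MvPolynomial (Fin 4) K} (hF : F.IsHomogeneous 3)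
    (hs : SmoothT (coef F)) {h : HS F} (hh : IsH F h) {B0 Q0 : Fin 4 → K} (hB0 : B0 ≠ 0)
    (hB0S : T (coef F) B0 B0 B0 = 0) (hQ0 : Q0 ≠ 0) (hQ0S : T (coef F) Q0 Q0 Q0 = 0)
    {κ : HS F} (hκ : ∀ᶠ Q in 𝓝 B0, T (coef F) Q Q Q = 0 → cls hF Q = κ) :
    ∃ κ' : HS F, ∀ᶠ Q in 𝓝 Q0, T (coef F) Q Q Q = 0 → cls hF Q = κ' := by
  have hsym := coef_sym F
  obtain ⟨B, hBU, hBS, hα⟩ := find_B hsym hs hB0 hB0S hQ0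
    (eventually_eventually_nhds.2 hκ)
  have hBU : ∀ᶠ Q in 𝓝 B, T (coef F) Q Q Q = 0 → cls hF Q = κ := hBU
  set a := coef F with ha
  obtain ⟨α, hα'⟩ : ∃ α, α = T a Q0 Q0 B := ⟨_, rfl⟩
  obtain ⟨A, hA⟩ : ∃ A, A = T a Q0 B B • Q0 + (-T a Q0 Q0 B) • B := ⟨_, rfl⟩
  have hAS : T a A A A = 0 := by rw [hA]; exact secant_mem hsym hQ0S hBS
  have hAQQ : T a A Q0 Q0 = -α ^ 2 := by
    rw [hA, T_add1, T_smul1, T_smul1, hQ0S, hsym.s12 B Q0 Q0, hsym.s23 Q0 B Q0, ← hα']; ring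
  have hAAQ : T a A A Q0 = - α ^ 2 * T a Q0 B B := by
    nth_rw 1 [hA]
    rw [T_add1, T_smul1, T_smul1, hsym.s12 Q0 A, hAQQ, hsym.s12 B A, hA]
    rw [T_add1, T_smul1, T_smul1, hsym.s23 Q0 B Q0, hsym.s23 B B Q0, hsym.s12 B Q0 B, ← hα']; ring
  rw [← hα'] at hα
  let G : (Fin 4 → K) → (Fin 4 → K) := fun Q =>
    (α ^ 3)⁻¹ • (T a A Q Q • A + (-T a A A Q) • Q)
  have c1 : Continuous fun Q : Fin 4 → K => T a A Q Q :=
    continuous_T continuous_const continuous_id continuous_id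
  have c2 : Continuous fun Q : Fin 4 → K => T a A A Q :=
    continuous_T continuous_const continuous_const continuous_id
  have hG : Continuous G := by
    have c3 : Continuous fun Q : Fin 4 → K => T a A Q Q • A := c1.smul continuous_const
    have c4 : Continuous fun Q : Fin 4 → K => (-T a A A Q) • Q := c2.neg.smul continuous_id
    exact (c3.add c4).const_smul (α ^ 3)⁻¹
  have hG0 : G Q0 = B := by
    simp only [G, hAQQ, hAAQ]
    rw [hA, ← hα']
    ext i
    simp
    field_simp
    ring
  have ev1 : ∀ᶠ Q in 𝓝 Q0, T a (G Q) (G Q) (G Q) = 0 → cls hF (G Q) = κ := by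
    have h0 : Tendsto G (𝓝 Q0) (𝓝 B) := hG0 ▸ hG.tendsto Q0
    exact h0.eventually hBU
  have ev2 : ∀ᶠ Q in 𝓝 Q0, T a A Q Q ≠ 0 :=
    (isOpen_ne_fun c1 continuous_const).mem_nhds (by simp [hAQQ, hα])
  refine ⟨h - cls hF A - κ, ?_⟩
  filter_upwards [ev1, ev2] with Q h1 h2 hQS
  have hα3 : (α ^ 3)⁻¹ ≠ 0 := inv_ne_zero (pow_ne_zero 3 hα)
  have hli : LinearIndependent K ![A, Q] := by
    rw [LinearIndependent.pair_iff]
    intro x y hxy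
    have h3 : T a (x • A + y • Q) Q Q = 0 := by rw [hxy, T_zero1]
    rw [T_add1, T_smul1, T_smul1, hQS, mul_zero, add_zero] at h3
    have hx := (mul_eq_zero.1 h3).resolve_right h2
    refine ⟨hx, ?_⟩
    rw [hx, zero_smul, zero_add] at hxy
    refine (smul_eq_zero.1 hxy).resolve_right ?_
    intro h0
    rw [h0, T_zero2] at h2
    exact h2 rfl
  have hr := rel_secant hF hh hli hAS hQS (Or.inr h2)
  have h4 : cls hF (G Q) = κ := h1 (by
    simp only [G]
    rw [T_smul1, T_smul2, T_smul3, secant_mem hsym hAS hQS]; simp)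
  simp only [G] at h4
  rw [cls_smul hF hα3] at h4
  rw [h4] at hr
  rw [← hr]; abel

end trans
end CubicAux

set_option linter.unusedSectionVars false
set_option linter.unusedSimpArgs false
namespace CubicAux

section grp

variable {K : Type*} [Field K] [CharZero K] {F : MvPolynomial (Fin 4) K}

open CubicSurf

lemma smoothT_coef (hF : SmoothCubic F) : SmoothT (coef F) := by
  intro v hv
  have hsym := (coef_sym F).map (algebraMap K (AlgebraicClosure K))
  apply hF.2 v
  · rw [eval_map_eq hF.1]
    exact hv v
  · intro i
    rw [eval_pderiv hF.1, hsym.s12, hsym.s23]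
    erw [hv]
    simp

lemma finite_H0 (hF : F.IsHomogeneous 3) (hfin : (Set.range (HClass F)).Finite) :
    Finite (H0 F) := by
  obtain ⟨h, hh⟩ := exists_h F
  rcases isEmpty_or_nonempty (zeroSet F) with hemp | ⟨⟨P0⟩⟩
  · have hsub : ∀ x : GS F, x = 0 := by
      intro x
      induction x using FreeAbelianGroup.induction_on with
      | zero => rfl
      | of P => exact hemp.elim P
      | neg P => exact hemp.elim P
      | add x y hx hy => rw [hx, hy, add_zero]
    have : Subsingleton (HS F) := by
      constructor
      intro x y
      obtain ⟨x, rfl⟩ := QuotientAddGroup.mk_surjective x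
      obtain ⟨y, rfl⟩ := QuotientAddGroup.mk_surjective y
      rw [hsub x, hsub y]
    infer_instance
  · have key : ∀ P Q : zeroSet F, ∃ R, HClass F R - HClass F P0 =
        (HClass F P - HClass F P0) - (HClass F Q - HClass F P0) := by
      intro P Q
      obtain ⟨R1, h1⟩ := exists_third hF hh P P0
      obtain ⟨R2, h2⟩ := exists_third hF hh P0 P0
      obtain ⟨R, h3⟩ := exists_third hF hh R1 Q
      refine ⟨R, ?_⟩
      have e1 : HClass F R1 = h - HClass F P - HClass F P0 := by rw [← h1]; abel
      have e3 : HClass F R = h - HClass F R1 - HClass F Q := by rw [← h3]; abel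
      rw [e3, e1]; abel
    let A : AddSubgroup (HS F) := AddSubgroup.ofSub
      (Set.range fun P => HClass F P - HClass F P0) ⟨_, P0, rfl⟩ (by
        rintro _ ⟨P, rfl⟩ _ ⟨Q, rfl⟩
        obtain ⟨R, hR⟩ := key P Q
        exact ⟨R, by simpa [sub_eq_add_neg] using hR⟩)
    have hA : ∀ x : GS F, (QuotientAddGroup.mk' (Gpp F) x) -
        (HdegHom F (QuotientAddGroup.mk' (Gpp F) x)) • HClass F P0 ∈ A := by
      have hof : ∀ P : zeroSet F, HClass F P - (HdegHom F (HClass F P)) • HClass F P0 ∈ A := by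
        intro P
        rw [HdegHom_HClass, one_smul]
        exact ⟨P, rfl⟩
      intro x
      induction x using FreeAbelianGroup.induction_on with
      | zero => rw [map_zero, map_zero, zero_smul, sub_zero]; exact A.zero_mem
      | of P => exact hof P
      | neg P hP =>
        rw [map_neg, map_neg, neg_smul, ← neg_sub']
        exact A.neg_mem hP
      | add x y hx hy =>
        rw [map_add, map_add, add_smul, add_sub_add_comm]
        exact A.add_mem hx hy
    have hAf : (A : Set (HS F)).Finite := by
      have : (A : Set (HS F)) = (fun x => x - HClass F P0) '' Set.range (HClass F) := by
        rw [← Set.range_comp]; rfl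
      rw [this]
      exact hfin.image _
    refine (hAf.subset ?_).to_subtype
    intro x hx
    obtain ⟨y, rfl⟩ := QuotientAddGroup.mk'_surjective _ x
    have h1 := hA y
    have hx : HdegHom F (QuotientAddGroup.mk' (Gpp F) y) = 0 := hx
    rw [hx, zero_smul, sub_zero] at h1
    exact h1

end grp

section top

variable {K : Type*} [NontriviallyNormedField K] [ProperSpace K] [CharZero K]
  {F : MvPolynomial (Fin 4) K}

open Topology Filter CubicSurf

lemma loc_const (hF : SmoothCubic F) {Q0 : Fin 4 → K} (hQ0 : Q0 ≠ 0)
    (hQ0S : T (coef F) Q0 Q0 Q0 = 0) :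
    ∃ κ : HS F, ∀ᶠ Q in 𝓝 Q0, T (coef F) Q Q Q = 0 → cls hF.1 Q = κ := by
  obtain ⟨h, hh⟩ := exists_h F
  have hs := smoothT_coef hF
  obtain ⟨B0, hB0, hB0S, κ, hκ⟩ := exists_const hF.1 hs hh hQ0 hQ0S
  exact transport hF.1 hs hh hB0 hB0S hQ0 hQ0S hκ

lemma continuous_cube : Continuous fun v : Fin 4 → K => T (coef F) v v v :=
  continuous_T continuous_id continuous_id continuous_id

lemma finite_range (hF : SmoothCubic F) : (Set.range (HClass F)).Finite := by
  have hc : IsCompact (Metric.sphere (0 : Fin 4 → K) 1 ∩ {v | T (coef F) v v v = 0}) :=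
    (isCompact_sphere _ _).inter_right (isClosed_eq continuous_cube continuous_const)
  have hfin : (cls hF.1 '' ((Metric.sphere (0 : Fin 4 → K) 1 ∩ {v | T (coef F) v v v = 0}) ∩
      {v | T (coef F) v v v = 0})).Finite := by
    refine hc.induction_on (p := fun s => (cls hF.1 '' (s ∩ {v | T (coef F) v v v = 0})).Finite)
      (by simp) ?_ ?_ ?_
    · intro s t hst ht
      exact ht.subset (Set.image_mono (Set.inter_subset_inter_left _ hst))
    · intro s t hs ht
      rw [Set.union_inter_distrib_right, Set.image_union]
      exact hs.union ht
    · rintro x ⟨hx1, hx⟩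
      have hx0 : x ≠ 0 := by rintro rfl; simp at hx1
      obtain ⟨κ, hκ⟩ := loc_const hF hx0 hx
      refine ⟨_, mem_nhdsWithin_of_mem_nhds hκ, (Set.finite_singleton κ).subset ?_⟩
      rintro _ ⟨y, ⟨hy1, hy2⟩, rfl⟩
      exact hy1 hy2
  refine hfin.subset ?_
  rintro _ ⟨P, rfl⟩
  have hP := zeroSet_rep hF.1 P
  have hP0 := P.1.rep_nonzero
  obtain ⟨i, hi⟩ : ∃ i, ‖P.1.rep i‖ = ‖P.1.rep‖ := by
    by_contra! hne
    have : ‖P.1.rep‖ < ‖P.1.rep‖ := by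
      rw [pi_norm_lt_iff (norm_pos_iff.2 hP0)]
      intro i
      exact lt_of_le_of_ne (norm_le_pi_norm _ i) (hne i)
    exact lt_irrefl _ this
  have hn : ‖P.1.rep‖ ≠ 0 := norm_ne_zero_iff.2 hP0
  have hi0 : P.1.rep i ≠ 0 := by
    rw [← norm_ne_zero_iff, hi]; exact hn
  have hS : T (coef F) ((P.1.rep i)⁻¹ • P.1.rep) ((P.1.rep i)⁻¹ • P.1.rep)
      ((P.1.rep i)⁻¹ • P.1.rep) = 0 := by
    rw [T_smul1, T_smul2, T_smul3, hP]; simp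
  refine ⟨(P.1.rep i)⁻¹ • P.1.rep, ⟨⟨?_, hS⟩, hS⟩, ?_⟩
  · rw [mem_sphere_zero_iff_norm, norm_smul, norm_inv, hi, inv_mul_cancel₀ hn]
  · rw [cls_smul hF.1 (inv_ne_zero hi0), ← cls_rep]

lemma locConst (hF : SmoothCubic F) :
    @IsLocallyConstant _ _ (surfTop F) (fun P : zeroSet F => HClass F P) := by
  intro s
  refine (@isOpen_induced_iff _ _ (projTop K 4) _ _).2 ⟨{P | ∀ hP : P ∈ zeroSet F, HClass F ⟨P, hP⟩ ∈ s}, ?_, ?_⟩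
  · refine isOpen_coinduced.2 ?_
    rw [isOpen_iff_mem_nhds]
    rintro ⟨v, hv⟩ hvs
    rw [nhds_subtype_eq_comap]
    by_cases hT : T (coef F) v v v = 0
    · obtain ⟨κ, hκ⟩ := loc_const hF hv hT
      refine ⟨_, hκ, ?_⟩
      have hm : Projectivization.mk K v hv ∈ zeroSet F :=
        mk_mem_zeroSet hF.1 hv (by rw [eval_eq hF.1, hT])
      have hks : κ ∈ s := by
        have h1 : cls hF.1 v = κ := hκ.self_of_nhds hT
        rw [← h1, cls_eq hF.1 hv hm hT]
        exact hvs hm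
      rintro ⟨w, hw⟩ hw1 hmw
      have hw1 : T (coef F) w w w = 0 → cls hF.1 w = κ := hw1
      have hTw : T (coef F) w w w = 0 := by
        obtain ⟨c, hc⟩ := Projectivization.exists_smul_eq_mk_rep K w hw
        have h2 := zeroSet_rep hF.1 ⟨_, hmw⟩
        simp only at h2
        rw [← hc, Units.smul_def, T_smul1, T_smul2, T_smul3] at h2
        simpa using h2
      rw [← cls_eq hF.1 hw hmw hTw, hw1 hTw]
      exact hks
    · refine ⟨{w | T (coef F) w w w ≠ 0}, (isOpen_ne_fun continuous_cube
        continuous_const).mem_nhds hT, ?_⟩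
      rintro ⟨w, hw⟩ hw1 hmw
      exfalso
      apply hw1
      obtain ⟨c, hc⟩ := Projectivization.exists_smul_eq_mk_rep K w hw
      have h2 := zeroSet_rep hF.1 ⟨_, hmw⟩
      simp only at h2
      rw [← hc, Units.smul_def, T_smul1, T_smul2, T_smul3] at h2
      simpa using h2
  · ext P
    simp only [Set.mem_preimage, Set.mem_ofPred_eq]
    exact ⟨fun h => h P.2, fun h _ => h⟩

theorem main_normed (hF : SmoothCubic F) : Finite (H0 F) ∧
    @IsLocallyConstant _ _ (surfTop F) (fun P : zeroSet F => HClass F P) :=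
  ⟨finite_H0 hF.1 (finite_range hF), locConst hF⟩

end top
end CubicAux

namespace CubicAux

section fin

open CubicSurf

lemma transfer {K : Type*} [i : Field K] [τ : TopologicalSpace K] (N : NontriviallyNormedField K)
    (hf : N.toNormedField.toField = i)
    (ht : N.toNormedField.toMetricSpace.toPseudoMetricSpace.toUniformSpace.toTopologicalSpace = τ)
    (hc : CharZero K) (hl : LocallyCompactSpace K)
    (F : MvPolynomial (Fin 4) K) (hF : SmoothCubic F) :
    Finite (H0 F) ∧
    @IsLocallyConstant _ _ (surfTop F) (fun P : zeroSet F => HClass F P) := by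
  subst hf
  subst ht
  haveI : ProperSpace K := ProperSpace.of_locallyCompactSpace K
  exact main_normed hF

lemma transfer_equiv {K L : Type*} [Field K] [TopologicalSpace K] [NontriviallyNormedField L]
    [CharZero L] [LocallyCompactSpace L] (e : K ≃+* L) (he : IsHomeomorph e)
    (F : MvPolynomial (Fin 4) K) (hF : SmoothCubic F) :
    Finite (H0 F) ∧
    @IsLocallyConstant _ _ (surfTop F) (fun P : zeroSet F => HClass F P) := by
  let N0 : NormedField K := NormedField.induced K L e e.injective
  let N : NontriviallyNormedField K := { N0 with
    non_trivial := by
      obtain ⟨x, hx⟩ := NontriviallyNormedField.non_trivial (α := L)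
      refine ⟨e.symm x, ?_⟩
      change 1 < ‖e (e.symm x)‖
      rwa [e.apply_symm_apply] }
  refine transfer N rfl ?_ (charZero_of_injective_ringHom (f := e.symm.toRingHom) e.symm.injective)
    he.isClosedEmbedding.locallyCompactSpace F hF
  rw [he.isInducing.eq_induced]
  rfl

lemma spectral_top {K : Type*} [Field K] (p : ℕ) [Fact p.Prime] [Algebra ℚ_[p] K]
    [FiniteDimensional ℚ_[p] K] (m : ℕ) (L : K ≃ₗ[ℚ_[p]] (Fin m → ℚ_[p])) :
    (spectralNorm.normedField ℚ_[p] K).toMetricSpace.toPseudoMetricSpace.toUniformSpace.toTopologicalSpace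
      = TopologicalSpace.induced L inferInstance := by
  let _ : NormedField K := spectralNorm.normedField ℚ_[p] K
  let _ : NormedSpace ℚ_[p] K := spectralNorm.normedSpace ℚ_[p] K
  exact L.toContinuousLinearEquiv.toHomeomorph.isInducing.eq_induced

lemma transfer_padic {K : Type*} [Field K] [TopologicalSpace K] (p : ℕ) [Fact p.Prime]
    (f : ℚ_[p] →+* K) (m : ℕ) (e : K ≃+ (Fin m → ℚ_[p]))
    (hfe : ∀ (c : ℚ_[p]) (x : K), e (f c * x) = c • e x) (he : IsHomeomorph e)
    (F : MvPolynomial (Fin 4) K) (hF : SmoothCubic F) :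
    Finite (H0 F) ∧
    @IsLocallyConstant _ _ (surfTop F) (fun P : zeroSet F => HClass F P) := by
  letI : Algebra ℚ_[p] K := f.toAlgebra
  let L : K ≃ₗ[ℚ_[p]] (Fin m → ℚ_[p]) := { e with
    map_smul' := fun c x => hfe c x }
  haveI : FiniteDimensional ℚ_[p] K := Module.Finite.equiv L.symm
  let N : NontriviallyNormedField K := spectralNorm.nontriviallyNormedField ℚ_[p] K
  refine transfer N rfl ?_ (charZero_of_injective_ringHom f.injective)
    he.isClosedEmbedding.locallyCompactSpace F hF
  rw [he.isInducing.eq_induced]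
  exact spectral_top p m L

end fin
end CubicAux

open CubicSurf MvPolynomial in
/-- Let `K` be a local field (`ℝ`, `ℂ`, or a finite extension of
`ℚ_p`), and let `S` be a smooth cubic surface over `K`. Then (i) `H⁰_S(K)` is finite,
and (ii) the map `S(K) → H_S(K)`, `P ↦ [P]`, is locally constant for the topology on
`S(K)` induced by that of `K`. -/
theorem H0_finite_and_class_map_locally_constant
    {K : Type*} [Field K] [TopologicalSpace K] (hK : IsLocalField K)
    (F : MvPolynomial (Fin 4) K) (hF : SmoothCubic F) :
    Finite (H0 F) ∧
    @IsLocallyConstant _ _ (surfTop F) (fun P : zeroSet F => HClass F P) := by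
  rcases hK with ⟨e, he⟩ | ⟨e, he⟩ | ⟨p, _, hp, f, m, e, hfe, he⟩
  · exact CubicAux.transfer_equiv e he F hF
  · exact CubicAux.transfer_equiv e he F hF
  · exact CubicAux.transfer_padic p f m e hfe he F hF
end
end

section
/- Let K be a local field (i.e. R, C, or a finite extension of Q_p) and let S be a smooth cubic surface in P^3 over K with S(K) ≠ ∅. Then there exists a non-empty subset W ⊆ S(K), open in the topology induced by K, such that [P_1] = [P_2] in H_S(K) for all P_1, P_2 ∈ W. -/
/- Common framework: points, lines, intersection divisors, the secant-tangent span,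
the groups `H_S(K)`, geometric notions over the algebraic closure, and topologies. -/

open MvPolynomial

noncomputable section

set_option linter.unusedSimpArgs false

namespace CubicSurf

/-- Simple roots of polynomials depend continuously on the coefficients. -/
def SimpleRootProp (K : Type*) [Field K] [TopologicalSpace K] : Prop :=
  ∀ (N : ℕ) (a₀ : Fin N → K) (t₀ : K), ∑ i : Fin N, a₀ i * t₀ ^ (i : ℕ) = 0 →
    ∑ i : Fin N, a₀ i * ((i : ℕ) * t₀ ^ ((i : ℕ) - 1)) ≠ 0 → ∀ U ∈ nhds t₀,
    ∀ᶠ a in nhds a₀, ∃ t ∈ U, ∑ i : Fin N, a i * t ^ (i : ℕ) = 0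

/-- The topological properties of local fields which are used. -/
structure GoodTop (K : Type*) [Field K] [TopologicalSpace K] : Prop where
  ring : IsTopologicalRing K
  t1 : T1Space K
  ne : (nhdsWithin (0 : K) {0}ᶜ).NeBot
  root : SimpleRootProp K
  char : CharZero K

theorem simpleRootProp_normed (L : Type*) [NontriviallyNormedField L] [CompleteSpace L] :
    SimpleRootProp L := by
  intro N a₀ t₀ h0 h1 U hU
  set D := ∑ i : Fin N, a₀ i * ((i : ℕ) * t₀ ^ ((i : ℕ) - 1)) with hD
  have hd : HasStrictFDerivAt (fun x : (Fin N → L) × L => (x.1, ∑ i : Fin N, x.1 i * x.2 ^ (i : ℕ)))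
      ((ContinuousLinearMap.fst L (Fin N → L) L).prod
        (∑ i : Fin N, (a₀ i • (((i : ℕ) * t₀ ^ ((i : ℕ) - 1)) • ContinuousLinearMap.snd L (Fin N → L) L)
          + (t₀ ^ (i : ℕ)) • ((ContinuousLinearMap.proj i).comp
            (ContinuousLinearMap.fst L (Fin N → L) L))))) (a₀, t₀) := by
    refine HasStrictFDerivAt.prodMk hasStrictFDerivAt_fst ?_
    refine HasStrictFDerivAt.fun_sum fun i _ => ?_
    refine HasStrictFDerivAt.mul (c := fun x : (Fin N → L) × L => x.1 i)
      (d := fun x : (Fin N → L) × L => x.2 ^ (i : ℕ)) (x := (a₀, t₀)) ?_ ?_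
    · exact ((ContinuousLinearMap.proj i).comp
            (ContinuousLinearMap.fst L (Fin N → L) L)).hasStrictFDerivAt
    · exact (hasStrictDerivAt_pow (i : ℕ) t₀).comp_hasStrictFDerivAt (a₀, t₀)
        hasStrictFDerivAt_snd
  have hs := hd.map_nhds_eq_of_surj (by
    rw [LinearMap.range_eq_top]
    rintro ⟨b, s⟩
    refine ⟨(b, (s - ∑ i : Fin N, t₀ ^ (i : ℕ) * b i) / D), ?_⟩
    simp only [ContinuousLinearMap.coe_coe, ContinuousLinearMap.prod_apply, ContinuousLinearMap.coe_fst', sum_apply,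
      add_apply, smul_apply, ContinuousLinearMap.coe_snd',
      ContinuousLinearMap.comp_apply, ContinuousLinearMap.proj_apply, smul_eq_mul,
      Finset.sum_add_distrib, ← mul_assoc]
    rw [← Finset.sum_mul]
    simp only [mul_assoc]
    rw [← hD, mul_div_cancel₀ _ h1]
    simp)
  have hm : {x : (Fin N → L) × L | x.2 ∈ U} ∈ nhds (a₀, t₀) := by
    exact continuous_snd.continuousAt.preimage_mem_nhds hU
  have hi := Filter.image_mem_map (m := fun x : (Fin N → L) × L => (x.1, ∑ i : Fin N, x.1 i * x.2 ^ (i : ℕ))) hm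
  rw [hs] at hi
  simp only [h0] at hi
  have hc : Filter.Tendsto (fun a : Fin N → L => (a, (0:L))) (nhds a₀) (nhds (a₀, 0)) :=
    (Continuous.prodMk continuous_id continuous_const).tendsto _
  filter_upwards [hc hi] with a ha
  obtain ⟨x, hx, hxe⟩ := ha
  simp only [Prod.mk.injEq] at hxe
  exact ⟨x.2, hx, by rw [← hxe.1]; exact hxe.2⟩

theorem goodTop_of_homeo {K L : Type*} [Field K] [TopologicalSpace K]
    [NontriviallyNormedField L] [CompleteSpace L] [CharZero L] (e : K ≃+* L)
    (he : IsHomeomorph e) : GoodTop K := by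
  have hind : Topology.IsInducing e := he.isInducing
  constructor
  · have hc := he.continuous
    have ha : ContinuousAdd K := ⟨hind.continuous_iff.2 (by
      simp only [Function.comp_def, map_add]; fun_prop)⟩
    have hm : ContinuousMul K := ⟨hind.continuous_iff.2 (by
      simp only [Function.comp_def, map_mul]; fun_prop)⟩
    have hn : ContinuousNeg K := ⟨hind.continuous_iff.2 (by
      simp only [Function.comp_def, map_neg]; fun_prop)⟩
    have : IsTopologicalSemiring K := {}
    exact {}
  · exact he.isEmbedding.t1Space
  · have h0 : (nhdsWithin (0 : L) {0}ᶜ).NeBot := inferInstance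
    have : nhdsWithin (0 : K) {0}ᶜ = Filter.comap e (nhdsWithin (0 : L) {0}ᶜ) := by
      rw [nhdsWithin, nhdsWithin, Filter.comap_inf, hind.nhds_eq_comap, map_zero, Filter.comap_principal]
      congr 2
      ext x; simp
    rw [this]
    exact h0.comap_of_surj e.surjective
  · intro N a₀ t₀ h0 h1 U hU
    have := simpleRootProp_normed L N (fun i => e (a₀ i)) (e t₀) (by
      simpa using congrArg e h0) (by
      intro h; apply h1; apply e.injective; simpa using h) (e '' U) (he.isOpenMap.image_mem_nhds hU)
    have hc : Continuous (fun a : Fin N → K => fun i => e (a i)) := by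
      have := he.continuous; fun_prop
    filter_upwards [hc.continuousAt.preimage_mem_nhds this] with a ha
    obtain ⟨_, ⟨t, ht, rfl⟩, h⟩ := ha
    exact ⟨t, ht, e.injective (by simpa using h)⟩
  · exact ⟨fun m n h => by
      have := congrArg e h
      simpa using this⟩

theorem exists_spectral {K : Type*} [Field K] (p : ℕ) [Fact p.Prime] [Algebra ℚ_[p] K]
    [FiniteDimensional ℚ_[p] K] (m : ℕ) (el : K ≃ₗ[ℚ_[p]] (Fin m → ℚ_[p])) :
    ∃ (i : NontriviallyNormedField K), i.toField = ‹Field K› ∧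
     @Topology.IsInducing K _
      i.toNormedField.toMetricSpace.toPseudoMetricSpace.toUniformSpace.toTopologicalSpace _ el ∧
     @CompleteSpace K i.toNormedField.toMetricSpace.toPseudoMetricSpace.toUniformSpace := by
  refine ⟨spectralNorm.nontriviallyNormedField ℚ_[p] K, rfl, ?_,
    spectralNorm.completeSpace ℚ_[p] K⟩
  let i1 := spectralNorm.nontriviallyNormedField ℚ_[p] K
  let : NormedSpace ℚ_[p] K := spectralNorm.normedSpace ℚ_[p] K
  exact el.toContinuousLinearEquiv.toHomeomorph.isInducing

theorem goodTop_padic {K : Type*} [Field K] [t : TopologicalSpace K] (p : ℕ) [Fact p.Prime]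
    (f : ℚ_[p] →+* K) (m : ℕ) (e : K ≃+ (Fin m → ℚ_[p]))
    (hl : ∀ (c : ℚ_[p]) (x : K), e (f c * x) = c • e x) (he : IsHomeomorph e) : GoodTop K := by
  let : Algebra ℚ_[p] K := f.toAlgebra
  let el : K ≃ₗ[ℚ_[p]] (Fin m → ℚ_[p]) := e.toLinearEquiv hl
  have : FiniteDimensional ℚ_[p] K := el.symm.finiteDimensional
  have : CharZero K := charZero_of_injective_algebraMap f.injective
  obtain ⟨i, hi, h1, hcomp⟩ := exists_spectral p m el
  have h2 : @Topology.IsInducing K _ t _ el := he.isInducing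
  have ht : i.toNormedField.toMetricSpace.toPseudoMetricSpace.toUniformSpace.toTopologicalSpace
      = t :=
    (@Topology.IsInducing.eq_induced _ _ (_) _ _ h1).trans
      (@Topology.IsInducing.eq_induced _ _ (_) _ _ h2).symm
  clear h1 h2 he
  subst hi
  subst ht
  exact goodTop_of_homeo (RingEquiv.refl K) (Homeomorph.refl K).isHomeomorph

theorem goodTop_of_isLocalField {K : Type*} [Field K] [TopologicalSpace K] (h : IsLocalField K) :
    GoodTop K := by
  rcases h with ⟨e, he⟩ | ⟨e, he⟩ | ⟨p, _, hp, f, m, e, hl, he⟩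
  · exact goodTop_of_homeo e he
  · exact goodTop_of_homeo e he
  · exact goodTop_padic p f m e hl he

open Polynomial in
theorem GoodTop.root_family {K : Type*} [Field K] [TopologicalSpace K] (h : GoodTop K)
    {Y : Type*} [TopologicalSpace Y] (p : Y → K[X]) (N : ℕ) (hN : ∀ y, (p y).natDegree < N)
    (y₀ : Y) (hc : ∀ i, ContinuousAt (fun y => (p y).coeff i) y₀) (t₀ : K)
    (h0 : (p y₀).eval t₀ = 0) (h1 : (derivative (p y₀)).eval t₀ ≠ 0) (U : Set K) (hU : U ∈ nhds t₀) :
    ∀ᶠ y in nhds y₀, ∃ t ∈ U, (p y).eval t = 0 := by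
  have := h.root N (fun i => (p y₀).coeff i) t₀ (by
    rw [← h0, eval_eq_sum_range' (hN y₀), Finset.sum_range]) (by
    intro h; apply h1; rw [← h]
    rw [derivative_eval, Polynomial.sum_over_range' _ _ N (hN y₀), Finset.sum_range]
    · refine Finset.sum_congr rfl fun i _ => ?_
      ring
    · simp) U hU
  have hc : ContinuousAt (fun y => fun i : Fin N => (p y).coeff i) y₀ :=
    continuousAt_pi.2 fun i => hc i
  filter_upwards [hc.preimage_mem_nhds this] with y hy
  obtain ⟨t, ht, h⟩ := hy
  exact ⟨t, ht, by rw [eval_eq_sum_range' (hN y), Finset.sum_range]; exact h⟩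

end CubicSurf

namespace CubicSurf

section euler
variable {K : Type*} [Field K]

theorem pderiv_comm' (i j : Fin 4) (F : MvPolynomial (Fin 4) K) :
    pderiv i (pderiv j F) = pderiv j (pderiv i F) := by
  have h : ⁅pderiv (R := K) i, pderiv j⁆ = (0 : Derivation K (MvPolynomial (Fin 4) K) (MvPolynomial (Fin 4) K)) := by
    apply MvPolynomial.derivation_ext
    intro k
    rw [Derivation.commutator_apply]
    simp [pderiv_X, Pi.single_apply, apply_ite]
  have := congrArg (fun D => D F) h
  rw [Derivation.commutator_apply] at this
  exact sub_eq_zero.1 this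

theorem exists_tensor [CharZero K] (F : MvPolynomial (Fin 4) K) (hF : F.IsHomogeneous 3) :
    ∃ A : Fin 4 → Fin 4 → Fin 4 → K, (∀ i j k, A i j k = A j i k) ∧ (∀ i j k, A i j k = A i k j) ∧
      F = ∑ i, ∑ j, ∑ k, C (A i j k) * (X i * X j * X k) := by
  let c : Fin 4 → Fin 4 → Fin 4 → K := fun i j k => coeff 0 (pderiv k (pderiv j (pderiv i F)))
  have h3 : ∀ i j k, pderiv k (pderiv j (pderiv i F)) = C (c i j k) := by
    intro i j k
    have : (pderiv k (pderiv j (pderiv i F))).IsHomogeneous 0 :=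
      (hF.pderiv.pderiv).pderiv
    have h := (MvPolynomial.totalDegree_zero_iff_isHomogeneous _).2 this
    exact totalDegree_eq_zero_iff_eq_C.1 h
  refine ⟨fun i j k => (6:K)⁻¹ * c i j k, ?_, ?_, ?_⟩
  · intro i j k; simp only [c]; rw [pderiv_comm' j i]
  · intro i j k; simp only [c]; rw [pderiv_comm' k j]
  · have e1 := hF.sum_X_mul_pderiv
    have e2 : ∀ i, ∑ j, X j * pderiv j (pderiv i F) = 2 • pderiv i F := fun i =>
      (hF.pderiv (i := i)).sum_X_mul_pderiv
    have e3 : ∀ i j, ∑ k, X k * C (c i j k) = 1 • pderiv j (pderiv i F) := fun i j => by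
      simp only [← h3]
      exact ((hF.pderiv (i := i)).pderiv (i := j)).sum_X_mul_pderiv
    have e6 : (6 : MvPolynomial (Fin 4) K) * F = ∑ i, ∑ j, ∑ k, C (c i j k) * (X i * X j * X k) := by
      have : (6 : MvPolynomial (Fin 4) K) * F = 2 • (3 • F) := by simp only [nsmul_eq_mul]; push_cast; ring
      rw [this, ← e1, Finset.smul_sum]
      refine Finset.sum_congr rfl fun i _ => ?_
      rw [← mul_smul_comm, ← e2, Finset.mul_sum]
      refine Finset.sum_congr rfl fun j _ => ?_
      have := e3 i j
      rw [one_smul] at this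
      rw [← this, Finset.mul_sum, Finset.mul_sum]
      refine Finset.sum_congr rfl fun k _ => ?_
      ring
    have h6 : (C (6:K)⁻¹ : MvPolynomial (Fin 4) K) * 6 = 1 := by
      have : (6 : MvPolynomial (Fin 4) K) = C 6 := (map_ofNat C 6).symm
      rw [this, ← C_mul, inv_mul_cancel₀ (by norm_num), C_1]
    calc F = C (6:K)⁻¹ * (6 * F) := by rw [← mul_assoc, h6, one_mul]
      _ = _ := by
        rw [e6]
        simp only [Finset.mul_sum, C_mul, mul_assoc]

/-- The cubic form of a tensor. -/
def cubicOf (A : Fin 4 → Fin 4 → Fin 4 → K) : MvPolynomial (Fin 4) K :=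
  ∑ i, ∑ j, ∑ k, C (A i j k) * (X i * X j * X k)

theorem eval_cubicOf (A : Fin 4 → Fin 4 → Fin 4 → K) (v : Fin 4 → K) :
    eval v (cubicOf A) = ∑ i, ∑ j, ∑ k, A i j k * (v i * v j * v k) := by
  simp [cubicOf]

theorem eval_pderiv_cubicOf (A : Fin 4 → Fin 4 → Fin 4 → K)
    (h1 : ∀ i j k, A i j k = A j i k) (h2 : ∀ i j k, A i j k = A i k j) (v : Fin 4 → K) (l : Fin 4) :
    eval v (pderiv l (cubicOf A)) = 3 * ∑ j, ∑ k, A l j k * (v j * v k) := by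
  have e1 : eval v (pderiv l (cubicOf A)) =
     ∑ i, ∑ j, ∑ k, A i j k * ((Pi.single l 1 : Fin 4 → K) i * v j * v k + v i * (Pi.single l 1 : Fin 4 → K) j * v k
       + v i * v j * (Pi.single l 1 : Fin 4 → K) k) := by
    simp only [cubicOf, map_sum, pderiv_C, zero_mul, pderiv_mul, pderiv_X, map_mul, map_add, eval_C, eval_X]
    refine Finset.sum_congr rfl fun i _ => Finset.sum_congr rfl fun j _ => Finset.sum_congr rfl fun k _ => ?_
    have t : ∀ m, eval v ((Pi.single l 1 : Fin 4 → MvPolynomial (Fin 4) K) m) = (Pi.single l 1 : Fin 4 → K) m := by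
      intro m; simp [Pi.single_apply, apply_ite]

    simp only [t, map_zero]
    ring
  rw [e1]
  simp only [mul_add, Finset.sum_add_distrib]
  have s1 : ∑ i, ∑ j, ∑ k, A i j k * ((Pi.single l 1 : Fin 4 → K) i * v j * v k) = ∑ j, ∑ k, A l j k * (v j * v k) := by
    rw [Finset.sum_eq_single l] <;> simp +contextual
  have s2 : ∑ i, ∑ j, ∑ k, A i j k * (v i * (Pi.single l 1 : Fin 4 → K) j * v k) = ∑ j, ∑ k, A l j k * (v j * v k) := by
    rw [Finset.sum_comm, ← s1]
    refine Finset.sum_congr rfl fun i _ => Finset.sum_congr rfl fun j _ => Finset.sum_congr rfl fun k _ => ?_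
    rw [h1]; ring
  have s3 : ∑ i, ∑ j, ∑ k, A i j k * (v i * v j * (Pi.single l 1 : Fin 4 → K) k) = ∑ j, ∑ k, A l j k * (v j * v k) := by
    rw [← s2]
    refine Finset.sum_congr rfl fun i _ => ?_
    rw [Finset.sum_comm]
    refine Finset.sum_congr rfl fun j _ => Finset.sum_congr rfl fun k _ => ?_
    rw [h2]; ring
  rw [s1, s2, s3]; ring

/-- The trilinear form of a tensor. -/
def triOf (A : Fin 4 → Fin 4 → Fin 4 → K) :
    (Fin 4 → K) →ₗ[K] (Fin 4 → K) →ₗ[K] (Fin 4 → K) →ₗ[K] K :=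
  ∑ i, ∑ j, ∑ k, (LinearMap.proj i).smulRight
    ((LinearMap.proj j).smulRight (A i j k • (LinearMap.proj k : (Fin 4 → K) →ₗ[K] K)))

theorem triOf_apply (A : Fin 4 → Fin 4 → Fin 4 → K) (u v w : Fin 4 → K) :
    triOf A u v w = ∑ i, ∑ j, ∑ k, A i j k * (u i * v j * w k) := by
  simp only [triOf, LinearMap.sum_apply, LinearMap.smulRight_apply, LinearMap.smul_apply, LinearMap.proj_apply, smul_eq_mul]
  refine Finset.sum_congr rfl fun i _ => Finset.sum_congr rfl fun j _ => Finset.sum_congr rfl fun k _ => ?_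
  ring

theorem triOf_symm1 (A : Fin 4 → Fin 4 → Fin 4 → K) (h1 : ∀ i j k, A i j k = A j i k) (u v w : Fin 4 → K) :
    triOf A u v w = triOf A v u w := by
  rw [triOf_apply, triOf_apply, Finset.sum_comm]
  refine Finset.sum_congr rfl fun i _ => Finset.sum_congr rfl fun j _ => Finset.sum_congr rfl fun k _ => ?_
  rw [h1]; ring

theorem triOf_symm2 (A : Fin 4 → Fin 4 → Fin 4 → K) (h2 : ∀ i j k, A i j k = A i k j) (u v w : Fin 4 → K) :
    triOf A u v w = triOf A u w v := by
  rw [triOf_apply, triOf_apply]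
  refine Finset.sum_congr rfl fun i _ => ?_
  rw [Finset.sum_comm]
  refine Finset.sum_congr rfl fun j _ => Finset.sum_congr rfl fun k _ => ?_
  rw [h2]; ring

theorem triOf_single (A : Fin 4 → Fin 4 → Fin 4 → K) (i : Fin 4) (v w : Fin 4 → K) :
    triOf A (Pi.single i 1) v w = ∑ j, ∑ k, A i j k * (v j * w k) := by
  rw [triOf_apply, Finset.sum_eq_single i] <;> simp +contextual

open Polynomial in
/-- The Gauss map along a polynomial curve. -/
def gaussP (A : Fin 4 → Fin 4 → Fin 4 → K) (Q : Fin 4 → K[X]) (i : Fin 4) : K[X] :=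
  ∑ j, ∑ k, Polynomial.C (A i j k) * (Q j * Q k)

open Polynomial in
theorem eval_gaussP (A : Fin 4 → Fin 4 → Fin 4 → K) (Q : Fin 4 → K[X]) (i : Fin 4) (t : K) :
    (gaussP A Q i).eval t =
      triOf A (Pi.single i 1) (fun j => (Q j).eval t) (fun j => (Q j).eval t) := by
  rw [triOf_single]
  simp [gaussP, Polynomial.eval_finsetSum]

open Polynomial in
theorem eval_deriv_gaussP (A : Fin 4 → Fin 4 → Fin 4 → K) (h2 : ∀ i j k, A i j k = A i k j)
    (Q : Fin 4 → K[X]) (i : Fin 4) (t : K) :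
    (derivative (gaussP A Q i)).eval t =
      2 * triOf A (Pi.single i 1) (fun j => (Q j).eval t) (fun j => (derivative (Q j)).eval t) := by
  have : (derivative (gaussP A Q i)).eval t =
      triOf A (Pi.single i 1) (fun j => (derivative (Q j)).eval t) (fun j => (Q j).eval t) +
      triOf A (Pi.single i 1) (fun j => (Q j).eval t) (fun j => (derivative (Q j)).eval t) := by
    rw [triOf_single, triOf_single]
    simp only [gaussP, map_sum, Polynomial.eval_finsetSum, derivative_C, zero_mul, zero_add, derivative_mul,
      Polynomial.eval_mul, Polynomial.eval_add, Polynomial.eval_C, mul_add, Finset.sum_add_distrib]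
  rw [this, triOf_symm2 A h2 _ (fun j => (derivative (Q j)).eval t)]
  ring

theorem smooth_tensor [CharZero K] (A : Fin 4 → Fin 4 → Fin 4 → K)
    (h1 : ∀ i j k, A i j k = A j i k) (h2 : ∀ i j k, A i j k = A i k j)
    (hs : IsSmoothHypersurf (cubicOf A)) (v : Fin 4 → AlgebraicClosure K)
    (hv : ∀ i, ∑ j, ∑ k, algebraMap K (AlgebraicClosure K) (A i j k) * (v j * v k) = 0) : v = 0 := by
  let B : Fin 4 → Fin 4 → Fin 4 → AlgebraicClosure K := fun i j k => algebraMap K _ (A i j k)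
  have hB : MvPolynomial.map (algebraMap K (AlgebraicClosure K)) (cubicOf A) = cubicOf B := by
    simp [cubicOf, B]
  apply hs v
  · rw [hB, eval_cubicOf]
    refine Finset.sum_eq_zero fun i _ => ?_
    rw [← mul_zero (v i), ← hv i, Finset.mul_sum]
    refine Finset.sum_congr rfl fun j _ => ?_
    rw [Finset.mul_sum]
    refine Finset.sum_congr rfl fun k _ => ?_
    simp only [B]; ring
  · intro i
    rw [hB, eval_pderiv_cubicOf B (fun i j k => by simp only [B]; rw [h1])
      (fun i j k => by simp only [B]; rw [h2]), hv i, mul_zero]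

theorem smooth_tensor_base [CharZero K] (A : Fin 4 → Fin 4 → Fin 4 → K)
    (h1 : ∀ i j k, A i j k = A j i k) (h2 : ∀ i j k, A i j k = A i k j)
    (hs : IsSmoothHypersurf (cubicOf A)) (v : Fin 4 → K)
    (hv : ∀ i, triOf A (Pi.single i 1) v v = 0) : v = 0 := by
  have := smooth_tensor A h1 h2 hs (fun i => algebraMap K _ (v i)) (fun i => by
    have := congrArg (algebraMap K (AlgebraicClosure K)) (hv i)
    rw [triOf_single] at this
    simpa using this)
  funext i
  have := congrFun this i
  simpa using this

open Polynomial in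
/-- The Gauss map is not constant along a (nonconstant) polynomial curve. -/
theorem gauss_nonconst [CharZero K] (A : Fin 4 → Fin 4 → Fin 4 → K)
    (h1 : ∀ i j k, A i j k = A j i k) (h2 : ∀ i j k, A i j k = A i k j)
    (hs : IsSmoothHypersurf (cubicOf A)) (Q r : Fin 4 → K[X]) (hr : ∑ j, r j * Q j = 1)
    (hQ : ∃ j, 0 < (Q j).natDegree) (κ : Fin 4 → K) (h : K[X])
    (hG : ∀ i, gaussP A Q i = Polynomial.C (κ i) * h) : False := by
  by_cases hd : h.natDegree = 0
  · obtain ⟨c, rfl⟩ := Polynomial.natDegree_eq_zero.1 hd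
    obtain ⟨j0, hj0⟩ := hQ
    obtain ⟨m, -, hm⟩ := Finset.exists_max_image Finset.univ (fun j => (Q j).natDegree) ⟨j0, by simp⟩
    have hm0 : 0 < (Q m).natDegree := lt_of_lt_of_le hj0 (hm j0 (by simp))
    set N := (Q m).natDegree with hN
    have hv := smooth_tensor_base A h1 h2 hs (fun j => (Q j).coeff N) (fun i => by
      rw [triOf_single]
      have := congrArg (fun p => p.coeff (N + N)) (hG i)
      simp only [gaussP, Polynomial.finsetSum_coeff, Polynomial.coeff_C_mul, ← Polynomial.C_mul] at this
      rw [Polynomial.coeff_C_of_ne_zero (by omega)] at this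
      rw [← this]
      refine Finset.sum_congr rfl fun j _ => Finset.sum_congr rfl fun k _ => ?_
      rw [Polynomial.coeff_mul_add_eq_of_natDegree_le (hm j (by simp)) (hm k (by simp))])
    have := congrFun hv m
    simp only [Pi.zero_apply] at this
    have h0 : Q m = 0 := Polynomial.leadingCoeff_eq_zero.1 this
    rw [hN, h0] at hm0
    simp at hm0
  · obtain ⟨ρ, hρ⟩ := IsAlgClosed.exists_aeval_eq_zero (AlgebraicClosure K) h
      (by intro h'; exact hd (Polynomial.natDegree_eq_of_degree_eq_some h'))
    have hv := smooth_tensor A h1 h2 hs (fun j => Polynomial.aeval ρ (Q j)) (fun i => by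
      have := congrArg (Polynomial.aeval ρ) (hG i)
      rw [map_mul, hρ, mul_zero] at this
      simpa [gaussP] using this)
    have := congrArg (Polynomial.aeval ρ) hr
    simp only [map_sum, map_mul] at this
    rw [Finset.sum_eq_zero] at this
    · simp at this
    · intro j _
      have := congrFun hv j
      simp only [Pi.zero_apply] at this
      rw [this, mul_zero]

open Polynomial in
theorem eq_const_mul_of_wronskian [CharZero K] (a b : K[X]) (hb : b ≠ 0)
    (h : a * derivative b = b * derivative a) : ∃ k : K, a = Polynomial.C k * b := by
  by_cases ha : a = 0
  · exact ⟨0, by simp [ha]⟩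
  -- first: degrees agree
  have key : ∀ a : K[X], a ≠ 0 → a * derivative b = b * derivative a → a.natDegree = b.natDegree := by
    intro a ha h
    have h1 := congrArg (fun p => (Polynomial.X * p).coeff (a.natDegree + b.natDegree)) h
    have e1 : ∀ p q : K[X], (Polynomial.X * (p * derivative q)).coeff (p.natDegree + q.natDegree)
        = p.leadingCoeff * (q.leadingCoeff * q.natDegree) := by
      intro p q
      have : Polynomial.X * (p * derivative q) = p * (Polynomial.X * derivative q) := by ring
      rw [this, Polynomial.coeff_mul_add_eq_of_natDegree_le le_rfl]
      · congr 1
        rcases Nat.eq_zero_or_pos q.natDegree with h | h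
        · rw [h]; simp
        · obtain ⟨n, hn⟩ := Nat.exists_eq_succ_of_ne_zero h.ne'
          rw [Polynomial.leadingCoeff, hn, Polynomial.coeff_X_mul, Polynomial.coeff_derivative]
          push_cast; ring
      · rcases Nat.eq_zero_or_pos q.natDegree with h | h
        · obtain ⟨c, rfl⟩ := Polynomial.natDegree_eq_zero.1 h
          simp
        · refine (Polynomial.natDegree_mul_le).trans ?_
          have := Polynomial.natDegree_derivative_le q
          simp only [natDegree_X]; omega
    beta_reduce at h1
    rw [e1 a b, add_comm, e1 b a] at h1
    have la := Polynomial.leadingCoeff_ne_zero.2 ha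
    have lb := Polynomial.leadingCoeff_ne_zero.2 hb
    have h2 : a.leadingCoeff * b.leadingCoeff * ((b.natDegree : K) - a.natDegree) = 0 := by
      linear_combination h1
    simp only [mul_eq_zero, la, lb, false_or, sub_eq_zero] at h2
    exact_mod_cast h2.symm
  have hd := key a ha h
  refine ⟨a.leadingCoeff / b.leadingCoeff, ?_⟩
  have lb := Polynomial.leadingCoeff_ne_zero.2 hb
  by_contra hne
  set c := a.leadingCoeff / b.leadingCoeff
  have hne' : a - Polynomial.C c * b ≠ 0 := sub_ne_zero.2 hne
  have h' := key _ hne' (by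
    simp only [derivative_sub, derivative_C_mul]
    linear_combination h)
  have hc : (a - Polynomial.C c * b).coeff b.natDegree = 0 := by
    rw [Polynomial.coeff_sub, Polynomial.coeff_C_mul, ← hd, Polynomial.coeff_natDegree, hd, Polynomial.coeff_natDegree]
    simp only [c]; field_simp; ring
  rw [← h', Polynomial.coeff_natDegree] at hc
  exact hne' (Polynomial.leadingCoeff_eq_zero.1 hc)

end euler
end CubicSurf

namespace CubicSurf

section geom
variable {K : Type*} [Field K]

theorem exists_dual {m : ℕ} (v : Fin m → (Fin 4 → K)) (hv : LinearIndependent K v) (c : Fin m → K) :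
    ∃ φ : (Fin 4 → K) →ₗ[K] K, ∀ i, φ (v i) = c i := by
  obtain ⟨g, hg⟩ := LinearMap.exists_leftInverse_of_injective (Fintype.linearCombination K v)
    (LinearMap.ker_eq_bot.2 hv.fintypeLinearCombination_injective)
  refine ⟨(Fintype.linearCombination K c).comp g, fun i => ?_⟩
  have := LinearMap.congr_fun hg (Pi.single i 1)
  simp [Fintype.linearCombination_apply_single] at this
  simp [this, Fintype.linearCombination_apply_single]

theorem exists_ker_indep (l : (Fin 4 → K) →ₗ[K] K) {m : ℕ} (hm : m ≤ 2) (v : Fin m → (Fin 4 → K))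
    (hv : LinearIndependent K v) :
    ∃ d, l d = 0 ∧ LinearIndependent K (Fin.cons d v : Fin (m + 1) → (Fin 4 → K)) := by
  by_contra! hcon
  have hle : LinearMap.ker l ≤ Submodule.span K (Set.range v) := by
    intro d hd
    by_contra hnot
    exact hcon d hd (linearIndependent_finCons.2 ⟨hv, hnot⟩)
  have h1 := Submodule.finrank_mono hle
  rw [finrank_span_eq_card hv, Fintype.card_fin] at h1
  have h2 := LinearMap.finrank_range_add_finrank_ker l
  have h3 := Submodule.finrank_le (LinearMap.range l)
  simp at h2 h3
  omega

theorem functional_sum (φ : (Fin 4 → K) →ₗ[K] K) (x : Fin 4 → K) :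
    φ x = ∑ j, φ (Pi.single j 1) * x j := by
  conv_lhs => rw [pi_eq_sum_univ' x]
  rw [map_sum]
  refine Finset.sum_congr rfl fun j _ => ?_
  rw [map_smul, smul_eq_mul, mul_comm]

theorem eval_lineRestrict (F : MvPolynomial (Fin 4) K) (u v : Fin 4 → K) (x : Fin 2 → K) :
    eval x (lineRestrict F u v) = eval (x 0 • u + x 1 • v) F := by
  rw [lineRestrict, ← MvPolynomial.coe_aeval_eq_eval, ← MvPolynomial.coe_aeval_eq_eval]
  change ((MvPolynomial.aeval x).comp (MvPolynomial.aeval _)) F = _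
  rw [MvPolynomial.comp_aeval]
  change _ = (MvPolynomial.aeval (x 0 • u + x 1 • v)) F
  congr 2
  funext i
  simp [mul_comm]

theorem mk_rep_mem (W : Submodule K (Fin 4 → K)) {u : Fin 4 → K} (hu : u ≠ 0) (h : u ∈ W) :
    OnLine W (Projectivization.mk K u hu) := by
  obtain ⟨a, ha⟩ := Projectivization.exists_smul_eq_mk_rep K u hu
  rw [OnLine, ← ha]
  exact W.smul_mem _ h

theorem tri_line (T : (Fin 4 → K) →ₗ[K] (Fin 4 → K) →ₗ[K] (Fin 4 → K) →ₗ[K] K)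
    (s1 : ∀ u v w, T u v w = T v u w) (s2 : ∀ u v w, T u v w = T u w v) (u v : Fin 4 → K) (a b : K) :
    T (a • u + b • v) (a • u + b • v) (a • u + b • v) =
      a ^ 3 * T u u u + 3 * a ^ 2 * b * T u u v + 3 * a * b ^ 2 * T u v v + b ^ 3 * T v v v := by
  simp only [map_add, map_smul, LinearMap.add_apply, LinearMap.smul_apply, smul_eq_mul]
  rw [s1 v u v, s1 v u u, s2 v v u, s1 v u v, s2 u v u]
  ring

theorem tri_quad (T : (Fin 4 → K) →ₗ[K] (Fin 4 → K) →ₗ[K] (Fin 4 → K) →ₗ[K] K)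
    (s1 : ∀ u v w, T u v w = T v u w) (u v w : Fin 4 → K) (a b : K) :
    T (a • u + b • v) (a • u + b • v) w =
      a ^ 2 * T u u w + 2 * a * b * T u v w + b ^ 2 * T v v w := by
  simp only [map_add, map_smul, LinearMap.add_apply, LinearMap.smul_apply, smul_eq_mul]
  rw [s1 v u w]
  ring

theorem tripleRel_of [CharZero K] (F : MvPolynomial (Fin 4) K)
    (T : (Fin 4 → K) →ₗ[K] (Fin 4 → K) →ₗ[K] (Fin 4 → K) →ₗ[K] K)
    (s1 : ∀ u v w, T u v w = T v u w) (s2 : ∀ u v w, T u v w = T u w v)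
    (hT : ∀ x, eval x F = T x x x) (P Q : zeroSet F) (u v : Fin 4 → K) (hu : u ≠ 0) (hv : v ≠ 0)
    (hP : P.1 = Projectivization.mk K u hu) (hQ : Q.1 = Projectivization.mk K v hv)
    (hli : LinearIndependent K ![u, v]) (fu : T u u u = 0) (fv : T v v v = 0) (huv : T u u v = 0) :
    TripleRel F P P Q := by
  have hu' : u ∈ Submodule.span K {u, v} := Submodule.subset_span (by simp)
  have hv' : v ∈ Submodule.span K {u, v} := Submodule.subset_span (by simp)
  refine ⟨Submodule.span K {u, v}, ?_, ?_⟩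
  · have := finrank_span_eq_card hli
    have hr : Set.range ![u, v] = {u, v} := by
      rw [Matrix.range_cons, Matrix.range_cons, Matrix.range_empty, Set.union_empty, Set.singleton_union]
    rw [hr] at this
    simpa [IsLine] using this
  · by_cases hc : T u v v = 0
    · right
      refine ⟨?_, ?_, ?_, ?_⟩
      · intro a b ha hb
        apply MvPolynomial.funext
        intro x
        rw [eval_lineRestrict, map_zero]
        have hm : x 0 • a + x 1 • b ∈ Submodule.span K {u, v} :=
          Submodule.add_mem _ (Submodule.smul_mem _ _ ha) (Submodule.smul_mem _ _ hb)
        obtain ⟨s, t, hst⟩ := Submodule.mem_span_pair.1 hm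
        rw [← hst, hT, tri_line T s1 s2, fu, fv, huv, hc]
        ring
      · rw [hP]; exact mk_rep_mem _ _ hu'
      · rw [hP]; exact mk_rep_mem _ _ hu'
      · rw [hQ]; exact mk_rep_mem _ _ hv'
    · left
      have hres : lineRestrict F u v = C (3 * T u v v) * ∏ k : Fin 3,
          (C ((![0, 0, 1] : Fin 3 → K) k) * X 0 - C ((![1, 1, 0] : Fin 3 → K) k) * X 1) := by
        apply MvPolynomial.funext
        intro x
        rw [eval_lineRestrict, hT, tri_line T s1 s2, fu, fv, huv]
        simp [Fin.prod_univ_three]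
        ring
      refine ⟨?_, u, v, hu', hv', hli, 3 * T u v v, ![1, 1, 0], ![0, 0, 1], ?_, ?_, hres, ?_, ?_, ?_⟩
      · intro hl
        have := congrArg (eval ![1, 1]) (hl u v hu' hv')
        rw [eval_lineRestrict, hT, map_zero] at this
        rw [tri_line T s1 s2, fu, fv, huv] at this
        simp [hc] at this
      · intro k; fin_cases k <;> simp [hu, hv]
      · exact mul_ne_zero (by norm_num) hc
      · rw [hP]; simp
      · rw [hP]; simp
      · rw [hQ]; simp

theorem hclass_eq (F : MvPolynomial (Fin 4) K) (P Q R P' Q' R' : zeroSet F)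
    (h : TripleRel F P Q R) (h' : TripleRel F P' Q' R') :
    HClass F P + HClass F Q + HClass F R = HClass F P' + HClass F Q' + HClass F R' := by
  simp only [HClass, ← map_add]
  rw [QuotientAddGroup.mk'_eq_mk']
  refine ⟨-(FreeAbelianGroup.of P + FreeAbelianGroup.of Q + FreeAbelianGroup.of R) +
    (FreeAbelianGroup.of P' + FreeAbelianGroup.of Q' + FreeAbelianGroup.of R'), ⟨?_, ?_⟩, by abel⟩
  · exact AddSubgroup.add_mem _ (AddSubgroup.neg_mem _ (AddSubgroup.subset_closure ⟨P, Q, R, h, rfl⟩))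
      (AddSubgroup.subset_closure ⟨P', Q', R', h', rfl⟩)
  · simp [AddMonoidHom.mem_ker, degHom]

/-- a direction of the tangent plane along which the cubic form does not vanish -/
theorem exists_cubic_ne [CharZero K] (A : Fin 4 → Fin 4 → Fin 4 → K)
    (h1 : ∀ i j k, A i j k = A j i k) (h2 : ∀ i j k, A i j k = A i k j)
    (hs : IsSmoothHypersurf (cubicOf A)) (P n : Fin 4 → K) (hP : P ≠ 0) (hPPP : triOf A P P P = 0)
    (hn : triOf A P P n = 1) :
    ∃ d, triOf A P P d = 0 ∧ triOf A d d d ≠ 0 := by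
  have s1 := triOf_symm1 A h1
  have s2 := triOf_symm2 A h2
  set T := triOf A
  by_contra! hcon
  have hpol : ∀ d w, T P P d = 0 → T P P w = 0 → T d d w = 0 := by
    intro d w hd hw
    have e1 := hcon ((1:K) • d + (1:K) • w) (by simp [hd, hw])
    have e2 := hcon ((1:K) • d + (-1:K) • w) (by simp [hd, hw])
    rw [tri_line T s1 s2, hcon d hd, hcon w hw] at e1 e2
    have : (6:K) * T d d w = 0 := by linear_combination e1 - e2
    simpa using this
  -- a second direction
  obtain ⟨d, hd, hdP⟩ : ∃ d, T P P d = 0 ∧ LinearIndependent K ![d, P] := by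
    obtain ⟨d, hd, hli⟩ := exists_ker_indep (T P P) (m := 1) (by norm_num) ![P]
      (linearIndependent_unique_iff.2 (by simpa using hP))
    exact ⟨d, hd, hli⟩
  obtain ⟨φ, hφP, hφd⟩ : ∃ φ : (Fin 4 → K) →ₗ[K] K, φ P = 1 ∧ φ d = 0 := by
    obtain ⟨φ, hφ⟩ := exists_dual _ hdP ![0, 1]
    exact ⟨φ, hφ 1, hφ 0⟩
  let Q : Fin 4 → Polynomial K := fun j => Polynomial.C (P j) + Polynomial.C (d j) * Polynomial.X
  have hQe : ∀ t, (fun j => (Q j).eval t) = (1:K) • P + t • d := by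
    intro t; funext j; simp [Q]; ring
  let h : Polynomial K := 1 + Polynomial.C (2 * T P d n) * Polynomial.X +
    Polynomial.C (T d d n) * Polynomial.X ^ 2
  refine gauss_nonconst A h1 h2 hs Q (fun j => Polynomial.C (φ (Pi.single j 1))) ?_ ?_
    (fun i => T P P (Pi.single i 1)) h ?_
  · apply Polynomial.funext
    intro t
    have : φ ((1:K) • P + t • d) = 1 := by simp [hφP, hφd]
    rw [← hQe, functional_sum] at this
    simp only [Polynomial.eval_finsetSum, Polynomial.eval_mul, Polynomial.eval_C, Polynomial.eval_one]
    exact this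
  · have : d ≠ 0 := hdP.ne_zero 0
    obtain ⟨j, hj⟩ := Function.ne_iff.1 this
    refine ⟨j, ?_⟩
    have : (Q j).natDegree = 1 := by
      simp only [Q]
      rw [add_comm]
      exact Polynomial.natDegree_linear hj
    omega
  · intro i
    apply Polynomial.funext
    intro t
    have hw : T P P (Pi.single i 1 - T P P (Pi.single i 1) • n) = 0 := by
      simp [hn]
    have hq : T P P ((1:K) • P + t • d) = 0 := by simp [hPPP, hd]
    have e := hpol _ _ hq hw
    rw [map_sub, map_smul, sub_eq_zero] at e
    rw [eval_gaussP, hQe, s1, s2]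
    change T _ _ _ = _
    rw [e, tri_quad T s1, hn]
    simp only [h, Polynomial.eval_add, Polynomial.eval_mul, Polynomial.eval_C, Polynomial.eval_X,
      Polynomial.eval_pow, Polynomial.eval_one]
    ring

theorem exists_nonflat [CharZero K] [TopologicalSpace K] (hK : GoodTop K) (A : Fin 4 → Fin 4 → Fin 4 → K)
    (h1 : ∀ i j k, A i j k = A j i k) (h2 : ∀ i j k, A i j k = A i k j)
    (hs : IsSmoothHypersurf (cubicOf A)) (P : Fin 4 → K) (hP : P ≠ 0) (hPPP : triOf A P P P = 0) :
    ∃ P e, P ≠ 0 ∧ triOf A P P P = 0 ∧ triOf A P P e = 0 ∧ triOf A P e e ≠ 0 := by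
  have s1 := triOf_symm1 A h1
  have s2 := triOf_symm2 A h2
  obtain ⟨n, hn⟩ : ∃ n, triOf A P P n = 1 := by
    by_contra! hcon
    apply hP
    apply smooth_tensor_base A h1 h2 hs
    intro i
    rw [s1, s2]
    by_contra hne
    apply hcon ((triOf A P P (Pi.single i 1))⁻¹ • Pi.single i 1)
    rw [map_smul, smul_eq_mul, inv_mul_cancel₀ hne]
  obtain ⟨d, hd, hddd⟩ := exists_cubic_ne A h1 h2 hs P n hP hPPP hn
  set T := triOf A
  by_cases hfl : ∃ e, T P P e = 0 ∧ T P e e ≠ 0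
  · obtain ⟨e, he⟩ := hfl
    exact ⟨P, e, hP, hPPP, he⟩
  push Not at hfl
  have hPdd := hfl d hd
  have := hK.ring
  have := hK.t1
  have := hK.ne
  let p : K → Polynomial K := fun x => Polynomial.C (x ^ 2 * T d d d) +
    Polynomial.C (3 + 6 * x * T P d n + 3 * x ^ 2 * T d d n) * Polynomial.X +
    Polynomial.C (3 * x * T P n n + 3 * x ^ 2 * T d n n) * Polynomial.X ^ 2 +
    Polynomial.C (x ^ 2 * T n n n) * Polynomial.X ^ 3
  -- the function which must not vanish
  let v : K → K → K := fun x u => 2 * (u * T P n d) + x * (T d d d + 2 * u * T d n d + u ^ 2 * T n n d)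
  let m : K → K → K := fun x u => 1 + 2 * x * (T P d n + u * T P n n) +
    x ^ 2 * (T d d n + 2 * u * T d n n + u ^ 2 * T n n n)
  let w : K → K → K := fun x u => m x u ^ 2 * (T d d d + u * T n d d)
    - 2 * m x u * v x u * (T P d n + x * (T d d n + u * T n d n))
    + x * v x u ^ 2 * (T P n n + x * (T d n n + u * T n n n))
  have hwc : Continuous (fun z : K × K => w z.1 z.2) := by
    simp only [w, m, v]; fun_prop
  have hw0 : w 0 0 ≠ 0 := by simpa [w, m, v] using hddd
  have hwn : ∀ᶠ z in nhds ((0:K), (0:K)), w z.1 z.2 ≠ 0 :=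
    hwc.continuousAt.eventually_ne hw0
  rw [nhds_prod_eq] at hwn
  obtain ⟨p1, hp1, p2, hp2, hpp⟩ := Filter.eventually_prod_iff.1 hwn
  have hroot := hK.root_family p 4 (by
      intro y
      have : (p y).natDegree ≤ 3 := by simp only [p]; compute_degree
      omega) 0 (by
      intro i
      apply Continuous.continuousAt
      simp only [p, Polynomial.coeff_add, Polynomial.coeff_C_mul, Polynomial.coeff_C]
      split_ifs <;> fun_prop) 0 (by simp [p]) (by simp [p]) {u | p2 u} hp2
  have hex := ((hroot.and hp1).filter_mono nhdsWithin_le_nhds).and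
    (self_mem_nhdsWithin (s := ({0}ᶜ : Set K)) (a := (0:K)))
  obtain ⟨x, ⟨⟨u, hu, hpu⟩, hx⟩, hx0⟩ := hex.exists
  have hx0 : x ≠ 0 := hx0
  have hwxu := hpp hx hu
  simp only [p, Polynomial.eval_add, Polynomial.eval_mul, Polynomial.eval_C, Polynomial.eval_pow, Polynomial.eval_X] at hpu
  have q1 : T d P n = T P d n := s1 _ _ _
  have q2 : T n P n = T P n n := s1 _ _ _
  have q3 : T n d n = T d n n := s1 _ _ _
  have q4 : T n n d = T d n n := by rw [s2, s1]
  have q5 : T d n d = T d d n := s2 _ _ _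
  have q6 : T n d d = T d d n := by rw [s1, s2]
  have q7 : T P n d = T P d n := s2 _ _ _
  have q8 : T d P d = 0 := by rw [s1, hPdd]
  have q9 : T d P P = 0 := by rw [s1, s2, hd]
  have q10 : T P d P = 0 := by rw [s2, hd]
  have q11 : T n P P = 1 := by rw [s1, s2, hn]
  have q12 : T P n P = 1 := by rw [s2, hn]
  have q13 : T d n P = T P d n := by rw [s2, s1]
  have q14 : T n d P = T P d n := by rw [s2, s1, s2]
  have q15 : T n n P = T P n n := by rw [s2, s1]
  have q16 : T n P d = T P d n := by rw [s1, s2]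
  have q17 : T d d P = 0 := by rw [s2, s1, hPdd]
  have hv : T (P + x • (d + u • n)) (P + x • (d + u • n)) d = x * v x u := by
    simp only [map_add, map_smul, LinearMap.add_apply, LinearMap.smul_apply, smul_eq_mul, v,
      q1, q2, q3, q4, q5, q6, q7, q8, q9, q10, q11, q12, q13, q14, q15, q16, q17, hd, hn, hPPP, hPdd]
    ring
  have hm : T (P + x • (d + u • n)) (P + x • (d + u • n)) n = m x u := by
    simp only [map_add, map_smul, LinearMap.add_apply, LinearMap.smul_apply, smul_eq_mul, m,
      q1, q2, q3, q4, q5, q6, q7, q8, q9, q10, q11, q12, q13, q14, q15, q16, q17, hd, hn, hPPP, hPdd]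
    ring
  have hw : T (P + x • (d + u • n)) (m x u • d - (x * v x u) • n) (m x u • d - (x * v x u) • n)
     = x * w x u := by
    simp only [map_add, map_sub, map_smul, LinearMap.add_apply, LinearMap.sub_apply, LinearMap.smul_apply, smul_eq_mul, w,
      q1, q2, q3, q4, q5, q6, q7, q8, q9, q10, q11, q12, q13, q14, q15, q16, q17, hd, hn, hPPP, hPdd]
    ring
  refine ⟨P + x • (d + u • n), m x u • d - (x * v x u) • n, ?_, ?_, ?_, ?_⟩
  · intro h0
    rw [h0] at hw
    simp only [map_zero, LinearMap.zero_apply] at hw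
    exact mul_ne_zero hx0 hwxu hw.symm
  · have : T (P + x • (d + u • n)) (P + x • (d + u • n)) (P + x • (d + u • n)) =
      x * (x ^ 2 * T d d d + (3 + 6 * x * T P d n + 3 * x ^ 2 * T d d n) * u + (3 * x * T P n n + 3 * x ^ 2 * T d n n) * u ^ 2 + x ^ 2 * T n n n * u ^ 3) := by
      simp only [map_add, map_smul, LinearMap.add_apply, LinearMap.smul_apply, smul_eq_mul,
        q1, q2, q3, q4, q5, q6, q7, q8, q9, q10, q11, q12, q13, q14, q15, q16, q17, hd, hn, hPPP, hPdd]
      ring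
    rw [this, hpu, mul_zero]
  · rw [map_sub, map_smul, map_smul, hv, hm, smul_eq_mul, smul_eq_mul]
    ring
  · rw [hw]; exact mul_ne_zero hx0 hwxu

end geom
end CubicSurf

namespace CubicSurf

section curve
variable {K : Type*} [Field K]

open Polynomial in
theorem exists_coprime_factor (c q : K[X]) (hq0 : q ≠ 0) :
    ∃ g c' q' : K[X], IsCoprime c' q' ∧ c = g * c' ∧ q = g * q' := by
  classical
  obtain ⟨c', hc'⟩ := EuclideanDomain.gcd_dvd_left c q
  obtain ⟨q', hq'⟩ := EuclideanDomain.gcd_dvd_right c q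
  have hab := EuclideanDomain.gcd_eq_gcd_ab c q
  have hg : EuclideanDomain.gcd c q ≠ 0 := fun h => hq0 (EuclideanDomain.gcd_eq_zero_iff.1 h).2
  generalize EuclideanDomain.gcd c q = g at *
  refine ⟨g, c', q', ⟨EuclideanDomain.gcdA c q, EuclideanDomain.gcdB c q, ?_⟩, hc', hq'⟩
  generalize EuclideanDomain.gcdA c q = a at *
  generalize EuclideanDomain.gcdB c q = b at *
  apply mul_left_cancel₀ hg
  rw [hc', hq'] at hab
  linear_combination -hab

open Polynomial in
theorem exists_curve [CharZero K] (A : Fin 4 → Fin 4 → Fin 4 → K)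
    (h1 : ∀ i j k, A i j k = A j i k) (h2 : ∀ i j k, A i j k = A i k j)
    (P e : Fin 4 → K) (hP : P ≠ 0) (hPPP : triOf A P P P = 0) (hPPe : triOf A P P e = 0)
    (hPee : triOf A P e e ≠ 0) :
    ∃ (Q r : Fin 4 → K[X]) (w : K[X]), w ≠ 0 ∧ ∑ j, r j * Q j = 1 ∧ (∃ j, 0 < (Q j).natDegree) ∧
      ∀ t, triOf A (fun j => (Q j).eval t) (fun j => (Q j).eval t) (fun j => (Q j).eval t) = 0 ∧
        triOf A P P (fun j => (Q j).eval t) = 0 ∧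
        (w.eval t ≠ 0 → LinearIndependent K ![P, fun j => (Q j).eval t]) := by
  classical
  have s1 := triOf_symm1 A h1
  have s2 := triOf_symm2 A h2
  set T := triOf A
  have hPe : LinearIndependent K ![P, e] := by
    rw [LinearIndependent.pair_iff]
    intro a b hab
    have hb : b = 0 := by
      have := congrArg (T P e) hab
      rw [map_add, map_smul, map_smul, s2 P e P, hPPe, map_zero] at this
      simpa [hPee] using this
    subst hb
    simpa [hP] using hab
  obtain ⟨f, hf, hli⟩ := exists_ker_indep (T P P) le_rfl _ hPe
  obtain ⟨φ, hφ⟩ := exists_dual _ hli ![0, 1, 0]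
  obtain ⟨ψ, hψ⟩ := exists_dual _ hli ![0, 0, 1]
  obtain ⟨θ, hθ⟩ := exists_dual _ hli ![1, 0, 0]
  have φf : φ f = 0 := hφ 0
  have φP : φ P = 1 := hφ 1
  have φe : φ e = 0 := hφ 2
  have ψf : ψ f = 0 := hψ 0
  have ψP : ψ P = 0 := hψ 1
  have ψe : ψ e = 1 := hψ 2
  have θf : θ f = 1 := hθ 0
  have θP : θ P = 0 := hθ 1
  have θe : θ e = 0 := hθ 2
  let q : K[X] := Polynomial.C (T P e e) + Polynomial.C (2 * T P e f) * Polynomial.X + Polynomial.C (T P f f) * Polynomial.X ^ 2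
  let c : K[X] := Polynomial.C (T e e e) + Polynomial.C (3 * T e e f) * Polynomial.X + Polynomial.C (3 * T e f f) * Polynomial.X ^ 2 + Polynomial.C (T f f f) * Polynomial.X ^ 3
  have hq0 : q ≠ 0 := by
    intro h
    apply hPee
    have := congrArg (Polynomial.eval 0) h
    simpa [q] using this
  have hqe : ∀ t, q.eval t = T P ((1:K) • e + t • f) ((1:K) • e + t • f) := by
    intro t
    simp only [q, Polynomial.eval_add, Polynomial.eval_mul, Polynomial.eval_C, Polynomial.eval_X,
      Polynomial.eval_pow, map_add, map_smul, LinearMap.add_apply, LinearMap.smul_apply, smul_eq_mul]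
    rw [s2 P f e]; ring
  have hce : ∀ t, c.eval t = T ((1:K) • e + t • f) ((1:K) • e + t • f) ((1:K) • e + t • f) := by
    intro t
    rw [tri_line T s1 s2]
    simp only [c, Polynomial.eval_add, Polynomial.eval_mul, Polynomial.eval_C, Polynomial.eval_X,
      Polynomial.eval_pow]
    ring
  obtain ⟨g, c', q', hcop, hc', hq'⟩ := exists_coprime_factor c q hq0
  clear_value q c
  have hq'0 : q' ≠ 0 := by rintro rfl; simp [hq0] at hq'
  obtain ⟨a, b, hab⟩ := hcop
  let Q : Fin 4 → K[X] := fun j => -c' * Polynomial.C (P j) + 3 * q' * (Polynomial.C (e j) + Polynomial.X * Polynomial.C (f j))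
  have hQe : ∀ t, (fun j => (Q j).eval t) =
      (-c'.eval t) • P + (3 * q'.eval t) • ((1:K) • e + t • f) := by
    intro t; funext j
    simp [Q]
    ring
  have hφQ : ∀ t, φ (fun j => (Q j).eval t) = -c'.eval t := by
    intro t; rw [hQe]; simp [φP, φe, φf]
  have hψQ : ∀ t, ψ (fun j => (Q j).eval t) = 3 * q'.eval t := by
    intro t; rw [hQe]; simp [ψP, ψe, ψf]
  have hθQ : ∀ t, θ (fun j => (Q j).eval t) = 3 * q'.eval t * t := by
    intro t; rw [hQe]; simp [θP, θe, θf]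
  refine ⟨Q, fun j => Polynomial.C (φ (Pi.single j 1)) * (-a) + Polynomial.C (ψ (Pi.single j 1)) * (Polynomial.C (3⁻¹) * b), q', hq'0,
    ?_, ?_, ?_⟩
  · apply Polynomial.funext
    intro t
    have e1 := hφQ t
    have e2 := hψQ t
    rw [functional_sum] at e1 e2
    have e3 := congrArg (Polynomial.eval t) hab
    simp only [Polynomial.eval_finsetSum, Polynomial.eval_mul, Polynomial.eval_add, Polynomial.eval_neg,
      Polynomial.eval_C, Polynomial.eval_one] at e3 ⊢
    have : ∀ j, (φ (Pi.single j 1) * -a.eval t + ψ (Pi.single j 1) * (3⁻¹ * b.eval t)) * (Q j).eval t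
      = -a.eval t * (φ (Pi.single j 1) * (Q j).eval t) +
        (3⁻¹ * b.eval t) * (ψ (Pi.single j 1) * (Q j).eval t) := fun j => by ring
    simp only [this, Finset.sum_add_distrib, ← Finset.mul_sum]
    rw [e1, e2, ← e3]
    have h3 : (3:K) ≠ 0 := by norm_num
    field_simp
  · by_contra! hcon
    have hθp : ∑ j, Polynomial.C (θ (Pi.single j 1)) * Q j = Polynomial.C 3 * q' * Polynomial.X := by
      apply Polynomial.funext
      intro t
      have := hθQ t
      rw [functional_sum] at this
      simpa [Polynomial.eval_finsetSum] using this
    have hd : (∑ j, Polynomial.C (θ (Pi.single j 1)) * Q j).natDegree ≤ 0 := by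
      apply Polynomial.natDegree_sum_le_of_forall_le
      intro j _
      exact (Polynomial.natDegree_C_mul_le _ _).trans (hcon j)
    rw [hθp, Polynomial.natDegree_mul_X (mul_ne_zero (by simp) hq'0)] at hd
    omega
  · intro t
    have k1 := hqe t
    have k2 := hce t
    rw [hq', Polynomial.eval_mul] at k1
    rw [hc', Polynomial.eval_mul] at k2
    refine ⟨?_, ?_, ?_⟩
    · rw [hQe, tri_line T s1 s2, hPPP, ← k1, ← k2]
      simp only [map_add, map_smul, hPPe, hf, smul_zero, add_zero]
      ring
    · rw [hQe]
      simp [hPPe, hf, hPPP]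
    · intro hw
      rw [LinearIndependent.pair_iff]
      intro x y hxy
      have e1 := congrArg ψ hxy
      rw [map_add, map_smul, map_smul, hψQ, ψP] at e1
      have hy : y = 0 := by simpa [hw] using e1
      subst hy
      simpa [hP] using hxy

open Polynomial in
theorem exists_good_pt [CharZero K] (A : Fin 4 → Fin 4 → Fin 4 → K)
    (h1 : ∀ i j k, A i j k = A j i k) (h2 : ∀ i j k, A i j k = A i k j)
    (hs : IsSmoothHypersurf (cubicOf A)) (Q r : Fin 4 → K[X]) (w : K[X]) (hw : w ≠ 0)
    (hr : ∑ j, r j * Q j = 1) (hQ : ∃ j, 0 < (Q j).natDegree)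
    (hQQQ : ∀ t, triOf A (fun j => (Q j).eval t) (fun j => (Q j).eval t) (fun j => (Q j).eval t) = 0) :
    ∃ (t : K) (R : Fin 4 → K), w.eval t ≠ 0 ∧
      triOf A (fun j => (Q j).eval t) (fun j => (Q j).eval t) R = 0 ∧
      triOf A (fun j => (Q j).eval t) (fun j => (derivative (Q j)).eval t) R ≠ 0 ∧
      triOf A R R R = 0 ∧ LinearIndependent K ![fun j => (Q j).eval t, R] := by
  have s1 := triOf_symm1 A h1
  have s2 := triOf_symm2 A h2
  have hwr : ∃ i j, gaussP A Q i * derivative (gaussP A Q j) - gaussP A Q j * derivative (gaussP A Q i) ≠ 0 := by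
    by_contra! hcon
    by_cases hz : ∀ j, gaussP A Q j = 0
    · exact gauss_nonconst A h1 h2 hs Q r hr hQ (fun _ => 0) 0 (fun i => by simp [hz i])
    · push Not at hz
      obtain ⟨j, hj⟩ := hz
      choose κ hκ using fun i => eq_const_mul_of_wronskian (gaussP A Q i) (gaussP A Q j) hj
        (sub_eq_zero.1 (hcon i j))
      exact gauss_nonconst A h1 h2 hs Q r hr hQ κ _ hκ
  obtain ⟨i, j, hij⟩ := hwr
  obtain ⟨t, ht⟩ : ∃ t, (w * (gaussP A Q i * derivative (gaussP A Q j) -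
      gaussP A Q j * derivative (gaussP A Q i))).eval t ≠ 0 := by
    by_contra! hcon
    exact mul_ne_zero hw hij (Polynomial.funext (by simpa using hcon))
  rw [Polynomial.eval_mul] at ht
  have hwt := left_ne_zero_of_mul ht
  have hW := right_ne_zero_of_mul ht
  have hQ0 := hQQQ t
  have hder : triOf A (fun j => (Q j).eval t) (fun j => (Q j).eval t) (fun j => (derivative (Q j)).eval t) = 0 := by
    have hz : ∑ i, gaussP A Q i * Q i = 0 := by
      apply Polynomial.funext
      intro x
      rw [Polynomial.eval_zero, ← hQQQ x]
      rw [s1]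
      conv_rhs => rw [functional_sum]
      simp only [Polynomial.eval_finsetSum, Polynomial.eval_mul, eval_gaussP]
      refine Finset.sum_congr rfl fun j _ => ?_
      rw [s1, s2]
    have := congrArg (fun p => (derivative p).eval t) hz
    simp only [derivative_sum, derivative_mul, Polynomial.eval_finsetSum, Polynomial.eval_add, Polynomial.eval_mul,
      derivative_zero, Polynomial.eval_zero, eval_gaussP, eval_deriv_gaussP A h2, Finset.sum_add_distrib] at this
    have k1 := functional_sum (triOf A (fun j => (Q j).eval t) (fun j => (Q j).eval t)) (fun j => (derivative (Q j)).eval t)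
    have k2 := functional_sum (triOf A (fun j => (Q j).eval t) (fun j => (derivative (Q j)).eval t)) (fun j => (Q j).eval t)
    have k3 : ∀ x y i, triOf A x y (Pi.single i 1) = triOf A (Pi.single i 1) x y := by
      intro x y i; rw [s2, s1]
    simp only [k3] at k1 k2
    simp only [mul_assoc, ← Finset.mul_sum] at this
    rw [← k1, ← k2, s2 _ (fun j => (derivative (Q j)).eval t)] at this
    have h3 : (3:K) * triOf A (fun j => (Q j).eval t) (fun j => (Q j).eval t) (fun j => (derivative (Q j)).eval t) = 0 := by
      linear_combination this
    simpa using h3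
  simp only [Polynomial.eval_sub, Polynomial.eval_mul, eval_gaussP, eval_deriv_gaussP A h2] at hW
  set T := triOf A
  set q := fun j => (Q j).eval t
  set d := fun j => (derivative (Q j)).eval t
  suffices h : ∃ R, T q q R = 0 ∧ T q d R ≠ 0 ∧ T R R R = 0 ∧ LinearIndependent K ![q, R] by
    obtain ⟨R, hR⟩ := h
    exact ⟨t, R, hwt, hR⟩
  clear_value q d
  obtain ⟨e, he1, he2⟩ : ∃ e, T q q e = 0 ∧ T q d e ≠ 0 := by
    have k3 : ∀ x y i, T (Pi.single i 1) x y = T x y (Pi.single i 1) := by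
      intro x y i; rw [s1, s2]
    simp only [k3] at hW
    refine ⟨T q q (Pi.single i 1) • Pi.single j 1 - T q q (Pi.single j 1) • Pi.single i 1, ?_, ?_⟩
    · simp only [map_sub, map_smul, smul_eq_mul]; ring
    · simp only [map_sub, map_smul, smul_eq_mul]
      intro h
      apply hW
      linear_combination 2 * h
  obtain ⟨e, he1, he2, he3⟩ : ∃ e, T q q e = 0 ∧ T q d e ≠ 0 ∧ T q e e ≠ 0 := by
    by_cases hee : T q e e = 0
    · by_cases hB : T q d d = 0
      · refine ⟨e + d, ?_, ?_, ?_⟩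
        · simp [he1, hder]
        · simpa [hB] using he2
        · simp only [map_add, LinearMap.add_apply, hee, hB, s2 q e d]
          intro h
          apply he2
          have : (2:K) * T q d e = 0 := by linear_combination h
          simpa using this
      · refine ⟨e + (T q d e / T q d d) • d, ?_, ?_, ?_⟩
        · simp [he1, hder]
        · simp only [map_add, map_smul, smul_eq_mul]
          rw [div_mul_cancel₀ _ hB]
          intro h
          apply he2
          have : (2:K) * T q d e = 0 := by linear_combination h
          simpa using this
        · simp only [map_add, map_smul, LinearMap.add_apply, LinearMap.smul_apply, smul_eq_mul, hee, s2 q e d]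
          rw [div_mul_cancel₀ _ hB]
          intro h
          have h3 : (3:K) * (T q d e * T q d e) = 0 := by
            field_simp at h
            linear_combination h
          simp [he2] at h3
    · exact ⟨e, he1, he2, hee⟩
  refine ⟨(3 * T q e e) • e + (-T e e e) • q, ?_, ?_, ?_, ?_⟩
  · simp [he1, hQ0]
  · simp only [map_add, map_smul, smul_eq_mul]
    rw [s2 q d q, hder]
    simp [he2, he3]
  · have e1 : T e e q = T q e e := by rw [s2, s1]
    have e2 : T e q q = 0 := by rw [s1, s2, he1]
    rw [tri_line T s1 s2, hQ0, e1, e2]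
    ring
  · have hq : q ≠ 0 := by
      intro h
      rw [h] at he2
      simp at he2
    rw [LinearIndependent.pair_iff]
    intro x y hxy
    have k := congrArg (T q e) hxy
    simp only [map_add, map_smul, s2 q e q, he1, map_zero, smul_eq_mul] at k
    have hy : y = 0 := by simpa [he3] using k
    subst hy
    simpa [hq] using hxy

end curve
end CubicSurf

namespace CubicSurf

section family
variable {K : Type*} [Field K]

theorem continuous_functional [TopologicalSpace K] [IsTopologicalRing K] (φ : (Fin 4 → K) →ₗ[K] K) :
    Continuous φ := by
  have : (φ : (Fin 4 → K) → K) = fun x => ∑ j, φ (Pi.single j 1) * x j := by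
    funext x; exact functional_sum φ x
  rw [this]
  fun_prop

open Polynomial in
theorem eventually_good [TopologicalSpace K] (hK : GoodTop K) (A : Fin 4 → Fin 4 → Fin 4 → K)
    (h1 : ∀ i j k, A i j k = A j i k) (h2 : ∀ i j k, A i j k = A i k j)
    (Q : Fin 4 → K[X]) (w : K[X]) (t₀ : K) (R₀ : Fin 4 → K) (hw : w.eval t₀ ≠ 0)
    (hR : triOf A (fun j => (Q j).eval t₀) (fun j => (Q j).eval t₀) R₀ = 0)
    (hR' : triOf A (fun j => (Q j).eval t₀) (fun j => (derivative (Q j)).eval t₀) R₀ ≠ 0)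
    (hli : LinearIndependent K ![fun j => (Q j).eval t₀, R₀]) :
    ∀ᶠ R in nhds R₀, ∃ t, w.eval t ≠ 0 ∧
      triOf A (fun j => (Q j).eval t) (fun j => (Q j).eval t) R = 0 ∧
      LinearIndependent K ![fun j => (Q j).eval t, R] := by
  have := hK.ring
  have := hK.t1
  have := hK.char
  have s1 := triOf_symm1 A h1
  have s2 := triOf_symm2 A h2
  obtain ⟨α, hα⟩ := exists_dual _ hli ![1, 0]
  obtain ⟨β, hβ⟩ := exists_dual _ hli ![0, 1]
  have α0 : α (fun j => (Q j).eval t₀) = 1 := hα 0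
  have α1 : α R₀ = 0 := hα 1
  have β0 : β (fun j => (Q j).eval t₀) = 0 := hβ 0
  have β1 : β R₀ = 1 := hβ 1
  have hαc := continuous_functional α
  have hβc := continuous_functional β
  have hQc : Continuous (fun t : K => (fun j => (Q j).eval t)) :=
    continuous_pi fun j => (Q j).continuous
  have hwc : Continuous (fun t : K => w.eval t) := w.continuous
  let D : (Fin 4 → K) × K → K := fun z =>
    (α (fun j => (Q j).eval z.2) * β z.1 - β (fun j => (Q j).eval z.2) * α z.1) * w.eval z.2
  have hDc : Continuous D := by
    have c1 : Continuous fun z : (Fin 4 → K) × K => α (fun j => (Q j).eval z.2) :=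
      hαc.comp (hQc.comp continuous_snd)
    have c2 : Continuous fun z : (Fin 4 → K) × K => β (fun j => (Q j).eval z.2) :=
      hβc.comp (hQc.comp continuous_snd)
    have c3 : Continuous fun z : (Fin 4 → K) × K => α z.1 := hαc.comp continuous_fst
    have c4 : Continuous fun z : (Fin 4 → K) × K => β z.1 := hβc.comp continuous_fst
    have c5 : Continuous fun z : (Fin 4 → K) × K => w.eval z.2 := hwc.comp continuous_snd
    exact ((c1.mul c4).sub (c2.mul c3)).mul c5
  have hD0 : D (R₀, t₀) ≠ 0 := by
    simp only [D, α0, α1, β0, β1]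
    simpa using hw
  have hDn : ∀ᶠ z in nhds (R₀, t₀), D z ≠ 0 := hDc.continuousAt.eventually_ne hD0
  rw [nhds_prod_eq] at hDn
  obtain ⟨p1, hp1, p2, hp2, hpp⟩ := Filter.eventually_prod_iff.1 hDn
  let p : (Fin 4 → K) → K[X] := fun R => ∑ i, Polynomial.C (R i) * gaussP A Q i
  have hpe : ∀ R t, (p R).eval t = triOf A (fun j => (Q j).eval t) (fun j => (Q j).eval t) R := by
    intro R t
    rw [functional_sum]
    simp only [p, Polynomial.eval_finsetSum, Polynomial.eval_mul, Polynomial.eval_C, eval_gaussP]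
    refine Finset.sum_congr rfl fun j _ => ?_
    rw [mul_comm, s2 _ _ (Pi.single j 1), s1 _ (Pi.single j 1)]
  have hpd : ∀ R t, (derivative (p R)).eval t =
      2 * triOf A (fun j => (Q j).eval t) (fun j => (derivative (Q j)).eval t) R := by
    intro R t
    rw [functional_sum, Finset.mul_sum]
    simp only [p, derivative_sum, derivative_mul, derivative_C, zero_mul, zero_add,
      Polynomial.eval_finsetSum, Polynomial.eval_mul, Polynomial.eval_C, eval_deriv_gaussP A h2]
    refine Finset.sum_congr rfl fun j _ => ?_
    rw [s2 _ _ (Pi.single j 1), s1 _ (Pi.single j 1)]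
    ring
  have hroot := hK.root_family p (Finset.univ.sup (fun i => (gaussP A Q i).natDegree) + 1) (by
      intro y
      apply Nat.lt_succ_of_le
      apply Polynomial.natDegree_sum_le_of_forall_le
      intro i hi
      exact (Polynomial.natDegree_C_mul_le _ _).trans
        (Finset.le_sup (f := fun i => (gaussP A Q i).natDegree) hi)) R₀ (by
      intro i
      apply Continuous.continuousAt
      simp only [p, Polynomial.finsetSum_coeff, Polynomial.coeff_C_mul]
      fun_prop) t₀ (by rw [hpe, hR]) (by
        rw [hpd]
        exact mul_ne_zero (by norm_num) hR') {t | p2 t} hp2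
  filter_upwards [hroot, hp1] with R hRt hR1
  obtain ⟨t, ht, hpt⟩ := hRt
  have hDt := hpp hR1 ht
  refine ⟨t, right_ne_zero_of_mul hDt, by rw [← hpe, hpt], ?_⟩
  have hdet := left_ne_zero_of_mul hDt
  rw [LinearIndependent.pair_iff]
  intro x y hxy
  have e1 := congrArg α hxy
  have e2 := congrArg β hxy
  simp only [map_add, map_smul, smul_eq_mul, map_zero] at e1 e2
  constructor
  · refine (mul_eq_zero.1 ?_).resolve_right hdet
    linear_combination β R * e1 - α R * e2
  · refine (mul_eq_zero.1 ?_).resolve_right hdet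
    linear_combination α (fun j => (Q j).eval t) * e2 - β (fun j => (Q j).eval t) * e1

theorem isOpen_cone [TopologicalSpace K] [IsTopologicalRing K] (V : Set (Fin 4 → K)) (hV : IsOpen V) :
    @IsOpen _ (projTop K 4) {x | ∃ (v : Fin 4 → K) (hv : v ≠ 0), v ∈ V ∧ x = Projectivization.mk K v hv} := by
  rw [projTop, isOpen_coinduced]
  have : (fun v : {v : Fin 4 → K // v ≠ 0} => Projectivization.mk K v.1 v.2) ⁻¹'
      {x | ∃ (v : Fin 4 → K) (hv : v ≠ 0), v ∈ V ∧ x = Projectivization.mk K v hv} =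
      ⋃ a : Kˣ, (fun v : {v : Fin 4 → K // v ≠ 0} => (a : K) • v.1) ⁻¹' V := by
    ext v
    simp only [Set.mem_preimage, Set.mem_setOf_eq, Set.mem_iUnion]
    constructor
    · rintro ⟨u, hu, huV, h⟩
      obtain ⟨a, ha⟩ := (Projectivization.mk_eq_mk_iff K _ _ hu v.2).1 h.symm
      refine ⟨a, ?_⟩
      rw [← Units.smul_def, ha]
      exact huV
    · rintro ⟨a, ha⟩
      refine ⟨(a : K) • v.1, smul_ne_zero a.ne_zero v.2, ha, ?_⟩
      rw [eq_comm, Projectivization.mk_eq_mk_iff]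
      exact ⟨a, rfl⟩
  rw [this]
  refine isOpen_iUnion fun a => hV.preimage ?_
  have : Continuous fun x : Fin 4 → K => (a : K) • x := by
    refine continuous_pi fun i => ?_
    simp only [Pi.smul_apply, smul_eq_mul]
    fun_prop
  exact this.comp continuous_subtype_val

theorem cubicOf_homog (A : Fin 4 → Fin 4 → Fin 4 → K) : (cubicOf A).IsHomogeneous 3 := by
  refine IsHomogeneous.sum _ _ _ fun i _ => IsHomogeneous.sum _ _ _ fun j _ =>
    IsHomogeneous.sum _ _ _ fun k _ => ?_
  have := (isHomogeneous_C (Fin 4) (A i j k)).mul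
    (((isHomogeneous_X K i).mul (isHomogeneous_X K j)).mul (isHomogeneous_X K k))
  simpa using this

theorem eval_cubicOf_tri (A : Fin 4 → Fin 4 → Fin 4 → K) (x : Fin 4 → K) :
    eval x (cubicOf A) = triOf A x x x := by
  rw [eval_cubicOf, triOf_apply]

theorem main_tensor [TopologicalSpace K] (hK : GoodTop K) (A : Fin 4 → Fin 4 → Fin 4 → K)
    (h1 : ∀ i j k, A i j k = A j i k) (h2 : ∀ i j k, A i j k = A i k j)
    (hs : IsSmoothHypersurf (cubicOf A)) (hne : (zeroSet (cubicOf A)).Nonempty) :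
    ∃ W : Set (Projectivization K (Fin 4 → K)),
      W ⊆ zeroSet (cubicOf A) ∧ W.Nonempty ∧
      (∃ U, @IsOpen _ (projTop K 4) U ∧ W = U ∩ zeroSet (cubicOf A)) ∧
      ∀ P₁ P₂ : zeroSet (cubicOf A), P₁.1 ∈ W → P₂.1 ∈ W →
        HClass (cubicOf A) P₁ = HClass (cubicOf A) P₂ := by
  have := hK.ring
  have := hK.char
  have s1 := triOf_symm1 A h1
  have s2 := triOf_symm2 A h2
  have hhom := cubicOf_homog A
  have hT := eval_cubicOf_tri A
  obtain ⟨x, hx⟩ := hne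
  obtain ⟨P, e, hP, hPPP, hPPe, hPee⟩ := exists_nonflat hK A h1 h2 hs x.rep x.rep_nonzero
    (by rw [← hT]; exact hx)
  obtain ⟨Q, r, w, hw, hr, hQ, hQt⟩ := exists_curve A h1 h2 P e hP hPPP hPPe hPee
  obtain ⟨t₀, R₀, hw0, hR1, hR2, hR3, hR4⟩ :=
    exists_good_pt A h1 h2 hs Q r w hw hr hQ (fun t => (hQt t).1)
  have hev := eventually_good hK A h1 h2 Q w t₀ R₀ hw0 hR1 hR2 hR4
  obtain ⟨V, hVS, hVo, hV0⟩ := mem_nhds_iff.1 hev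
  let U : Set (Projectivization K (Fin 4 → K)) :=
    {x | ∃ (v : Fin 4 → K) (hv : v ≠ 0), v ∈ V ∧ x = Projectivization.mk K v hv}
  have hR0 : R₀ ≠ 0 := hR4.ne_zero 1
  refine ⟨U ∩ zeroSet (cubicOf A), Set.inter_subset_right, ?_, ⟨U, isOpen_cone V hVo, rfl⟩, ?_⟩
  · exact ⟨Projectivization.mk K R₀ hR0, ⟨R₀, hR0, hV0, rfl⟩,
      mk_mem_zeroSet hhom hR0 (by rw [hT, hR3])⟩
  have key : ∀ X : zeroSet (cubicOf A), X.1 ∈ U → ∃ Y : zeroSet (cubicOf A),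
      TripleRel (cubicOf A) ⟨Projectivization.mk K P hP, mk_mem_zeroSet hhom hP (by rw [hT, hPPP])⟩
        ⟨Projectivization.mk K P hP, mk_mem_zeroSet hhom hP (by rw [hT, hPPP])⟩ Y ∧
      TripleRel (cubicOf A) Y Y X := by
    rintro ⟨X, hX⟩ ⟨v, hv, hvV, rfl⟩
    obtain ⟨t, hwt, hQv, hli⟩ := hVS hvV
    obtain ⟨k1, k2, k3⟩ := hQt t
    have hPQ := k3 hwt
    have hq0 : (fun j => (Q j).eval t) ≠ 0 := hPQ.ne_zero 1
    have hvvv : triOf A v v v = 0 := by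
      obtain ⟨a, ha⟩ := Projectivization.exists_smul_eq_mk_rep K v hv
      have hX' : eval (Projectivization.mk K v hv).rep (cubicOf A) = 0 := hX
      rw [← ha, Units.smul_def, eval_smul_of_isHomogeneous hhom, hT] at hX'
      simpa using hX'
    refine ⟨⟨Projectivization.mk K _ hq0, mk_mem_zeroSet hhom hq0 (by rw [hT, k1])⟩, ?_, ?_⟩
    · exact tripleRel_of _ (triOf A) s1 s2 hT _ _ P _ hP hq0 rfl rfl hPQ hPPP k1 k2
    · exact tripleRel_of _ (triOf A) s1 s2 hT _ _ _ v hq0 hv rfl rfl hli k1 hvvv hQv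
  intro P₁ P₂ hP₁ hP₂
  obtain ⟨Y₁, a₁, b₁⟩ := key P₁ hP₁.1
  obtain ⟨Y₂, a₂, b₂⟩ := key P₂ hP₂.1
  have c1 := add_left_cancel (hclass_eq _ _ _ _ _ _ _ a₁ a₂)
  have c2 := hclass_eq _ _ _ _ _ _ _ b₁ b₂
  rw [c1] at c2
  exact add_left_cancel c2

end family
end CubicSurf

open CubicSurf MvPolynomial in
/-- Let `K` be a local field and `S` a smooth cubic surface over `K`
with `S(K) ≠ ∅`. Then there is a non-empty subset `W ⊆ S(K)`, open in the topology
induced by `K`, such that `[P₁] = [P₂]` in `H_S(K)` for all `P₁, P₂ ∈ W`. -/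
theorem exists_open_set_constant_class
    {K : Type*} [Field K] [TopologicalSpace K] (hK : IsLocalField K)
    (F : MvPolynomial (Fin 4) K) (hF : SmoothCubic F)
    (hne : (zeroSet F).Nonempty) :
    ∃ W : Set (Projectivization K (Fin 4 → K)),
      W ⊆ zeroSet F ∧ W.Nonempty ∧
      (∃ U, @IsOpen _ (projTop K 4) U ∧ W = U ∩ zeroSet F) ∧
      ∀ P₁ P₂ : zeroSet F, P₁.1 ∈ W → P₂.1 ∈ W → HClass F P₁ = HClass F P₂ := by
  have hG := goodTop_of_isLocalField hK
  have := hG.char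
  obtain ⟨A, h1, h2, hA⟩ := exists_tensor F hF.1
  obtain rfl : F = cubicOf A := hA
  exact main_tensor hG A h1 h2 hF.2 hne
end
end
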